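/- Let n = 4 or n = 6, let L ≅ Sym(n) be the permutation group induced by the action of Sym(n) on the set of ordered pairs of distinct elements of {1,…,n}, and let (Γ,G) be a locally L pair. Then for every vertex x of Γ, the pointwise stabiliser G_x^{[3]} of the ball of radius 3 around x is trivial. -/

import Mathlib

open MulAction Pointwise

/-- The set of ordered pairs of distinct elements of `{1,…,n}`. -/
abbrev OPairs (n : ℕ) : Type := {p : Fin n × Fin n // p.1 ≠ p.2}

/-- `Sym(n)` acts on the ordered pairs of distinct elements. -/
instance opairsAction (n : ℕ) : MulAction (Equiv.Perm (Fin n)) (OPairs n) where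
  smul σ p := ⟨(σ p.1.1, σ p.1.2), fun h => p.2 (σ.injective h)⟩
  one_smul p := rfl
  mul_smul σ τ p := rfl

/-- Every element of `G` is an automorphism of `Γ`. -/
def PreservesAdj {V : Type*} (Γ : SimpleGraph V) (G : Subgroup (Equiv.Perm V)) : Prop :=
  ∀ g ∈ G, ∀ u v : V, Γ.Adj u v ↔ Γ.Adj (g u) (g v)

/-- The pointwise stabiliser in `G` of the ball of radius `i` around `x`. -/
def ballStab {V : Type*} (Γ : SimpleGraph V) (G : Subgroup (Equiv.Perm V)) (x : V) (i : ℕ) :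
    Subgroup G :=
  ⨅ (v : V) (_ : Γ.dist x v ≤ i), MulAction.stabilizer G v

/-- `(Γ, G)` is a locally `L` pair, for `L` the permutation group induced by `Sym(n)` on
ordered pairs of distinct elements of `{1,…,n}`. -/
def IsLocallyOPairs (n : ℕ) {V : Type*} (Γ : SimpleGraph V) (G : Subgroup (Equiv.Perm V)) :
    Prop :=
  PreservesAdj Γ G ∧ MulAction.IsPretransitive G V ∧
  ∀ x : V, ∃ (e : Γ.neighborSet x ≃ OPairs n)
      (φ : MulAction.stabilizer G x →* Equiv.Perm (Fin n)),
    Function.Surjective φ ∧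
    ∀ (g : MulAction.stabilizer G x) (v : Γ.neighborSet x),
      ((e.symm (φ g • e v) : Γ.neighborSet x) : V) = g • (v : V)

open Subgroup
open MulAut (conj)
open Equiv (Perm swap)
open scoped commutatorElement

/-!
The proof is an instance of the amalgam method. For an arc `(x, y)`, let `P` be the stabiliser of
`x`, with kernel `Q` on the neighbours of `x`, so that `P / Q = Sym(Ω)` with `|Ω| = n`, and let `e`
interchange `x` and `y`. As `y` is an ordered pair `(o, i)`, the arc stabiliser `B` is the
stabiliser of `o` and `i`; put `H = P_o` and `N = N_G(B)`. Here `N` contains `e` and interchanges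
`o` and `i`, so `⟨H, N⟩` contains `P` and hence is `G`, as `Γ` is connected. No nontrivial subgroup
of `B` is therefore normalised by both `H` and `N`.

Put `q = n - 2`, `E = O₂(B)`, `R = O₂(Q)`, `V = Ω₁(Z(R))` and `Z = Ω₁(Z(E))`. Since `q` is `2` or
`4`, the group `H / Q` acts on the `q + 1` points of `Ω` other than `o` like a rank one group with
unipotent radical `E / R` of order `q`: this is where `n = 4` and `n = 6` are special. If `Z ≤ R`,
comparing elementary abelian subgroups of maximal order in `E` gives `|V : Z| = q` and
`C_V(t) = Z` for all `t ∈ E \ R`.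

Take the cosets of `H` in `G` as points and those of `N` as lines, and suppose that `V p ≤ R p'` for
all collinear points `p`, `p'`. A path of minimal length `b` from `p` to `p'` with `V p ≰ R p'` then
has `b ≥ 2`. For `b ≥ 3` the commutators of `V p` with `E` of the lines through `p` lead to a
contradiction, and for `b = 2` one comes from counting in the subgroup generated by the groups `V`
around a point. Hence `V ≰ Rⁿ` for some `n ∈ N`, and then `V ≰ Rᵉ`. Therefore a subgroup `M` of `Q`
normalised by `B` and `e` that lies in every conjugate of `Qᵉ` under `P` is trivial. This applies to
`M = G_x^{[2]} ∩ G_y^{[2]}`, which contains `G_x^{[3]}`.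
-/

section Conjugation

variable {G : Type*} [Group G] {g a k : G} {A K L : Subgroup G}

theorem mem_conj_smul : a ∈ conj g • K ↔ g⁻¹ * a * g ∈ K := by
  rw [mem_pointwise_smul_iff_inv_smul_mem, ← map_inv, MulAut.smul_def, MulAut.conj_apply, inv_inv]

theorem conj_mem_conj_smul (h : k ∈ K) : g * k * g⁻¹ ∈ conj g • K :=
  smul_mem_pointwise_smul k (conj g) K h

theorem conj_mul_smul (g h : G) (K : Subgroup G) : conj (g * h) • K = conj g • conj h • K := by
  rw [map_mul, mul_smul]

theorem conj_inv_smul_conj_smul (g : G) (K : Subgroup G) : conj g⁻¹ • conj g • K = K := by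
  rw [map_inv, inv_smul_smul]

theorem conj_smul_conj_inv_smul (g : G) (K : Subgroup G) : conj g • conj g⁻¹ • K = K := by
  rw [map_inv, smul_inv_smul]

theorem conj_smul_iSup {ι : Sort*} (g : G) (K : ι → Subgroup G) :
    conj g • (⨆ i, K i) = ⨆ i, conj g • K i :=
  map_iSup _ _

theorem conj_smul_iInf {ι : Sort*} (g : G) (K : ι → Subgroup G) :
    conj g • (⨅ i, K i) = ⨅ i, conj g • K i := by
  ext; simp only [mem_conj_smul, mem_iInf]

theorem conj_smul_commutator (g : G) (K L : Subgroup G) :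
    conj g • ⁅K, L⁆ = ⁅conj g • K, conj g • L⁆ :=
  map_commutator _ _ _

theorem mem_normalizer_iff_conj_smul_eq : g ∈ normalizer K ↔ conj g • K = K :=
  mem_normalizer_iff_map_conj_eq

theorem conj_mem_of_mem_normalizer (h : g ∈ normalizer K) (hk : k ∈ K) : g * k * g⁻¹ ∈ K :=
  (mem_normalizer_iff.1 h k).1 hk

theorem inv_conj_mem_of_mem_normalizer (h : g ∈ normalizer K) (hk : k ∈ K) : g⁻¹ * k * g ∈ K := by
  simpa only [inv_inv] using conj_mem_of_mem_normalizer (inv_mem h) hk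

theorem normalizer_conj_smul (g : G) (K : Subgroup G) :
    normalizer ((conj g • K : Subgroup G) : Set G) = conj g • normalizer K :=
  (map_equiv_normalizer_eq K (conj g)).symm

theorem centralizer_conj_smul (g : G) (K : Subgroup G) :
    centralizer ((conj g • K : Subgroup G) : Set G) = conj g • centralizer K := by
  ext a
  simp only [mem_conj_smul, mem_centralizer_iff, SetLike.mem_coe]
  refine ⟨fun h k hk => ?_, fun h k hk => ?_⟩
  · have hcomm := h (g * k * g⁻¹) (by simpa [mul_assoc] using hk)
    rw [← (conj g).injective.eq_iff]
    simpa [mul_assoc] using hcomm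
  · have hcomm := h _ hk
    rw [← (conj g⁻¹).injective.eq_iff]
    simpa [mul_assoc] using hcomm

theorem conj_smul_eq_self_of_commute (h : ∀ k ∈ K, Commute k g) : conj g • K = K := by
  refine mem_normalizer_iff_conj_smul_eq.1 (centralizer_le_normalizer _ ?_)
  exact mem_centralizer_iff.2 h

theorem exists_mul_of_mem_sup (h : A ≤ normalizer K) (hx : a ∈ A ⊔ K) :
    ∃ b ∈ A, ∃ k ∈ K, a = b * k := by
  rw [← SetLike.mem_coe, coe_mul_of_left_le_normalizer_right _ _ h] at hx
  obtain ⟨b, hb, k, hk, rfl⟩ := hx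
  exact ⟨b, hb, k, hk, rfl⟩

theorem exists_mul_of_mem_sup' (h : A ≤ normalizer K) (hx : a ∈ K ⊔ A) :
    ∃ k ∈ K, ∃ b ∈ A, a = k * b := by
  rw [← SetLike.mem_coe, coe_mul_of_right_le_normalizer_left _ _ h] at hx
  obtain ⟨k, hk, b, hb, rfl⟩ := hx
  exact ⟨k, hk, b, hb, rfl⟩

end Conjugation

section Index

variable {G : Type*} [Group G] {A R E : Subgroup G}

theorem exists_mul_of_relIndex_eq (hA : A ≤ E) (h : R.relIndex A = R.relIndex E)
    (h0 : R.relIndex E ≠ 0) {e : G} (he : e ∈ E) : ∃ a ∈ A, ∃ r ∈ R, e = a * r := by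
  let f := quotientSubgroupOfEmbeddingOfLE R hA
  have : Finite (E ⧸ R.subgroupOf E) := Nat.finite_of_card_ne_zero h0
  have : Finite (A ⧸ R.subgroupOf A) := Nat.finite_of_card_ne_zero (h.trans_ne h0)
  have hf : Function.Bijective f := (Nat.bijective_iff_injective_and_card f).2 ⟨f.injective, h⟩
  obtain ⟨a, ha⟩ := hf.2 (QuotientGroup.mk ⟨e, he⟩)
  obtain ⟨a, rfl⟩ := QuotientGroup.mk_surjective a
  refine ⟨a, a.2, (a : G)⁻¹ * e, ?_, by group⟩
  rw [quotientSubgroupOfEmbeddingOfLE_apply_mk] at ha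
  simpa [mem_subgroupOf] using QuotientGroup.eq.1 ha

theorem relIndex_eq_of_forall_exists_mul (hA : A ≤ E)
    (h : ∀ e ∈ E, ∃ a ∈ A, ∃ r ∈ R, e = a * r) : R.relIndex A = R.relIndex E := by
  let f := quotientSubgroupOfEmbeddingOfLE R hA
  refine Nat.card_congr (Equiv.ofBijective f ⟨f.injective, fun x => ?_⟩)
  obtain ⟨⟨e, he⟩, rfl⟩ := QuotientGroup.mk_surjective x
  obtain ⟨a, ha, r, hr, rfl⟩ := h e he
  refine ⟨QuotientGroup.mk ⟨a, ha⟩, ?_⟩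
  rw [quotientSubgroupOfEmbeddingOfLE_apply_mk]
  exact QuotientGroup.eq.2 (by simpa [mem_subgroupOf] using hr)

end Index

section Commutators

variable {G : Type*} [Group G] {A B C K : Subgroup G}

theorem iSup_commutator_le {ι : Sort*} {A : ι → Subgroup G} {E Z : Subgroup G}
    (h : ∀ i, ⁅A i, E⁆ ≤ Z) (hZ : ∀ i, A i ≤ normalizer Z) : ⁅⨆ i, A i, E⁆ ≤ Z := by
  rw [commutator_le]
  intro a ha
  refine (iSup_induction A (C := fun a => a ∈ normalizer Z ∧ ∀ e ∈ E, ⁅a, e⁆ ∈ Z) ha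
    (fun i a ha => ⟨hZ i ha, commutator_le.1 (h i) a ha⟩)
    ⟨one_mem _, fun e _ => by simp only [commutatorElement_one_left, one_mem]⟩ ?_).2
  rintro x y ⟨hx, hxe⟩ ⟨hy, hye⟩
  refine ⟨mul_mem hx hy, fun e he => ?_⟩
  rw [commutatorElement_mul_left_eq_conj_mul]
  exact mul_mem (conj_mem_of_mem_normalizer hx (hye e he)) (hxe e he)

theorem commutator_eq_of_forall_exists_mul (hB : B ≤ C)
    (h : ∀ c ∈ C, ∃ b ∈ B, ∃ r : G, (∀ a ∈ A, Commute a r) ∧ c = b * r) : ⁅A, C⁆ = ⁅A, B⁆ := by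
  refine le_antisymm (commutator_le.2 ?_) (commutator_mono le_rfl hB)
  intro a ha c hc
  obtain ⟨b, hb, r, hr, rfl⟩ := h c hc
  rw [commutatorElement_mul_right_eq_mul_conj, (hr a ha).commutator_eq]
  simpa using commutator_mem_commutator ha hb

end Commutators

/-! ### Point-line geometries -/

/-- The point-line geometry to which the amalgam method is applied. A group `G` acts on points and
lines; each point `p` carries an elementary abelian subgroup `V p` of `R p`, each line `C` carries a
subgroup `E C` with a central subgroup `Z C`, and `R p`, respectively `Z C`, has index `q` in `E C`,
respectively `V p`, whenever `p` is incident to `C`. -/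
structure LocalGeometry (G Pt Ln : Type*) [Group G] [MulAction G Pt] [MulAction G Ln] where
  Inc : Pt → Ln → Prop
  R : Pt → Subgroup G
  V : Pt → Subgroup G
  E : Ln → Subgroup G
  Z : Ln → Subgroup G
  q : ℕ
  two_le_q : 2 ≤ q
  inc_smul : ∀ (g : G) {p C}, Inc p C → Inc (g • p) (g • C)
  R_smul : ∀ (g : G) p, R (g • p) = conj g • R p
  V_smul : ∀ (g : G) p, V (g • p) = conj g • V p
  E_smul : ∀ (g : G) C, E (g • C) = conj g • E C
  Z_smul : ∀ (g : G) C, Z (g • C) = conj g • Z C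
  flag_transitive : ∀ {p C p' C'}, Inc p C → Inc p' C' → ∃ g : G, g • p = p' ∧ g • C = C'
  smul_line_eq : ∀ {C e}, e ∈ E C → e • C = C
  smul_point_eq : ∀ {C e p}, e ∈ E C → Inc p C → e • p = p
  exists_smul_line_eq : ∀ {p C C' C''}, Inc p C → Inc p C' → Inc p C'' → C' ≠ C → C'' ≠ C →
    ∃ e ∈ E C, e • C' = C''
  R_le_E : ∀ {p C}, Inc p C → R p ≤ E C
  V_le_R : ∀ p, V p ≤ R p
  commute_V_R : ∀ {p v r}, v ∈ V p → r ∈ R p → Commute v r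
  mul_self_of_mem_V : ∀ {p v}, v ∈ V p → v * v = 1
  Z_le_V : ∀ {p C}, Inc p C → Z C ≤ V p
  commute_Z_E : ∀ {C z e}, z ∈ Z C → e ∈ E C → Commute z e
  mem_Z_of_commute : ∀ {p C t v}, Inc p C → t ∈ E C → t ∉ R p → v ∈ V p → Commute v t → v ∈ Z C
  relIndex_R : ∀ {p C}, Inc p C → (R p).relIndex (E C) = q
  relIndex_Z : ∀ {p C}, Inc p C → (Z C).relIndex (V p) = q
  eq_bot_of_le_normalizer : ∀ {p D} {K : Subgroup G}, Inc p D → K ≤ E D →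
    (∀ g : G, g • D = D → conj g • K = K) → (∀ D', Inc p D' → E D' ≤ normalizer K) → K = ⊥
  sup_R_eq_E : ∀ {a j C} {K : Subgroup G}, Inc a C → Inc j C → K ≤ E C →
    (∀ g : G, g • a = a → g • C = C → conj g • K = K) → ¬ K ≤ R j → K ⊔ R j = E C
  not_commutator_le_Z : ∀ {p C C'}, Inc p C → Inc p C' → C ≠ C' → ¬ ⁅V p, E C⁆ ≤ Z C'
  card_lines : ∀ p, Nat.card {D // Inc p D} = q + 1
  connected : ∀ p p', Relation.ReflTransGen (fun a b => ∃ C, Inc a C ∧ Inc b C) p p'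

namespace LocalGeometry

variable {G Pt Ln : Type*} [Group G] [MulAction G Pt] [MulAction G Ln] (S : LocalGeometry G Pt Ln)

/-- The subgroup generated by the `V p` for the points `p` of a line. -/
def lineSpan (C : Ln) : Subgroup G := ⨆ (p : {p // S.Inc p C}), S.V p

/-- The commutator of `V p` and `E C`, used for incident `p` and `C`. -/
def flagCommutator (p : Pt) (C : Ln) : Subgroup G := ⁅S.V p, S.E C⁆

/-- The intersection of the spans of the lines through a point. -/
def spanMeet (a : Pt) : Subgroup G := ⨅ (D : {D // S.Inc a D}), S.lineSpan D

/-- The centraliser of `spanMeet a` in `R a`. -/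
def meetCentralizer (a : Pt) : Subgroup G := S.R a ⊓ centralizer (S.spanMeet a)

/-- The join of the spans of the lines through a point. -/
def spanJoin (a : Pt) : Subgroup G := ⨆ (D : {D // S.Inc a D}), S.lineSpan D

theorem inc_smul_iff (g : G) {p C} : S.Inc (g • p) (g • C) ↔ S.Inc p C :=
  ⟨fun h => by simpa only [inv_smul_smul] using S.inc_smul g⁻¹ h, S.inc_smul g⟩

/-- Translation by `g` as a bijection between the points of `C` and those of `g • C`. -/
def pointsEquiv (g : G) (C : Ln) : {p // S.Inc p C} ≃ {p // S.Inc p (g • C)} :=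
  (toPerm g).subtypeEquiv fun _ => (S.inc_smul_iff g).symm

/-- Translation by `g` as a bijection between the lines through `p` and those through `g • p`. -/
def linesEquiv (g : G) (p : Pt) : {C // S.Inc p C} ≃ {C // S.Inc (g • p) C} :=
  (toPerm g).subtypeEquiv fun _ => (S.inc_smul_iff g).symm

theorem lineSpan_smul (g : G) (C : Ln) : S.lineSpan (g • C) = conj g • S.lineSpan C := by
  rw [lineSpan, lineSpan, conj_smul_iSup]
  exact ((S.pointsEquiv g C).iSup_congr fun p => S.V_smul g p.1).symm

theorem flagCommutator_smul (g : G) (p : Pt) (C : Ln) :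
    S.flagCommutator (g • p) (g • C) = conj g • S.flagCommutator p C := by
  rw [flagCommutator, flagCommutator, conj_smul_commutator, S.V_smul, S.E_smul]

theorem spanMeet_smul (g : G) (a : Pt) : S.spanMeet (g • a) = conj g • S.spanMeet a := by
  rw [spanMeet, spanMeet, conj_smul_iInf]
  exact ((S.linesEquiv g a).iInf_congr fun C => S.lineSpan_smul g C.1).symm

theorem spanJoin_smul (g : G) (a : Pt) : S.spanJoin (g • a) = conj g • S.spanJoin a := by
  rw [spanJoin, spanJoin, conj_smul_iSup]
  exact ((S.linesEquiv g a).iSup_congr fun C => S.lineSpan_smul g C.1).symm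

theorem meetCentralizer_smul (g : G) (a : Pt) :
    S.meetCentralizer (g • a) = conj g • S.meetCentralizer a := by
  rw [meetCentralizer, meetCentralizer, smul_inf, ← centralizer_conj_smul, S.spanMeet_smul,
    S.R_smul]

variable {S}

theorem V_le_lineSpan {p C} (h : S.Inc p C) : S.V p ≤ S.lineSpan C :=
  le_iSup (fun p : {p // S.Inc p C} => S.V p) ⟨p, h⟩

theorem lineSpan_le {C} {K : Subgroup G} (h : ∀ p, S.Inc p C → S.V p ≤ K) : S.lineSpan C ≤ K :=
  iSup_le fun p => h p.1 p.2

theorem lineSpan_le_spanJoin {a D} (h : S.Inc a D) : S.lineSpan D ≤ S.spanJoin a :=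
  le_iSup (fun D : {D // S.Inc a D} => S.lineSpan D) ⟨D, h⟩

theorem spanMeet_le_lineSpan {a D} (h : S.Inc a D) : S.spanMeet a ≤ S.lineSpan D :=
  iInf_le (fun D : {D // S.Inc a D} => S.lineSpan D) ⟨D, h⟩

theorem V_le_E {p C} (h : S.Inc p C) : S.V p ≤ S.E C := (S.V_le_R p).trans (S.R_le_E h)

theorem lineSpan_le_E {C} : S.lineSpan C ≤ S.E C := lineSpan_le fun _ h => V_le_E h

theorem not_V_le_Z {p C} (h : S.Inc p C) : ¬ S.V p ≤ S.Z C := by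
  intro hVZ
  have hone := (relIndex_eq_one.2 hVZ).symm.trans (S.relIndex_Z h)
  have := S.two_le_q
  omega

theorem V_ne_bot {p C} (h : S.Inc p C) : S.V p ≠ ⊥ :=
  fun hV => not_V_le_Z h (hV ▸ bot_le)

theorem E_le_normalizer_R {p C} (h : S.Inc p C) : S.E C ≤ normalizer (S.R p) := fun e he => by
  rw [mem_normalizer_iff_conj_smul_eq, ← S.R_smul, S.smul_point_eq he h]

theorem E_le_normalizer_V {p C} (h : S.Inc p C) : S.E C ≤ normalizer (S.V p) := fun e he => by
  rw [mem_normalizer_iff_conj_smul_eq, ← S.V_smul, S.smul_point_eq he h]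

theorem smul_line_eq_of_mem_R {p C} (hC : S.Inc p C) {r : G} (hr : r ∈ S.R p) : r • C = C :=
  S.smul_line_eq (S.R_le_E hC hr)

theorem exists_third_line {p} (A B : Ln) : ∃ D, S.Inc p D ∧ D ≠ A ∧ D ≠ B := by
  have hcard : ({A, B} : Set Ln).ncard < {D | S.Inc p D}.ncard := by
    have h2 := Set.ncard_insert_le A {B}
    have hq := S.two_le_q
    rw [Set.ncard_singleton] at h2
    have hlines : {D | S.Inc p D}.ncard = S.q + 1 := S.card_lines p
    omega
  obtain ⟨D, hD, hDAB⟩ := Set.exists_mem_notMem_of_ncard_lt_ncard hcard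
  rw [Set.mem_insert_iff, Set.mem_singleton_iff, not_or] at hDAB
  exact ⟨D, hD, hDAB⟩

theorem exists_mem_E_smul_line_eq {p C D} (hC : S.Inc p C) (hD : S.Inc p D) :
    ∃ F, S.Inc p F ∧ ∃ e ∈ S.E F, e • C = D := by
  obtain ⟨F, hF, hFC, hFD⟩ := exists_third_line (S := S) (p := p) C D
  obtain ⟨e, he, heC⟩ := S.exists_smul_line_eq hF hC hD hFC.symm hFD.symm
  exact ⟨F, hF, e, he, heC⟩

theorem E_le_normalizer_of_two_lines {p C D} {K : Subgroup G} (hC : S.Inc p C) (hD : S.Inc p D)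
    (hne : C ≠ D) (hCK : S.E C ≤ normalizer K) (hDK : S.E D ≤ normalizer K) :
    ∀ D', S.Inc p D' → S.E D' ≤ normalizer K := by
  intro D' hD'
  by_cases hDD' : D' = D
  · exact hDD' ▸ hDK
  obtain ⟨e, he, rfl⟩ := S.exists_smul_line_eq hD hC hD' hne hDD'
  have hconj : conj e • normalizer (K : Set G) = normalizer K := conj_smul_eq_self_of_mem (hDK he)
  rw [S.E_smul, ← hconj]
  exact pointwise_smul_le_pointwise_smul_iff.2 hCK

theorem Z_inf_Z_le {p C D F} (hC : S.Inc p C) (hD : S.Inc p D) (hF : S.Inc p F) (hne : C ≠ D) :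
    S.Z C ⊓ S.Z D ≤ S.Z F := by
  rintro w ⟨hwC, hwD⟩
  by_cases hFC : F = C
  · exact hFC ▸ hwC
  obtain ⟨e, he, rfl⟩ := S.exists_smul_line_eq hC hD hF hne.symm hFC
  rw [S.Z_smul, mem_conj_smul, mul_assoc, (S.commute_Z_E hwC he).eq, inv_mul_cancel_left]
  exact hwD

theorem flagCommutator_le_V {p C} (h : S.Inc p C) : S.flagCommutator p C ≤ S.V p :=
  le_normalizer_iff_commutator_le_left.1 (E_le_normalizer_V h)

theorem mem_R_of_commute_V {p C} (h : S.Inc p C) {t : G} (ht : t ∈ S.E C)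
    (hc : ∀ v ∈ S.V p, Commute v t) : t ∈ S.R p := by
  by_contra hn
  exact not_V_le_Z h fun v hv => S.mem_Z_of_commute h ht hn hv (hc v hv)

/-- `P 0, C 0, P 1, …, C (L - 1), P L` is a path in the incidence graph. -/
structure IsPath (S : LocalGeometry G Pt Ln) (L : ℕ) (P : ℕ → Pt) (C : ℕ → Ln) : Prop where
  left : ∀ i < L, S.Inc (P i) (C i)
  right : ∀ i < L, S.Inc (P (i + 1)) (C i)

theorem IsPath.reverse {L P C} (h : S.IsPath L P C) :
    S.IsPath L (fun i => P (L - i)) (fun i => C (L - 1 - i)) where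
  left i hi := by
    have hinc := h.right (L - 1 - i) (by omega)
    rwa [show L - 1 - i + 1 = L - i by omega] at hinc
  right i hi := by
    have hinc := h.left (L - 1 - i) (by omega)
    rwa [show P (L - 1 - i) = P (L - (i + 1)) by congr 1; omega] at hinc

theorem IsPath.shift {L P C} (h : S.IsPath L P C) {i k : ℕ} (hk : i + k ≤ L) :
    S.IsPath k (fun m => P (i + m)) (fun m => C (i + m)) :=
  ⟨fun m hm => h.left (i + m) (by omega), fun m hm => h.right (i + m) (by omega)⟩

theorem IsPath.update_zero {L P C} (h : S.IsPath L P C) {p} (hp : S.Inc p (C 0)) :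
    S.IsPath L (Function.update P 0 p) C where
  left i hi := by
    rcases eq_or_ne i 0 with rfl | h0
    · rwa [Function.update_self]
    · rw [Function.update_of_ne h0]; exact h.left i hi
  right i hi := by
    rw [Function.update_of_ne (Nat.succ_ne_zero i)]; exact h.right i hi

/-- Paths shorter than `b` have `V` of their first point contained in `R` of their last point;
the lower bound on `b` excludes the trivial case of collinear points. -/
def NoCriticalBelow (S : LocalGeometry G Pt Ln) (b : ℕ) : Prop :=
  2 ≤ b ∧ ∀ k < b, ∀ P C, S.IsPath k P C → S.V (P 0) ≤ S.R (P k)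

namespace NoCriticalBelow

variable {b L : ℕ} {P : ℕ → Pt} {C : ℕ → Ln}

theorem V_le_R_add (hb : S.NoCriticalBelow b) (h : S.IsPath L P C) {i k : ℕ} (hk : k < b)
    (hi : i + k ≤ L) : S.V (P i) ≤ S.R (P (i + k)) :=
  hb.2 k hk _ _ (h.shift hi)

theorem V_add_le_R (hb : S.NoCriticalBelow b) (h : S.IsPath L P C) {i k : ℕ} (hk : k < b)
    (hi : i + k ≤ L) : S.V (P (i + k)) ≤ S.R (P i) := by
  simpa using hb.2 k hk _ _ (h.shift hi).reverse

theorem lineSpan_le_R_add (hb : S.NoCriticalBelow b) (h : S.IsPath L P C) {i k : ℕ}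
    (hk : k + 1 < b) (hi : i + (k + 1) ≤ L) : S.lineSpan (C i) ≤ S.R (P (i + (k + 1))) := by
  refine lineSpan_le fun p hp => ?_
  simpa using hb.2 (k + 1) hk _ _ ((h.shift hi).update_zero (p := p) (by simpa using hp))

theorem V_le_R_of_collinear (hb : S.NoCriticalBelow b) {p p' C} (h : S.Inc p C)
    (h' : S.Inc p' C) : S.V p ≤ S.R p' := by
  have hpath : S.IsPath 1 (fun i => if i = 0 then p else p') (fun _ => C) :=
    ⟨fun i hi => by simpa [Nat.lt_one_iff.1 hi] using h, fun i _ => by simpa using h'⟩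
  simpa using hb.2 1 hb.1 _ _ hpath

theorem lineSpan_le_R (hb : S.NoCriticalBelow b) {p C} (h : S.Inc p C) : S.lineSpan C ≤ S.R p :=
  lineSpan_le fun _ h' => hb.V_le_R_of_collinear h' h

theorem commute_lineSpan (hb : S.NoCriticalBelow b) {C} {u v : G} (hu : u ∈ S.lineSpan C)
    (hv : v ∈ S.lineSpan C) : Commute u v := by
  have hcent : S.lineSpan C ≤ centralizer (S.lineSpan C) := lineSpan_le fun p hp v hv =>
    mem_centralizer_iff.2 fun u hu => (S.commute_V_R hv (hb.lineSpan_le_R hp hu)).symm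
  exact mem_centralizer_iff.1 (hcent hv) u hu

end NoCriticalBelow

/-! ### Critical paths -/

section Critical

variable {b L : ℕ} {P : ℕ → Pt} {C : ℕ → Ln}

theorem IsPath.cons (h : S.IsPath L P C) {p D} (h1 : S.Inc p D) (h2 : S.Inc (P 0) D) :
    S.IsPath (L + 1) (fun n => n.casesOn p P) (fun n => n.casesOn D C) where
  left
    | 0, _ => h1
    | i + 1, hi => h.left i (Nat.lt_of_succ_lt_succ hi)
  right
    | 0, _ => h2
    | i + 1, hi => h.right i (Nat.lt_of_succ_lt_succ hi)

theorem IsPath.contract (h : S.IsPath (L + 1) P C) {i : ℕ} (hi : i < L) (he : C i = C (i + 1)) :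
    S.IsPath L (fun j => if j ≤ i then P j else P (j + 1))
      (fun j => if j ≤ i then C j else C (j + 1)) where
  left j hj := by
    by_cases hji : j ≤ i
    · simpa [hji] using h.left j (by omega)
    · simpa [hji] using h.left (j + 1) (by omega)
  right j hj := by
    rcases lt_trichotomy j i with hji | rfl | hij
    · simpa [hji.le, Nat.succ_le_iff.2 hji] using h.right j (by omega)
    · simpa [he] using h.right (j + 1) (by omega)
    · simpa [hij.not_ge, show ¬ j + 1 ≤ i by omega] using h.right (j + 1) (by omega)

/-- A path of length `b` along which `V` of the first point is not contained in `R` of the last. -/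
structure IsCriticalPath (S : LocalGeometry G Pt Ln) (b : ℕ) (P : ℕ → Pt) (C : ℕ → Ln) : Prop where
  path : S.IsPath b P C
  crit : ¬ S.V (P 0) ≤ S.R (P b)

namespace IsCriticalPath

variable (hb : S.NoCriticalBelow b) (h : S.IsCriticalPath b P C)
include hb h

theorem inc_zero : S.Inc (P 0) (C 0) := h.path.left 0 (by have := hb.1; omega)

theorem inc_last : S.Inc (P b) (C (b - 1)) := by
  have h2 := hb.1
  simpa only [show b - 1 + 1 = b by omega] using h.path.right (b - 1) (by omega)

theorem V_one_le_R_last : S.V (P 1) ≤ S.R (P b) := by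
  have h2 := hb.1
  simpa only [show 1 + (b - 1) = b by omega] using
    hb.V_le_R_add h.path (i := 1) (k := b - 1) (by omega) (by omega)

theorem V_last_le_R_one : S.V (P b) ≤ S.R (P 1) := by
  have h2 := hb.1
  simpa only [show 1 + (b - 1) = b by omega] using
    hb.V_add_le_R h.path (i := 1) (k := b - 1) (by omega) (by omega)

theorem V_zero_le_E : S.V (P 0) ≤ S.E (C (b - 1)) := by
  have h2 := hb.1
  have hle := hb.V_le_R_add h.path (i := 0) (k := b - 1) (by omega) (by omega)
  rw [zero_add] at hle
  exact hle.trans (S.R_le_E (h.path.left (b - 1) (by omega)))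

theorem V_last_le_E : S.V (P b) ≤ S.E (C 0) :=
  (h.V_last_le_R_one hb).trans (S.R_le_E (h.path.right 0 (by have := hb.1; omega)))

theorem not_V_last_le_R : ¬ S.V (P b) ≤ S.R (P 0) := by
  intro hle
  obtain ⟨v, hv, hvR⟩ := SetLike.not_le_iff_exists.1 h.crit
  exact not_V_le_Z (h.inc_last hb) fun w hw => S.mem_Z_of_commute (h.inc_last hb)
    (h.V_zero_le_E hb hv) hvR hw (S.commute_V_R hv (hle hw)).symm

theorem reverse : S.IsCriticalPath b (fun i => P (b - i)) (fun i => C (b - 1 - i)) :=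
  ⟨h.path.reverse, by simpa using h.not_V_last_le_R hb⟩

theorem R_inf_V_eq_Z : S.R (P b) ⊓ S.V (P 0) = S.Z (C 0) := by
  refine le_antisymm ?_ (le_inf ?_ (S.Z_le_V (h.inc_zero hb)))
  · rintro v ⟨hvR, hv⟩
    obtain ⟨t, ht, htR⟩ := SetLike.not_le_iff_exists.1 (h.not_V_last_le_R hb)
    exact S.mem_Z_of_commute (h.inc_zero hb) (h.V_last_le_E hb ht) htR hv
      (S.commute_V_R ht hvR).symm
  · have hinc := h.path.right 0 (by have := hb.1; omega)
    exact (S.Z_le_V hinc).trans (h.V_one_le_R_last hb)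

theorem exists_mul_of_mem_E_last {e : G} (he : e ∈ S.E (C (b - 1))) :
    ∃ v ∈ S.V (P 0), ∃ r ∈ S.R (P b), e = v * r := by
  have hR := S.relIndex_R (h.inc_last hb)
  refine exists_mul_of_relIndex_eq (h.V_zero_le_E hb) ?_ ?_ he
  · rw [← inf_relIndex_right, h.R_inf_V_eq_Z hb, S.relIndex_Z (h.inc_zero hb), hR]
  · have := S.two_le_q
    omega

theorem exists_mul_of_mem_E_zero {e : G} (he : e ∈ S.E (C 0)) :
    ∃ v ∈ S.V (P b), ∃ r ∈ S.R (P 0), e = v * r := by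
  simpa using (h.reverse hb).exists_mul_of_mem_E_last hb (e := e) (by simpa using he)

theorem flagCommutator_zero_eq : S.flagCommutator (P 0) (C 0) = ⁅S.V (P 0), S.V (P b)⁆ := by
  refine commutator_eq_of_forall_exists_mul (h.V_last_le_E hb) fun c hc => ?_
  obtain ⟨v, hv, r, hr, rfl⟩ := h.exists_mul_of_mem_E_zero hb hc
  exact ⟨v, hv, r, fun a ha => S.commute_V_R ha hr, rfl⟩

theorem flagCommutator_last_eq :
    S.flagCommutator (P b) (C (b - 1)) = ⁅S.V (P 0), S.V (P b)⁆ := by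
  rw [commutator_comm]
  simpa using (h.reverse hb).flagCommutator_zero_eq hb

theorem flagCommutator_zero_eq_last :
    S.flagCommutator (P 0) (C 0) = S.flagCommutator (P b) (C (b - 1)) :=
  (h.flagCommutator_zero_eq hb).trans (h.flagCommutator_last_eq hb).symm

theorem flagCommutator_zero_le_Z : S.flagCommutator (P 0) (C 0) ≤ S.Z (C 0) := by
  rw [← h.R_inf_V_eq_Z hb]
  refine le_inf ?_ (flagCommutator_le_V (h.inc_zero hb))
  rw [h.flagCommutator_zero_eq_last hb]
  exact (flagCommutator_le_V (h.inc_last hb)).trans (S.V_le_R _)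

theorem flagCommutator_le_Z {p D} (hp : S.Inc p D) : S.flagCommutator p D ≤ S.Z D := by
  obtain ⟨g, rfl, rfl⟩ := S.flag_transitive (h.inc_zero hb) hp
  rw [S.flagCommutator_smul, S.Z_smul]
  exact pointwise_smul_le_pointwise_smul_iff.2 (h.flagCommutator_zero_le_Z hb)

theorem lineSpan_commutator_E_le_Z {D} : ⁅S.lineSpan D, S.E D⁆ ≤ S.Z D := by
  refine iSup_commutator_le (fun p => h.flagCommutator_le_Z hb p.2) fun p v hv => ?_
  rw [mem_normalizer_iff_conj_smul_eq]
  exact conj_smul_eq_self_of_commute fun k hk => S.commute_Z_E hk (V_le_E p.2 hv)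

/-- Otherwise the span of `D` would be normalised by `V (P b)`, hence by `E D` and `E (C 0)`. -/
theorem exists_not_V_le_R {D} (hD : S.Inc (P 0) D) (hne : D ≠ C 0) :
    ∃ p, S.Inc p D ∧ ¬ S.V p ≤ S.R (P (b - 1)) := by
  by_contra! hcon
  have hspan : S.lineSpan D ≤ S.R (P (b - 1)) := lineSpan_le hcon
  have hED : S.E D ≤ normalizer (S.lineSpan D) := fun e he => by
    rw [mem_normalizer_iff_conj_smul_eq, ← S.lineSpan_smul, S.smul_line_eq he]
  have hV : S.V (P b) ≤ normalizer (S.lineSpan D) := by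
    refine le_normalizer_iff_commutator_le_right.2 ?_
    calc ⁅S.V (P b), S.lineSpan D⁆ ≤ S.flagCommutator (P b) (C (b - 1)) :=
          commutator_mono le_rfl
            (hspan.trans (S.R_le_E (h.path.left (b - 1) (by have := hb.1; omega))))
      _ = S.flagCommutator (P 0) (C 0) := (h.flagCommutator_zero_eq_last hb).symm
      _ ≤ S.lineSpan D := (flagCommutator_le_V (h.inc_zero hb)).trans (V_le_lineSpan hD)
  have hEC : S.E (C 0) ≤ normalizer (S.lineSpan D) := fun e he => by
    obtain ⟨v, hv, r, hr, rfl⟩ := h.exists_mul_of_mem_E_zero hb he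
    exact mul_mem (hV hv) (hED (S.R_le_E hD hr))
  have hbot : S.lineSpan D = ⊥ := S.eq_bot_of_le_normalizer hD lineSpan_le_E
    (fun g hg => by rw [← S.lineSpan_smul, hg])
    (E_le_normalizer_of_two_lines hD (h.inc_zero hb) hne hED hEC)
  exact V_ne_bot hD (eq_bot_iff.2 (hbot ▸ V_le_lineSpan hD))

theorem line_ne_succ {i : ℕ} (hi : i + 1 < b) : C i ≠ C (i + 1) := by
  intro he
  obtain ⟨c, rfl⟩ : ∃ c, b = c + 1 := ⟨b - 1, by omega⟩
  have hle := hb.2 c c.lt_succ_self _ _ (h.path.contract (by omega) he)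
  exact h.crit (by simpa [show ¬ c ≤ i by omega] using hle)

end IsCriticalPath

/-- A path of length `L` each of whose subpaths of length `b` is critical. -/
structure IsCriticalChain (S : LocalGeometry G Pt Ln) (b L : ℕ) (P : ℕ → Pt) (C : ℕ → Ln) :
    Prop where
  path : S.IsPath L P C
  crit : ∀ i, i + b ≤ L → ¬ S.V (P i) ≤ S.R (P (i + b))

theorem IsCriticalPath.isCriticalChain (h : S.IsCriticalPath b P C) :
    S.IsCriticalChain b b P C := by
  refine ⟨h.path, fun i hi => ?_⟩
  obtain rfl : i = 0 := by omega
  simpa only [zero_add] using h.crit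

namespace IsCriticalChain

theorem window (h : S.IsCriticalChain b L P C) {i : ℕ} (hi : i + b ≤ L) :
    S.IsCriticalPath b (fun m => P (i + m)) (fun m => C (i + m)) :=
  ⟨h.path.shift hi, h.crit i hi⟩

theorem shift (h : S.IsCriticalChain b L P C) {i k : ℕ} (hi : i + k ≤ L) :
    S.IsCriticalChain b k (fun m => P (i + m)) (fun m => C (i + m)) :=
  ⟨h.path.shift hi, fun m hm => by simpa [add_assoc] using h.crit (i + m) (by omega)⟩

theorem reverseShift (hb : S.NoCriticalBelow b) (h : S.IsCriticalChain b L P C) {i k : ℕ}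
    (hi : i + 1 ≤ L) (hk : k ≤ i + 1) :
    S.IsCriticalChain b k (fun m => P (i + 1 - m)) (fun m => C (i - m)) where
  path :=
    { left m hm := by
        simpa only [show i - m + 1 = i + 1 - m by omega] using h.path.right (i - m) (by omega)
      right m hm := by
        simpa only [show i + 1 - (m + 1) = i - m by omega] using h.path.left (i - m) (by omega) }
  crit m hm := by
    have hrev := (h.window (i := i + 1 - (m + b)) (by omega)).not_V_last_le_R hb
    simpa only [add_zero, show i + 1 - (m + b) + b = i + 1 - m by omega] using hrev

theorem exists_succ (hb : S.NoCriticalBelow b) (hL : b ≤ L) (h : S.IsCriticalChain b L P C) :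
    ∃ P' C', S.IsCriticalChain b (L + 1) P' C' := by
  have hcrit : S.IsCriticalPath b P C := by
    simpa only [zero_add] using h.window (i := 0) (by omega)
  obtain ⟨D, hD, hne, -⟩ := exists_third_line (S := S) (p := P 0) (C 0) (C 0)
  obtain ⟨p, hp, hpR⟩ := hcrit.exists_not_V_le_R hb hD hne
  refine ⟨_, _, h.path.cons hp hD, ?_⟩
  rintro (_ | i) hi
  · obtain ⟨c, rfl⟩ : ∃ c, b = c + 1 := ⟨b - 1, by have := hb.1; omega⟩
    rw [zero_add]
    exact hpR
  · simpa only [show i + 1 + b = i + b + 1 by omega] using h.crit i (by omega)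

theorem line_ne_succ (hb : S.NoCriticalBelow b) (hL : b ≤ L) (h : S.IsCriticalChain b L P C)
    {i : ℕ} (hi : i + 1 < L) : C i ≠ C (i + 1) := by
  have h2 := hb.1
  by_cases hib : i + b ≤ L
  · simpa using (h.window hib).line_ne_succ hb (i := 0) (by omega)
  · have hne := (h.window (i := L - b) (by omega)).line_ne_succ hb (i := i - (L - b)) (by omega)
    simpa only [show L - b + (i - (L - b)) = i by omega,
      show L - b + (i - (L - b) + 1) = i + 1 by omega] using hne

end IsCriticalChain

theorem IsCriticalPath.exists_isCriticalChain (hb : S.NoCriticalBelow b)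
    (h : S.IsCriticalPath b P C) (k : ℕ) : ∃ P' C', S.IsCriticalChain b (b + k) P' C' := by
  induction k with
  | zero => exact ⟨P, C, h.isCriticalChain⟩
  | succ k ih =>
    obtain ⟨P', C', hchain⟩ := ih
    exact hchain.exists_succ hb (Nat.le_add_right b k)

end Critical

section Chain

variable {b : ℕ} {P : ℕ → Pt} {C : ℕ → Ln}

namespace IsCriticalChain

section
variable (h : S.IsCriticalChain b (b + 1) P C)
include h

theorem isCriticalPath_zero : S.IsCriticalPath b P C := by
  simpa only [zero_add] using h.window (i := 0) (by omega)

theorem inc_zero_zero : S.Inc (P 0) (C 0) := h.path.left 0 b.succ_pos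

theorem inc_one_zero : S.Inc (P 1) (C 0) := h.path.right 0 b.succ_pos

theorem meetCentralizer_le_E : S.meetCentralizer (P 1) ≤ S.E (C 0) :=
  inf_le_left.trans (S.R_le_E h.inc_one_zero)

variable (hb : S.NoCriticalBelow b)
include hb

theorem inc_one_one : S.Inc (P 1) (C 1) := h.path.left 1 (by have := hb.1; omega)

theorem line_zero_ne_one : C 0 ≠ C 1 :=
  h.line_ne_succ hb b.le_succ (i := 0) (by have := hb.1; omega)

theorem exists_mul_of_mem_E_one {e : G} (he : e ∈ S.E (C 1)) :
    ∃ v ∈ S.V (P (b + 1)), ∃ r ∈ S.R (P 1), e = v * r := by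
  simpa [add_comm] using
    (h.window (i := 1) (by omega)).exists_mul_of_mem_E_zero hb (by simpa using he)

theorem flagCommutator_last_eq_one : S.flagCommutator (P (b + 1)) (C b) =
    S.flagCommutator (P 1) (C 1) := by
  have h2 := hb.1
  have heq := (h.window (i := 1) (by omega)).flagCommutator_zero_eq_last hb
  rw [add_zero, add_comm 1 b, show 1 + (b - 1) = b by omega] at heq
  exact heq.symm

theorem exists_mul_of_mem_lineSpan {u : G} (hu : u ∈ S.lineSpan (C 0)) :
    ∃ v ∈ S.V (P 0), ∃ d ∈ S.lineSpan (C 0) ⊓ S.R (P b), u = v * d := by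
  have h2 := hb.1
  have hle : S.lineSpan (C 0) ≤ S.R (P (b - 1)) := by
    have hle := hb.lineSpan_le_R_add h.path (i := 0) (k := b - 2) (by omega) (by omega)
    rwa [show 0 + (b - 2 + 1) = b - 1 by omega] at hle
  have huE : u ∈ S.E (C (b - 1)) := S.R_le_E (h.path.left (b - 1) (by omega)) (hle hu)
  obtain ⟨v, hv, r, hr, rfl⟩ := h.isCriticalPath_zero.exists_mul_of_mem_E_last hb huE
  refine ⟨v, hv, r, ⟨?_, hr⟩, rfl⟩
  exact (mul_mem_cancel_left (V_le_lineSpan h.inc_zero_zero hv)).1 hu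

theorem V_one_le_lineSpan_inf_R : S.V (P 1) ≤ S.lineSpan (C 0) ⊓ S.R (P b) :=
  le_inf (V_le_lineSpan h.inc_one_zero) (h.isCriticalPath_zero.V_one_le_R_last hb)

theorem E_le_normalizer_lineSpan_inf_R {D} (hD : S.Inc (P 1) D) :
    S.E D ≤ normalizer ((S.lineSpan (C 0) ⊓ S.R (P b) : Subgroup G) : Set G) := by
  have hV := h.V_one_le_lineSpan_inf_R hb
  have hE0 : S.E (C 0) ≤
      normalizer ((S.lineSpan (C 0) ⊓ S.R (P b) : Subgroup G) : Set G) :=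
    le_normalizer_iff_commutator_le_left.2 <| calc
      ⁅S.lineSpan (C 0) ⊓ S.R (P b), S.E (C 0)⁆ ≤ ⁅S.lineSpan (C 0), S.E (C 0)⁆ :=
        commutator_mono inf_le_left le_rfl
      _ ≤ S.Z (C 0) := h.isCriticalPath_zero.lineSpan_commutator_E_le_Z hb
      _ ≤ _ := (S.Z_le_V h.inc_one_zero).trans hV
  have hVb : S.V (P (b + 1)) ≤
      normalizer ((S.lineSpan (C 0) ⊓ S.R (P b) : Subgroup G) : Set G) :=
    le_normalizer_iff_commutator_le_right.2 <| calc
      ⁅S.V (P (b + 1)), S.lineSpan (C 0) ⊓ S.R (P b)⁆ ≤ S.flagCommutator (P (b + 1)) (C b) :=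
        commutator_mono le_rfl (inf_le_right.trans (S.R_le_E (h.path.left b b.lt_succ_self)))
      _ = S.flagCommutator (P 1) (C 1) := h.flagCommutator_last_eq_one hb
      _ ≤ _ := (flagCommutator_le_V (h.inc_one_one hb)).trans hV
  refine E_le_normalizer_of_two_lines h.inc_one_zero (h.inc_one_one hb) (h.line_zero_ne_one hb)
    hE0 (fun e he => ?_) D hD
  obtain ⟨v, hv, r, hr, rfl⟩ := h.exists_mul_of_mem_E_one hb he
  exact mul_mem (hVb hv) (hE0 (S.R_le_E h.inc_one_zero hr))

theorem spanMeet_eq : S.spanMeet (P 1) = S.lineSpan (C 0) ⊓ S.R (P b) := by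
  have h2 := hb.1
  apply le_antisymm
  · refine le_inf (spanMeet_le_lineSpan h.inc_one_zero)
      ((spanMeet_le_lineSpan (h.inc_one_one hb)).trans ?_)
    have hle := hb.lineSpan_le_R_add h.path (i := 1) (k := b - 2) (by omega) (by omega)
    rwa [show 1 + (b - 2 + 1) = b by omega] at hle
  · refine le_iInf fun ⟨D, hD⟩ => ?_
    obtain ⟨F, hF, e, he, rfl⟩ := exists_mem_E_smul_line_eq h.inc_one_zero hD
    rw [S.lineSpan_smul, ← mem_normalizer_iff_conj_smul_eq.1
      (h.E_le_normalizer_lineSpan_inf_R hb hF he)]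
    exact pointwise_smul_le_pointwise_smul_iff.2 inf_le_left

/-- Some element of `V (P (b + 1))` carries `C 0` to `D` and fixes the far end of the path, where
the flag commutator can be computed as well. -/
theorem flagCommutator_le_Z_of_ne {D} (hD : S.Inc (P 1) D) (hne : D ≠ C 1) :
    S.flagCommutator (P 0) (C 0) ≤ S.Z D := by
  have w := h.isCriticalPath_zero
  have hinc := h.path.left b b.lt_succ_self
  obtain ⟨e, he, heq⟩ :=
    S.exists_smul_line_eq (h.inc_one_one hb) h.inc_one_zero hD (h.line_zero_ne_one hb) hne
  obtain ⟨t, ht, r, hr, rfl⟩ := h.exists_mul_of_mem_E_one hb he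
  rw [mul_smul, smul_line_eq_of_mem_R h.inc_one_zero hr] at heq
  have htR : t ∈ S.R (P b) :=
    hb.V_add_le_R h.path (i := b) (k := 1) (by have := hb.1; omega) le_rfl ht
  have hfix : S.flagCommutator (t • P 0) (t • C 0) = S.flagCommutator (P 0) (C 0) := by
    rw [S.flagCommutator_smul, w.flagCommutator_zero_eq_last hb, ← S.flagCommutator_smul,
      S.smul_point_eq (S.R_le_E hinc htR) hinc, smul_line_eq_of_mem_R (w.inc_last hb) htR]
  rw [← hfix, ← heq]
  exact w.flagCommutator_le_Z hb (S.inc_smul t h.inc_zero_zero)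

theorem flagCommutator_le_Z {D} (hD : S.Inc (P 1) D) : S.flagCommutator (P 0) (C 0) ≤ S.Z D := by
  rcases eq_or_ne D (C 1) with rfl | hne
  · obtain ⟨F, hF, hF0, hF1⟩ := exists_third_line (S := S) (p := P 1) (C 0) (C 1)
    exact (le_inf (h.flagCommutator_le_Z_of_ne hb h.inc_one_zero (h.line_zero_ne_one hb))
      (h.flagCommutator_le_Z_of_ne hb hF hF1)).trans (Z_inf_Z_le h.inc_one_zero hF hD hF0.symm)
  · exact h.flagCommutator_le_Z_of_ne hb hD hne

theorem commute_of_mem_meetCentralizer {d t : G} (hd : d ∈ S.lineSpan (C 0) ⊓ S.R (P b))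
    (ht : t ∈ S.meetCentralizer (P 1)) : Commute d t := by
  rw [← h.spanMeet_eq hb] at hd
  exact mem_centralizer_iff.1 ht.2 d hd

theorem meetCentralizer_ne_bot : S.meetCentralizer (P 1) ≠ ⊥ := by
  refine fun hbot => V_ne_bot h.inc_one_zero (eq_bot_iff.2 (hbot ▸ ?_))
  refine le_inf (S.V_le_R _) fun v hv => mem_centralizer_iff.2 fun k hk => ?_
  have hkR := hb.lineSpan_le_R h.inc_one_zero (spanMeet_le_lineSpan h.inc_one_zero hk)
  exact (S.commute_V_R hv hkR).symm

/-- Otherwise `meetCentralizer (P 1)` is the centraliser of the span of `C 0` in `E (C 0)`, which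
is normalised by too much to be nontrivial. -/
theorem not_meetCentralizer_le_R : ¬ S.meetCentralizer (P 1) ≤ S.R (P 0) := by
  intro hle
  have heq : S.meetCentralizer (P 1) = S.E (C 0) ⊓ centralizer (S.lineSpan (C 0)) := by
    apply le_antisymm
    · refine le_inf h.meetCentralizer_le_E fun t ht => mem_centralizer_iff.2 fun u hu => ?_
      obtain ⟨v, hv, d, hd, rfl⟩ := h.exists_mul_of_mem_lineSpan hb hu
      exact (S.commute_V_R hv (hle ht)).mul_left (h.commute_of_mem_meetCentralizer hb hd ht)
    · rintro t ⟨htE, htC⟩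
      exact ⟨mem_R_of_commute_V h.inc_one_zero htE fun v hv =>
        mem_centralizer_iff.1 htC v (V_le_lineSpan h.inc_one_zero hv),
        centralizer_le (spanMeet_le_lineSpan h.inc_one_zero) htC⟩
  refine h.meetCentralizer_ne_bot hb (S.eq_bot_of_le_normalizer h.inc_one_zero
    h.meetCentralizer_le_E (fun g hg => ?_) fun D' hD' e he => ?_)
  · rw [heq, smul_inf, ← centralizer_conj_smul, ← S.lineSpan_smul, ← S.E_smul, hg]
  · rw [mem_normalizer_iff_conj_smul_eq, ← S.meetCentralizer_smul, S.smul_point_eq he hD']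

theorem commutator_lineSpan_zero_meetCentralizer :
    ⁅S.lineSpan (C 0), S.meetCentralizer (P 1)⁆ = S.flagCommutator (P 0) (C 0) := by
  have hTE := h.meetCentralizer_le_E
  have hfull : S.meetCentralizer (P 1) ⊔ S.R (P 0) = S.E (C 0) :=
    S.sup_R_eq_E h.inc_one_zero h.inc_zero_zero hTE
      (fun g hg _ => by rw [← S.meetCentralizer_smul, hg]) (h.not_meetCentralizer_le_R hb)
  have heq : S.flagCommutator (P 0) (C 0) = ⁅S.V (P 0), S.meetCentralizer (P 1)⁆ := by
    refine commutator_eq_of_forall_exists_mul hTE fun c hc => ?_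
    rw [← hfull] at hc
    obtain ⟨a, ha, r, hr, rfl⟩ :=
      exists_mul_of_mem_sup (hTE.trans (E_le_normalizer_R h.inc_zero_zero)) hc
    exact ⟨a, ha, r, fun v hv => S.commute_V_R hv hr, rfl⟩
  rw [heq]
  refine le_antisymm (commutator_le.2 fun u hu t ht => ?_)
    (commutator_mono (V_le_lineSpan h.inc_zero_zero) le_rfl)
  obtain ⟨v, hv, d, hd, rfl⟩ := h.exists_mul_of_mem_lineSpan hb hu
  rw [commutatorElement_mul_left_eq_conj_mul,
    (h.commute_of_mem_meetCentralizer hb hd ht).commutator_eq]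
  simpa using commutator_mem_commutator hv ht

theorem commutator_lineSpan_meetCentralizer {D} (hD : S.Inc (P 1) D) :
    ⁅S.lineSpan D, S.meetCentralizer (P 1)⁆ = S.flagCommutator (P 0) (C 0) := by
  obtain ⟨F, hF, e, he, rfl⟩ := exists_mem_E_smul_line_eq h.inc_one_zero hD
  have hfix : conj e • S.meetCentralizer (P 1) = S.meetCentralizer (P 1) := by
    rw [← S.meetCentralizer_smul, S.smul_point_eq he hF]
  rw [S.lineSpan_smul, ← hfix, ← conj_smul_commutator,
    h.commutator_lineSpan_zero_meetCentralizer hb]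
  exact conj_smul_eq_self_of_commute fun k hk => S.commute_Z_E (h.flagCommutator_le_Z hb hF hk) he

end

/-- Comparing the two directions around `P b` shows that the flag commutator of `P (b + 1)` and
`C b` is centralised by `V` of a point at distance `b` from `P (b + 1)`. -/
theorem not_three_le (hb : S.NoCriticalBelow b) (h3 : 3 ≤ b)
    (h : S.IsCriticalChain b (2 * b + 1) P C) : False := by
  have forward : S.IsCriticalChain b (b + 1) (fun m => P (b - 1 + m)) (fun m => C (b - 1 + m)) :=
    h.shift (by omega)
  have backward : S.IsCriticalChain b (b + 1) (fun m => P (b + 1 - m)) (fun m => C (b - m)) :=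
    h.reverseShift hb (by omega) le_rfl
  have hinc : S.Inc (P b) (C b) := h.path.left b (by omega)
  have hinc1 : S.Inc (P (b + 1)) (C b) := h.path.right b (by omega)
  have hinc2 : S.Inc (P (b + 1)) (C (b + 1)) := h.path.left (b + 1) (by omega)
  have hsub : b - 1 + 1 = b := by omega
  have heq : S.flagCommutator (P (b - 1)) (C (b - 1)) = S.flagCommutator (P (b + 1)) (C b) :=
    calc
      _ = ⁅S.lineSpan (C b), S.meetCentralizer (P b)⁆ := by
        simpa only [hsub, add_zero] using (forward.commutator_lineSpan_meetCentralizer hb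
          (D := C b) (by simpa only [hsub] using hinc)).symm
      _ = _ := backward.commutator_lineSpan_meetCentralizer hb hinc
  have w := h.window (i := b - 1) (by omega)
  have w' := h.window (i := b + 1) (by omega)
  refine S.not_commutator_le_Z hinc1 hinc2 (h.line_ne_succ hb (by omega) (by omega)) fun v hv => ?_
  obtain ⟨t, ht, htR⟩ := SetLike.not_le_iff_exists.1 (w'.not_V_last_le_R hb)
  refine S.mem_Z_of_commute hinc2 (w'.V_last_le_E hb ht) htR (flagCommutator_le_V hinc1 hv) ?_
  have hvV : v ∈ S.V (P (b - 1 + b)) :=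
    flagCommutator_le_V (w.inc_last hb) (w.flagCommutator_zero_eq_last hb ▸ heq ▸ hv)
  have htR' := hb.V_add_le_R h.path (i := b - 1 + b) (k := 2) (by omega) (by omega)
  rw [show b - 1 + b + 2 = b + 1 + b by omega] at htR'
  exact S.commute_V_R hvV (htR' ht)

end IsCriticalChain

end Chain

end LocalGeometry

/-! ### Critical paths of length two -/

section CentralizerModulo

variable {G ι : Type*} [Group G] {W κ Y : Subgroup G} {N : ι → Subgroup G} {q : ℕ} {x y : G}

theorem mul_mul_mul_self_mem (hx : x * x ∈ κ) (hy : y * y ∈ κ) (hyx : ⁅y, x⁆ ∈ κ)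
    (hxκ : x ∈ normalizer κ) : x * y * (x * y) ∈ κ := by
  have hfactor : x * y * (x * y) = (x * ⁅y, x⁆ * x⁻¹) * (x * x) * (y * y) := by
    rw [commutatorElement_def]; group
  rw [hfactor]
  exact mul_mem (mul_mem (conj_mem_of_mem_normalizer hxκ hyx) hx) hy

theorem commutatorElement_mem_of_mul_self_mem (hx : x * x ∈ κ) (hy : y * y ∈ κ)
    (hxy : x * y * (x * y) ∈ κ) (hyκ : y ∈ normalizer κ) : ⁅x, y⁆ ∈ κ := by
  have hfactor : ⁅x, y⁆ = (x * y * (x * y)) * (y⁻¹ * (x * x)⁻¹ * y) * (y * y)⁻¹ := by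
    rw [commutatorElement_def]; group
  rw [hfactor]
  exact mul_mem (mul_mem hxy (inv_conj_mem_of_mem_normalizer hyκ (inv_mem hx))) (inv_mem hy)

/-- The elements of `W` that centralise `W` modulo `κ`, where `W` normalises `κ`. -/
def centralizerModulo (W κ : Subgroup G) (hκ : W ≤ normalizer κ) : Subgroup G where
  carrier := {w | w ∈ W ∧ ∀ w' ∈ W, ⁅w, w'⁆ ∈ κ}
  one_mem' := ⟨one_mem _, fun w' _ => by rw [commutatorElement_one_left]; exact one_mem _⟩
  mul_mem' := by
    rintro x y ⟨hx, hxκ⟩ ⟨hy, hyκ⟩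
    refine ⟨mul_mem hx hy, fun w hw => ?_⟩
    rw [commutatorElement_mul_left_eq_conj_mul]
    exact mul_mem (conj_mem_of_mem_normalizer (hκ hx) (hyκ w hw)) (hxκ w hw)
  inv_mem' := by
    rintro x ⟨hx, hxκ⟩
    refine ⟨inv_mem hx, fun w hw => ?_⟩
    have hinv : ⁅x⁻¹, w⁆ = x⁻¹ * ⁅x, w⁆⁻¹ * x := by simp only [commutatorElement_def]; group
    rw [hinv]
    exact inv_conj_mem_of_mem_normalizer (hκ hx) (inv_mem (hxκ w hw))

theorem centralizerModulo_le (hκ : W ≤ normalizer κ) : centralizerModulo W κ hκ ≤ W :=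
  fun _ h => h.1

theorem conj_smul_centralizerModulo (hκ : W ≤ normalizer κ) {g : G} (hgW : conj g • W = W)
    (hgκ : conj g • κ = κ) : conj g • centralizerModulo W κ hκ = centralizerModulo W κ hκ := by
  have hcomm (u v : G) : ⁅g⁻¹ * u * g, g⁻¹ * v * g⁆ = g⁻¹ * ⁅u, v⁆ * g := by
    simpa only [inv_inv] using (conjugate_commutatorElement u v g⁻¹).symm
  ext w
  rw [mem_conj_smul]
  change (_ ∈ W ∧ ∀ w' ∈ W, _ ∈ κ) ↔ (_ ∈ W ∧ ∀ w' ∈ W, _ ∈ κ)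
  rw [← mem_conj_smul, hgW]
  refine and_congr_right fun _ => ⟨fun H w' hw' => ?_, fun H w' hw' => ?_⟩
  · rw [← hgW, mem_conj_smul] at hw'
    have hmem := H _ hw'
    rwa [hcomm, ← mem_conj_smul, hgκ] at hmem
  · have hw : w' = g⁻¹ * (g * w' * g⁻¹) * g := by group
    rw [hw, hcomm, ← mem_conj_smul, hgκ]
    exact H _ (hgW ▸ conj_mem_conj_smul hw')

theorem card_eq_relIndex_mul_card (h : W ≤ Y) : Nat.card Y = W.relIndex Y * Nat.card W := by
  have hmul := relIndex_mul_relIndex ⊥ W Y bot_le h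
  rw [relIndex_bot_left, relIndex_bot_left] at hmul
  rw [← hmul, mul_comm]

theorem exists_mem_of_card_eq [Finite G] (hι : Nat.card ι = q + 1) (hY : ∀ i, Y ≤ N i)
    (hN : ∀ i, N i ≤ W) (hmeet : ∀ i j, i ≠ j → N i ⊓ N j ≤ Y) (hW : ∀ i, (N i).relIndex W = q)
    (hNY : ∀ i, Y.relIndex (N i) = q) {w : G} (hw : w ∈ W) : ∃ i, w ∈ N i := by
  have : Finite ι := Nat.finite_of_card_ne_zero (by omega)
  have := Fintype.ofFinite ι
  obtain ⟨i₀⟩ : Nonempty ι := (Nat.card_pos_iff.1 (by omega)).1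
  by_cases hwY : w ∈ Y
  · exact ⟨i₀, hY i₀ hwY⟩
  have hcardN (i) : Nat.card (N i) = q * Nat.card Y := hNY i ▸ card_eq_relIndex_mul_card (hY i)
  have hcardW : Nat.card W = q * (q * Nat.card Y) := by
    rw [← hcardN i₀, card_eq_relIndex_mul_card (hN i₀), hW]
  have hdiff {K : Subgroup G} (hK : Y ≤ K) :
      Nat.card ((K : Set G) \ Y : Set G) = Nat.card K - Nat.card Y :=
    Set.ncard_sdiff hK
  let f : (Σ i, ((N i : Set G) \ Y : Set G)) → ((W : Set G) \ Y : Set G) :=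
    fun x => ⟨x.2, hN x.1 x.2.2.1, x.2.2.2⟩
  have hf : Function.Injective f := by
    rintro ⟨i, x, hx⟩ ⟨j, y, hy⟩ hxy
    obtain rfl : x = y := congrArg Subtype.val hxy
    obtain rfl : i = j := by
      by_contra hij
      exact hx.2 (hmeet i j hij ⟨hx.1, hy.1⟩)
    rfl
  have hcard : Nat.card ((W : Set G) \ Y : Set G) ≤
      Nat.card (Σ i, ((N i : Set G) \ Y : Set G)) := by
    rw [Nat.card_sigma, hdiff ((hY i₀).trans (hN i₀)), hcardW,
      Finset.sum_congr rfl fun i _ => (hdiff (hY i)).trans (congrArg (· - _) (hcardN i)),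
      Finset.sum_const, Finset.card_univ, ← Nat.card_eq_fintype_card, hι, smul_eq_mul]
    rw [Nat.mul_sub, tsub_le_iff_right]
    obtain ⟨m, rfl⟩ : ∃ m, q = m + 1 := Nat.exists_eq_succ_of_ne_zero
      (hW i₀ ▸ index_ne_zero_of_finite)
    have : (m + 1 + 1) * Nat.card Y ≤ (m + 1 + 1) * ((m + 1) * Nat.card Y) := by gcongr; nlinarith
    zify [this]
    nlinarith
  obtain ⟨⟨i, x, hx⟩, hxw⟩ := (hf.bijective_of_nat_card_le hcard).2 ⟨w, hw, hwY⟩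
  obtain rfl : x = w := congrArg Subtype.val hxw
  exact ⟨i, hx.1⟩

/-- Any two of the `N i` meet in `centralizerModulo W κ`, so by counting the `N i` cover `W`. -/
theorem mul_self_mem_of_card_eq [Finite G] (hκ : W ≤ normalizer κ) (hι : Nat.card ι = q + 1)
    (hN : ∀ i, N i ≤ W) (hW : ∀ i, (N i).relIndex W = q)
    (hprod : ∀ i j, i ≠ j → ∀ w ∈ W, ∃ m ∈ N i, ∃ l ∈ N j, w = m * l)
    (hsq : ∀ i, ∀ w ∈ N i, w * w ∈ κ) (hcomm : ∀ i, ⁅N i, N i⁆ ≤ κ)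
    (hY : ∀ i, centralizerModulo W κ hκ ≤ N i) {w : G} (hw : w ∈ W) : w * w ∈ κ := by
  have hmeet (i j) (hij : i ≠ j) : N i ⊓ N j ≤ centralizerModulo W κ hκ := by
    rintro w ⟨hwi, hwj⟩
    refine ⟨hN i hwi, fun w' hw' => ?_⟩
    obtain ⟨m, hm, l, hl, rfl⟩ := hprod i j hij w' hw'
    rw [commutatorElement_mul_right_eq_mul_conj, mul_assoc, mul_assoc, ← mul_assoc m]
    exact mul_mem (commutator_le.1 (hcomm i) w hwi m hm)
      (conj_mem_of_mem_normalizer (hκ (hN i hm)) (commutator_le.1 (hcomm j) w hwj l hl))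
  have hq : 0 < q := by
    obtain ⟨i⟩ : Nonempty ι := (Nat.card_pos_iff.1 (by omega)).1
    exact Nat.pos_of_ne_zero (hW i ▸ index_ne_zero_of_finite)
  have : Nontrivial ι := by
    have := Nat.finite_of_card_ne_zero (α := ι) (by omega)
    rw [← Finite.one_lt_card_iff_nontrivial]
    omega
  have hindex (i) : (centralizerModulo W κ hκ).relIndex (N i) = q := by
    obtain ⟨j, hij⟩ := exists_ne i
    rw [le_antisymm (le_inf (hY j) (hY i)) (hmeet j i hij), inf_relIndex_right, ← hW j]
    refine (relIndex_eq_of_forall_exists_mul (hN i) fun w hw => ?_)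
    exact hprod i j hij.symm w hw
  obtain ⟨i, hi⟩ := exists_mem_of_card_eq hι hY hN hmeet hW hindex hw
  exact hsq i w hi

end CentralizerModulo

namespace LocalGeometry

variable {G Pt Ln : Type*} [Group G] [MulAction G Pt] [MulAction G Ln] {S : LocalGeometry G Pt Ln}

theorem conj_smul_spanJoin {a : Pt} {g : G} (h : g • a = a) :
    conj g • S.spanJoin a = S.spanJoin a := by
  rw [← S.spanJoin_smul, h]

theorem exists_smul_eq_of_two_lines {a C C' D D'} (hC : S.Inc a C) (hC' : S.Inc a C')
    (hCC' : C ≠ C') (hD : S.Inc a D) (hD' : S.Inc a D') (hDD' : D ≠ D') :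
    ∃ g : G, g • a = a ∧ g • C = D ∧ g • C' = D' := by
  obtain ⟨F, hF, e, he, rfl⟩ := exists_mem_E_smul_line_eq hC hD
  have hea := S.smul_point_eq he hF
  have hinc : S.Inc a (e⁻¹ • D') := by rwa [← S.inc_smul_iff e, hea, smul_inv_smul]
  have hne : e⁻¹ • D' ≠ C := fun heq => hDD' (by rw [← heq, smul_inv_smul])
  obtain ⟨f, hf, hfeq⟩ := S.exists_smul_line_eq hC hC' hinc hCC'.symm hne
  refine ⟨e * f, ?_, ?_, ?_⟩
  · rw [mul_smul, S.smul_point_eq hf hC, hea]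
  · rw [mul_smul, S.smul_line_eq hf]
  · rw [mul_smul, hfeq, smul_inv_smul]

namespace NoCriticalBelow

variable {b : ℕ} (hb : S.NoCriticalBelow b)
include hb

theorem spanJoin_le_meetCentralizer (a : Pt) : S.spanJoin a ≤ S.meetCentralizer a :=
  iSup_le fun D => le_inf (hb.lineSpan_le_R D.2) fun _ hu => mem_centralizer_iff.2 fun _ hk =>
    hb.commute_lineSpan (spanMeet_le_lineSpan D.2 hk) hu

theorem spanJoin_le_E {a D} (h : S.Inc a D) : S.spanJoin a ≤ S.E D :=
  ((hb.spanJoin_le_meetCentralizer a).trans inf_le_left).trans (S.R_le_E h)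

theorem mul_self_of_mem_lineSpan {D : Ln} {u : G} (hu : u ∈ S.lineSpan D) : u * u = 1 := by
  suffices hmem : u ∈ S.lineSpan D ∧ u * u = 1 from hmem.2
  refine iSup_induction (fun p : {p // S.Inc p D} => S.V p)
    (C := fun u => u ∈ S.lineSpan D ∧ u * u = 1) hu ?_ ⟨one_mem _, one_mul 1⟩ ?_
  · exact fun p v hv => ⟨V_le_lineSpan p.2 hv, S.mul_self_of_mem_V hv⟩
  · rintro x y ⟨hx, hxx⟩ ⟨hy, hyy⟩
    refine ⟨mul_mem hx hy, ?_⟩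
    rw [(hb.commute_lineSpan hy hx).mul_mul_mul_comm, hxx, hyy, one_mul]

end NoCriticalBelow

namespace IsCriticalChain

section SpanJoin

variable {b : ℕ} {P : ℕ → Pt} {C : ℕ → Ln} (hb : S.NoCriticalBelow b)
  (h : S.IsCriticalChain b (b + 1) P C)
include hb h

theorem commute_flagCommutator_spanJoin {k w : G} (hk : k ∈ S.flagCommutator (P 0) (C 0))
    (hw : w ∈ S.spanJoin (P 1)) : Commute k w := by
  have hle : S.spanJoin (P 1) ≤ centralizer (S.flagCommutator (P 0) (C 0)) :=
    iSup_le fun D u hu => mem_centralizer_iff.2 fun k hk =>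
      S.commute_Z_E (h.flagCommutator_le_Z hb D.2 hk) (lineSpan_le_E hu)
  exact mem_centralizer_iff.1 (hle hw) k hk

theorem mem_normalizer_flagCommutator {w : G} (hw : w ∈ S.spanJoin (P 1)) :
    w ∈ normalizer (S.flagCommutator (P 0) (C 0)) :=
  mem_normalizer_iff_conj_smul_eq.2 <| conj_smul_eq_self_of_commute fun _ hk =>
    h.commute_flagCommutator_spanJoin hb hk hw

theorem commutator_spanJoin_le :
    ⁅S.spanJoin (P 1), S.spanJoin (P 1)⁆ ≤ S.flagCommutator (P 0) (C 0) := by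
  refine iSup_commutator_le (fun D => ?_) fun D u hu =>
    h.mem_normalizer_flagCommutator hb (lineSpan_le_spanJoin D.2 hu)
  rw [← h.commutator_lineSpan_meetCentralizer hb D.2]
  exact commutator_mono le_rfl (hb.spanJoin_le_meetCentralizer _)

theorem mul_self_mem_flagCommutator {w : G} (hw : w ∈ S.spanJoin (P 1)) :
    w * w ∈ S.flagCommutator (P 0) (C 0) := by
  suffices hmem : w ∈ S.spanJoin (P 1) ∧ w * w ∈ S.flagCommutator (P 0) (C 0) from hmem.2
  refine iSup_induction (fun D : {D // S.Inc (P 1) D} => S.lineSpan D)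
    (C := fun w => w ∈ S.spanJoin (P 1) ∧ w * w ∈ S.flagCommutator (P 0) (C 0)) hw ?_
    ⟨one_mem _, by rw [one_mul]; exact one_mem _⟩ ?_
  · intro D u hu
    refine ⟨lineSpan_le_spanJoin D.2 hu, ?_⟩
    rw [hb.mul_self_of_mem_lineSpan hu]
    exact one_mem _
  · rintro x y ⟨hx, hxx⟩ ⟨hy, hyy⟩
    exact ⟨mul_mem hx hy, mul_mul_mul_self_mem hxx hyy
      (commutator_le.1 (h.commutator_spanJoin_le hb) y hy x hx)
      (h.mem_normalizer_flagCommutator hb hx)⟩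

end SpanJoin

end IsCriticalChain

variable (S) in
/-- The centraliser of `lineSpan D` in `spanJoin a`, for a line `D` through `a`. -/
def lineCentralizer (a : Pt) (D : Ln) : Subgroup G := S.spanJoin a ⊓ centralizer (S.lineSpan D)

theorem lineCentralizer_smul {a : Pt} {g : G} (h : g • a = a) (D : Ln) :
    S.lineCentralizer a (g • D) = conj g • S.lineCentralizer a D := by
  rw [lineCentralizer, lineCentralizer, S.lineSpan_smul, smul_inf, centralizer_conj_smul,
    conj_smul_spanJoin h]

variable (S) in
/-- The intersection of the commutators attached to two points `j` and `a` of a line `D`. -/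
def flagCommutatorMeet (j a : Pt) (D : Ln) : Subgroup G :=
  S.flagCommutator j D ⊓ S.flagCommutator a D

namespace IsCriticalChain

section LengthTwo

variable {P : ℕ → Pt} {C : ℕ → Ln} (hb : S.NoCriticalBelow 2) (h : S.IsCriticalChain 2 5 P C)
include h

theorem inc_two_two : S.Inc (P 2) (C 2) := h.path.left 2 (by norm_num)

theorem inc_three_two : S.Inc (P 3) (C 2) := h.path.right 2 (by norm_num)

theorem inc_three_three : S.Inc (P 3) (C 3) := h.path.left 3 (by norm_num)

theorem V_four_le_lineSpan : S.V (P 4) ≤ S.lineSpan (C 3) :=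
  V_le_lineSpan (h.path.right 3 (by norm_num))

theorem V_four_le_spanJoin : S.V (P 4) ≤ S.spanJoin (P 3) :=
  h.V_four_le_lineSpan.trans (lineSpan_le_spanJoin h.inc_three_three)

theorem V_two_le_spanJoin : S.V (P 2) ≤ S.spanJoin (P 3) :=
  (V_le_lineSpan h.inc_two_two).trans (lineSpan_le_spanJoin h.inc_three_two)

theorem forward : S.IsCriticalChain 2 3 (fun m => P (2 + m)) (fun m => C (2 + m)) :=
  h.shift (by norm_num)

include hb

theorem backward : S.IsCriticalChain 2 3 (fun m => P (3 - m)) (fun m => C (2 - m)) :=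
  h.reverseShift hb (i := 2) (by norm_num) (by norm_num)

theorem line_two_ne_three : C 2 ≠ C 3 := h.line_ne_succ hb (by norm_num) (i := 2) (by norm_num)

theorem exists_mul_of_mem_E_two {e : G} (he : e ∈ S.E (C 2)) :
    ∃ v ∈ S.V (P 4), ∃ r ∈ S.R (P 2), e = v * r :=
  h.forward.isCriticalPath_zero.exists_mul_of_mem_E_zero hb he

theorem spanMeet_three_eq : S.spanMeet (P 3) = S.lineSpan (C 3) ⊓ S.R (P 2) :=
  (h.reverseShift hb (i := 3) (k := 3) (by norm_num) (by norm_num)).spanMeet_eq hb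

theorem commute_flagCommutatorMeet {D k e} (hD : S.Inc (P 3) D)
    (hk : k ∈ S.flagCommutatorMeet (P 2) (P 3) (C 2)) (he : e ∈ S.E D) : Commute k e :=
  S.commute_Z_E (h.forward.flagCommutator_le_Z hb hD hk.1) he

theorem conj_smul_flagCommutatorMeet {D e} (hD : S.Inc (P 3) D) (he : e ∈ S.E D) :
    conj e • S.flagCommutatorMeet (P 2) (P 3) (C 2) = S.flagCommutatorMeet (P 2) (P 3) (C 2) :=
  conj_smul_eq_self_of_commute fun _ hk => h.commute_flagCommutatorMeet hb hD hk he

theorem spanJoin_le_normalizer_flagCommutatorMeet :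
    S.spanJoin (P 3) ≤ normalizer (S.flagCommutatorMeet (P 2) (P 3) (C 2)) := fun _ hw =>
  mem_normalizer_iff_conj_smul_eq.2 <|
    h.conj_smul_flagCommutatorMeet hb h.inc_three_two (hb.spanJoin_le_E h.inc_three_two hw)

theorem exists_mul_spanJoin_two {e : G} (he : e ∈ S.E (C 2)) :
    ∃ w ∈ S.spanJoin (P 2), ∃ r ∈ S.R (P 3), e = w * r := by
  have hP1 : S.V (P 1) ≤ S.spanJoin (P 2) :=
    (V_le_lineSpan (h.path.left 1 (by norm_num))).trans
      (lineSpan_le_spanJoin (h.path.right 1 (by norm_num)))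
  have hsup := S.sup_R_eq_E h.inc_two_two h.inc_three_two (hb.spanJoin_le_E h.inc_two_two)
    (fun _ hg _ => conj_smul_spanJoin hg) fun hle => h.crit 1 (by norm_num) (hP1.trans hle)
  rw [← hsup] at he
  exact exists_mul_of_mem_sup
    ((hb.spanJoin_le_E h.inc_two_two).trans (E_le_normalizer_R h.inc_three_two)) he

theorem lineSpan_le_E_two : S.lineSpan (C 3) ≤ S.E (C 2) :=
  (lineSpan_le_spanJoin h.inc_three_three).trans (hb.spanJoin_le_E h.inc_three_two)

theorem spanJoin_three_le_sup :
    S.spanJoin (P 3) ≤ (S.spanJoin (P 3) ⊓ S.spanJoin (P 2)) ⊔ S.lineSpan (C 3) := by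
  have hnorm {p : Pt} (hp : S.Inc p (C 2)) : S.E (C 2) ≤ normalizer (S.spanJoin p) :=
    fun e he => mem_normalizer_iff_conj_smul_eq.2 (conj_smul_spanJoin (S.smul_point_eq he hp))
  refine iSup_le fun D => ?_
  by_cases hD : D.1 = C 2
  · rw [hD]
    exact le_sup_of_le_left
      (le_inf (lineSpan_le_spanJoin h.inc_three_two) (lineSpan_le_spanJoin h.inc_two_two))
  obtain ⟨e, he, heq⟩ := S.exists_smul_line_eq h.inc_three_two h.inc_three_three D.2
    (h.line_two_ne_three hb).symm hD
  obtain ⟨w, hw, r, hr, rfl⟩ := h.exists_mul_spanJoin_two hb he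
  have hwE := hb.spanJoin_le_E h.inc_two_two hw
  rw [mul_smul, smul_line_eq_of_mem_R h.inc_three_three hr] at heq
  rw [← heq, S.lineSpan_smul]
  intro x hx
  rw [mem_conj_smul] at hx
  obtain ⟨u, rfl⟩ : ∃ u, x = w * u * w⁻¹ := ⟨w⁻¹ * x * w, by group⟩
  rw [show w⁻¹ * (w * u * w⁻¹) * w = u by group] at hx
  rw [← MulAut.conj_apply, conj_eq_commutatorElement_mul]
  refine mul_mem (mem_sup_left ⟨?_, ?_⟩) (mem_sup_right hx)
  · have huW := lineSpan_le_spanJoin h.inc_three_three hx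
    exact le_normalizer_iff_commutator_le_right.1 (hnorm h.inc_three_two)
      (commutator_mem_commutator hwE huW)
  · exact le_normalizer_iff_commutator_le_left.1 (hnorm h.inc_two_two)
      (commutator_mem_commutator hw (h.lineSpan_le_E_two hb hx))

theorem spanJoin_inf_R_le : S.spanJoin (P 3) ⊓ S.R (P 2) ≤ S.spanJoin (P 2) := by
  have hnorm : S.lineSpan (C 3) ≤
      normalizer ((S.spanJoin (P 3) ⊓ S.spanJoin (P 2) : Subgroup G) : Set G) := fun u hu => by
    have huE := h.lineSpan_le_E_two hb hu
    rw [mem_normalizer_iff_conj_smul_eq, smul_inf,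
      conj_smul_spanJoin (S.smul_point_eq huE h.inc_three_two),
      conj_smul_spanJoin (S.smul_point_eq huE h.inc_two_two)]
  rintro w ⟨hw, hwR⟩
  obtain ⟨k, ⟨-, hk⟩, u, hu, rfl⟩ := exists_mul_of_mem_sup' hnorm (h.spanJoin_three_le_sup hb hw)
  have hkR : k ∈ S.R (P 2) := (hb.spanJoin_le_meetCentralizer _ hk).1
  have huR : u ∈ S.R (P 2) := (mul_mem_cancel_left hkR).1 hwR
  have humeet : u ∈ S.spanMeet (P 3) := h.spanMeet_three_eq hb ▸ ⟨hu, huR⟩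
  exact mul_mem hk
    (lineSpan_le_spanJoin h.inc_two_two (spanMeet_le_lineSpan h.inc_three_two humeet))

theorem spanJoin_inf_R_eq : S.spanJoin (P 3) ⊓ S.R (P 2) = S.lineCentralizer (P 3) (C 2) := by
  apply le_antisymm
  · rintro w ⟨hw, hwR⟩
    refine ⟨hw, mem_centralizer_iff.2 fun u hu => ?_⟩
    obtain ⟨v, hv, d, hd, rfl⟩ := h.forward.exists_mul_of_mem_lineSpan hb hu
    rw [← h.forward.spanMeet_eq hb] at hd
    have hdw : Commute d w := mem_centralizer_iff.1 (hb.spanJoin_le_meetCentralizer _ hw).2 d hd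
    exact (S.commute_V_R hv hwR).mul_left hdw
  · rintro w ⟨hw, hwC⟩
    exact ⟨hw, mem_R_of_commute_V h.inc_two_two (hb.spanJoin_le_E h.inc_three_two hw)
      fun v hv => mem_centralizer_iff.1 hwC v (V_le_lineSpan h.inc_two_two hv)⟩

/-- The lines through `P 3` are conjugate by elements fixing `P 3` and the commutator meet. -/
theorem exists_smul_line_two_eq {D} (hD : S.Inc (P 3) D) : ∃ e : G, e • P 3 = P 3 ∧ e • C 2 = D ∧
    conj e • S.flagCommutatorMeet (P 2) (P 3) (C 2) = S.flagCommutatorMeet (P 2) (P 3) (C 2) := by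
  obtain ⟨F, hF, e, he, heq⟩ := exists_mem_E_smul_line_eq h.inc_three_two hD
  exact ⟨e, S.smul_point_eq he hF, heq, h.conj_smul_flagCommutatorMeet hb hF he⟩

theorem mul_self_mem_of_mem_lineCentralizer {D w} (hD : S.Inc (P 3) D)
    (hw : w ∈ S.lineCentralizer (P 3) D) :
    w * w ∈ S.flagCommutatorMeet (P 2) (P 3) (C 2) := by
  obtain ⟨e, heP, rfl, heκ⟩ := h.exists_smul_line_two_eq hb hD
  rw [lineCentralizer_smul heP, mem_conj_smul, ← h.spanJoin_inf_R_eq hb] at hw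
  rw [← heκ, mem_conj_smul, show e⁻¹ * (w * w) * e = e⁻¹ * w * e * (e⁻¹ * w * e) by group]
  exact ⟨h.forward.mul_self_mem_flagCommutator hb hw.1,
    (h.backward hb).mul_self_mem_flagCommutator hb (h.spanJoin_inf_R_le hb hw)⟩

theorem commutator_lineCentralizer_le {D} (hD : S.Inc (P 3) D) :
    ⁅S.lineCentralizer (P 3) D, S.lineCentralizer (P 3) D⁆ ≤
      S.flagCommutatorMeet (P 2) (P 3) (C 2) := by
  obtain ⟨e, heP, rfl, heκ⟩ := h.exists_smul_line_two_eq hb hD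
  rw [lineCentralizer_smul heP, ← conj_smul_commutator, ← heκ,
    pointwise_smul_le_pointwise_smul_iff, ← h.spanJoin_inf_R_eq hb]
  have hR := h.spanJoin_inf_R_le hb
  have hforward : ⁅S.spanJoin (P 3), S.spanJoin (P 3)⁆ ≤ S.flagCommutator (P 2) (C 2) := by
    simpa only [Nat.reduceAdd] using h.forward.commutator_spanJoin_le hb
  have hbackward : ⁅S.spanJoin (P 2), S.spanJoin (P 2)⁆ ≤ S.flagCommutator (P 3) (C 2) := by
    simpa only [Nat.reduceSub] using (h.backward hb).commutator_spanJoin_le hb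
  exact le_inf ((commutator_mono inf_le_left inf_le_left).trans hforward)
    ((commutator_mono hR hR).trans hbackward)

theorem relIndex_lineCentralizer {D} (hD : S.Inc (P 3) D) :
    (S.lineCentralizer (P 3) D).relIndex (S.spanJoin (P 3)) = S.q := by
  obtain ⟨e, heP, rfl, -⟩ := h.exists_smul_line_two_eq hb hD
  rw [lineCentralizer_smul heP, ← conj_smul_spanJoin (S := S) heP, relIndex_pointwise_smul,
    ← h.spanJoin_inf_R_eq hb, inf_relIndex_left, ← S.relIndex_R h.inc_two_two]
  refine relIndex_eq_of_forall_exists_mul (hb.spanJoin_le_E h.inc_three_two) fun e he => ?_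
  obtain ⟨v, hv, r, hr, rfl⟩ := h.exists_mul_of_mem_E_two hb he
  exact ⟨v, h.V_four_le_spanJoin hv, r, hr, rfl⟩

theorem exists_mul_lineCentralizer {D D'} (hD : S.Inc (P 3) D) (hD' : S.Inc (P 3) D')
    (hne : D ≠ D') {w : G} (hw : w ∈ S.spanJoin (P 3)) :
    ∃ m ∈ S.lineCentralizer (P 3) D, ∃ l ∈ S.lineCentralizer (P 3) D', w = m * l := by
  obtain ⟨g, hg, rfl, rfl⟩ := exists_smul_eq_of_two_lines h.inc_three_three h.inc_three_two
    (h.line_two_ne_three hb).symm hD hD' hne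
  rw [← conj_smul_spanJoin (S := S) hg, mem_conj_smul] at hw
  obtain ⟨v, hv, r, hr, heq⟩ := h.exists_mul_of_mem_E_two hb (hb.spanJoin_le_E h.inc_three_two hw)
  have hvW := h.V_four_le_spanJoin hv
  have hv' : v ∈ S.lineCentralizer (P 3) (C 3) := ⟨hvW, mem_centralizer_iff.2 fun k hk =>
    hb.commute_lineSpan hk (h.V_four_le_lineSpan hv)⟩
  have hr' : r ∈ S.lineCentralizer (P 3) (C 2) := by
    rw [← h.spanJoin_inf_R_eq hb]
    exact ⟨(mul_mem_cancel_left hvW).1 (heq ▸ hw), hr⟩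
  refine ⟨g * v * g⁻¹, ?_, g * r * g⁻¹, ?_, ?_⟩
  · rw [lineCentralizer_smul hg]; exact conj_mem_conj_smul hv'
  · rw [lineCentralizer_smul hg]; exact conj_mem_conj_smul hr'
  · rw [conj_mul, ← heq]; group

theorem not_flagCommutator_le :
    ¬ S.flagCommutator (P 2) (C 2) ≤ S.flagCommutatorMeet (P 2) (P 3) (C 2) := fun hle =>
  S.not_commutator_le_Z h.inc_two_two (h.path.right 1 (by norm_num))
    (h.line_ne_succ hb (by norm_num) (i := 1) (by norm_num)).symm
    ((hle.trans inf_le_right).trans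
      ((h.backward hb).flagCommutator_le_Z hb (h.path.right 1 (by norm_num))))

theorem centralizerModulo_le_R : centralizerModulo (S.spanJoin (P 3))
    (S.flagCommutatorMeet (P 2) (P 3) (C 2))
    (h.spanJoin_le_normalizer_flagCommutatorMeet hb) ≤ S.R (P 2) := by
  by_contra hYR
  have hYE := (centralizerModulo_le (h.spanJoin_le_normalizer_flagCommutatorMeet hb)).trans
    (hb.spanJoin_le_E h.inc_three_two)
  have hconj (g : G) (hgP : g • P 3 = P 3) (hgC : g • C 2 = C 2) :
      conj g • S.flagCommutatorMeet (P 2) (P 3) (C 2) =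
        S.flagCommutatorMeet (P 2) (P 3) (C 2) := by
    have hcomm : ⁅S.lineSpan (C 2), S.meetCentralizer (P 3)⁆ = S.flagCommutator (P 2) (C 2) :=
      h.forward.commutator_lineSpan_meetCentralizer hb h.inc_three_two
    rw [flagCommutatorMeet, ← hcomm, smul_inf, ← S.flagCommutator_smul g, conj_smul_commutator,
      ← S.lineSpan_smul, ← S.meetCentralizer_smul, hgP, hgC]
  have hsup := S.sup_R_eq_E h.inc_three_two h.inc_two_two hYE (fun g hgP hgC =>
    conj_smul_centralizerModulo _ (conj_smul_spanJoin hgP) (hconj g hgP hgC)) hYR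
  refine h.not_flagCommutator_le hb ?_
  rw [flagCommutator, commutator_eq_of_forall_exists_mul (A := S.V (P 2)) hYE fun c hc => ?_,
    commutator_comm, commutator_le]
  · exact fun y hy v hv => hy.2 v (h.V_two_le_spanJoin hv)
  · rw [← hsup] at hc
    obtain ⟨y, hy, r, hr, rfl⟩ :=
      exists_mul_of_mem_sup (hYE.trans (E_le_normalizer_R h.inc_two_two)) hc
    exact ⟨y, hy, r, fun v hv => S.commute_V_R hv hr, rfl⟩

theorem centralizerModulo_le_lineCentralizer {D} (hD : S.Inc (P 3) D) :
    centralizerModulo (S.spanJoin (P 3)) (S.flagCommutatorMeet (P 2) (P 3) (C 2))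
      (h.spanJoin_le_normalizer_flagCommutatorMeet hb) ≤ S.lineCentralizer (P 3) D := by
  obtain ⟨e, heP, rfl, heκ⟩ := h.exists_smul_line_two_eq hb hD
  rw [lineCentralizer_smul heP, ← conj_smul_centralizerModulo _ (conj_smul_spanJoin heP) heκ,
    pointwise_smul_le_pointwise_smul_iff, ← h.spanJoin_inf_R_eq hb]
  exact le_inf (centralizerModulo_le _) (h.centralizerModulo_le_R hb)

theorem mul_self_mem_flagCommutatorMeet [Finite G] {w : G} (hw : w ∈ S.spanJoin (P 3)) :
    w * w ∈ S.flagCommutatorMeet (P 2) (P 3) (C 2) :=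
  mul_self_mem_of_card_eq (N := fun D : {D // S.Inc (P 3) D} => S.lineCentralizer (P 3) D)
    (h.spanJoin_le_normalizer_flagCommutatorMeet hb) (S.card_lines (P 3)) (fun _ => inf_le_left)
    (fun D => h.relIndex_lineCentralizer hb D.2)
    (fun D D' hne _ => h.exists_mul_lineCentralizer hb D.2 D'.2 (Subtype.coe_injective.ne hne))
    (fun D _ => h.mul_self_mem_of_mem_lineCentralizer hb D.2)
    (fun D => h.commutator_lineCentralizer_le hb D.2)
    (fun D => h.centralizerModulo_le_lineCentralizer hb D.2) hw

theorem false_of_two [Finite G] : False := by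
  refine h.not_flagCommutator_le hb ?_
  have hcomm : S.flagCommutator (P 2) (C 2) = ⁅S.V (P 2), S.V (P 4)⁆ := by
    simpa only [Nat.reduceAdd] using h.forward.isCriticalPath_zero.flagCommutator_zero_eq hb
  rw [hcomm, commutator_le]
  intro v hv v' hv'
  have hvW := h.V_two_le_spanJoin hv
  have hvW' := h.V_four_le_spanJoin hv'
  exact commutatorElement_mem_of_mul_self_mem (h.mul_self_mem_flagCommutatorMeet hb hvW)
    (h.mul_self_mem_flagCommutatorMeet hb hvW')
    (h.mul_self_mem_flagCommutatorMeet hb (mul_mem hvW hvW'))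
    (h.spanJoin_le_normalizer_flagCommutatorMeet hb hvW')

end LengthTwo

end IsCriticalChain

theorem exists_inc (p : Pt) : ∃ D, S.Inc p D := by
  have hcard : 0 < Nat.card {D // S.Inc p D} := S.card_lines p ▸ S.q.succ_pos
  obtain ⟨⟨D, hD⟩⟩ := (Nat.card_pos_iff.1 hcard).1
  exact ⟨D, hD⟩

theorem exists_isPath (p p' : Pt) : ∃ k P C, S.IsPath k P C ∧ P 0 = p ∧ P k = p' := by
  induction S.connected p p' using Relation.ReflTransGen.head_induction_on with
  | refl =>
    obtain ⟨D, -⟩ := exists_inc (S := S) p'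
    exact ⟨0, fun _ => p', fun _ => D, ⟨nofun, nofun⟩, rfl, rfl⟩
  | head hab _ ih =>
    obtain ⟨k, P, C, hP, rfl, rfl⟩ := ih
    obtain ⟨D, hD, hD'⟩ := hab
    exact ⟨k + 1, _, _, hP.cons hD hD', rfl, rfl⟩

theorem exists_isPath_not_V_le_R [Nonempty Pt] :
    ∃ k P C, S.IsPath k P C ∧ ¬ S.V (P 0) ≤ S.R (P k) := by
  by_contra! hall
  obtain ⟨p⟩ := ‹Nonempty Pt›
  obtain ⟨D, hD⟩ := exists_inc (S := S) p
  have hconj (g : G) : conj g • (⨅ p, S.R p) = ⨅ p, S.R p := by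
    rw [conj_smul_iInf]
    exact (toPerm g).iInf_congr fun p => S.R_smul g p
  have hbot := S.eq_bot_of_le_normalizer hD ((iInf_le _ p).trans (S.R_le_E hD))
    (fun g _ => hconj g) fun _ _ g _ => mem_normalizer_iff_conj_smul_eq.2 (hconj g)
  refine V_ne_bot hD (eq_bot_iff.2 (hbot ▸ le_iInf fun p' => ?_))
  obtain ⟨k, P, C, hP, rfl, rfl⟩ := exists_isPath (S := S) p p'
  exact hall k P C hP

variable (S) in
/-- A shortest path violating `V (P 0) ≤ R (P k)` would be critical of length at least `2`. -/
theorem exists_collinear_not_V_le_R [Finite G] [Nonempty Pt] :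
    ∃ p p' C, S.Inc p C ∧ S.Inc p' C ∧ ¬ S.V p ≤ S.R p' := by
  classical
  by_contra! hcollinear
  have hex := exists_isPath_not_V_le_R (S := S)
  obtain ⟨P, C, hP, hcrit⟩ := Nat.find_spec hex
  set b := Nat.find hex with hbdef
  have hmin (k) (hk : k < b) (P C) (hP : S.IsPath k P C) : S.V (P 0) ≤ S.R (P k) := by
    by_contra hcon
    exact Nat.find_min hex hk ⟨P, C, hP, hcon⟩
  have hb2 : 2 ≤ b := by
    by_contra! hlt
    interval_cases b
    · exact hcrit (S.V_le_R _)
    · exact hcrit (hcollinear _ _ _ (hP.left 0 one_pos) (hP.right 0 one_pos))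
  have hb : S.NoCriticalBelow b := ⟨hb2, hmin⟩
  have hpath : S.IsCriticalPath b P C := ⟨hP, hcrit⟩
  obtain ⟨P', C', hchain⟩ := hpath.exists_isCriticalChain hb (b + 1)
  rcases hb2.eq_or_lt with h2 | h3
  · rw [← h2] at hb hchain
    exact hchain.false_of_two hb
  · exact IsCriticalChain.not_three_le hb h3 (by rwa [two_mul, add_assoc])

end LocalGeometry

/-! ### Coset geometries -/

section CosetGeometry

variable {G : Type*} [Group G]

/-- The conjugate of `K` by a representative of the coset `p` of `H`. It depends on `p` only when
`H` normalises `K`, which is the only case in which it is used. -/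
noncomputable def conjCoset {H : Subgroup G} (K : Subgroup G) (p : G ⧸ H) : Subgroup G :=
  conj (Quotient.out p) • K

/-- Incidence of cosets: a coset of `H` and a coset of `N` are incident when they meet. -/
def CosetInc (H N : Subgroup G) (p : G ⧸ H) (C : G ⧸ N) : Prop :=
  ∃ g : G, p = QuotientGroup.mk g ∧ C = QuotientGroup.mk g

section Cosets

variable {H K N : Subgroup G} {a g : G}

theorem conjCoset_mk (h : H ≤ normalizer K) (a : G) :
    conjCoset K (a : G ⧸ H) = conj a • K := by
  obtain ⟨⟨k, hk⟩, hout⟩ := QuotientGroup.mk_out_eq_mul H a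
  rw [conjCoset, hout, conj_mul_smul, mem_normalizer_iff_conj_smul_eq.1 (h hk)]

theorem conjCoset_smul (h : H ≤ normalizer K) (g : G) (p : G ⧸ H) :
    conjCoset K (g • p) = conj g • conjCoset K p := by
  induction p using QuotientGroup.induction_on with
  | H a => rw [Quotient.smul_coe, smul_eq_mul, conjCoset_mk h, conjCoset_mk h, conj_mul_smul]

theorem mk_eq_mk_mul_iff : (a : G ⧸ H) = (a * g : G) ↔ g ∈ H := by
  rw [QuotientGroup.eq, inv_mul_cancel_left]

theorem smul_mk_eq_self_iff : g • (a : G ⧸ H) = a ↔ g ∈ conj a • H := by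
  rw [eq_comm, Quotient.smul_coe, smul_eq_mul, QuotientGroup.eq, mem_conj_smul, mul_assoc]

theorem cosetInc_mk_left_iff {C : G ⧸ N} :
    CosetInc H N (a : G ⧸ H) C ↔ ∃ h ∈ H, C = QuotientGroup.mk (a * h) := by
  constructor
  · rintro ⟨b, hab, hC⟩
    exact ⟨a⁻¹ * b, QuotientGroup.eq.1 hab, by rw [mul_inv_cancel_left, hC]⟩
  · rintro ⟨h, hh, rfl⟩
    exact ⟨a * h, mk_eq_mk_mul_iff.2 hh, rfl⟩

theorem CosetInc.symm {p : G ⧸ H} {C : G ⧸ N} (h : CosetInc H N p C) : CosetInc N H C p :=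
  h.imp fun _ => And.symm

theorem cosetInc_mk_right_iff {p : G ⧸ H} :
    CosetInc H N p (a : G ⧸ N) ↔ ∃ n ∈ N, p = QuotientGroup.mk (a * n) :=
  ⟨fun h => cosetInc_mk_left_iff.1 h.symm, fun h => (cosetInc_mk_left_iff.2 h).symm⟩

theorem CosetInc.exists_smul_eq {p p' : G ⧸ H} {C C' : G ⧸ N} (h : CosetInc H N p C)
    (h' : CosetInc H N p' C') : ∃ g : G, g • p = p' ∧ g • C = C' := by
  obtain ⟨a, rfl, rfl⟩ := h
  obtain ⟨b, rfl, rfl⟩ := h'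
  exact ⟨b * a⁻¹, by simp only [Quotient.smul_coe, smul_eq_mul, inv_mul_cancel_right, and_self]⟩

variable (H N) in
theorem card_cosetInc (p : G ⧸ H) : Nat.card {C // CosetInc H N p C} = N.relIndex H := by
  obtain ⟨a, rfl⟩ := QuotientGroup.mk_surjective p
  have heq (h h' : H) : ((a * h : G) : G ⧸ N) = (a * h' : G) ↔
      (h : H ⧸ N.subgroupOf H) = h' := by
    rw [QuotientGroup.eq, QuotientGroup.eq, mem_subgroupOf]
    simp only [mul_inv_rev, mul_assoc, inv_mul_cancel_left, coe_mul, coe_inv]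
  let f : (H ⧸ N.subgroupOf H) → {C // CosetInc H N (a : G ⧸ H) C} :=
    Quotient.lift (fun h : H => ⟨_, cosetInc_mk_left_iff.2 ⟨h, h.2, rfl⟩⟩)
      fun h h' hh => Subtype.ext ((heq h h').2 (Quotient.sound hh))
  refine (Nat.card_congr (Equiv.ofBijective f ⟨fun x y hxy => ?_, ?_⟩)).symm
  · obtain ⟨h, rfl⟩ := QuotientGroup.mk_surjective x
    obtain ⟨h', rfl⟩ := QuotientGroup.mk_surjective y
    exact (heq h h').1 (congrArg Subtype.val hxy)
  · rintro ⟨C, hC⟩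
    obtain ⟨h, hh, rfl⟩ := cosetInc_mk_left_iff.1 hC
    exact ⟨QuotientGroup.mk ⟨h, hh⟩, rfl⟩

theorem reflTransGen_cosetInc (hgen : H ⊔ N = ⊤) (p p' : G ⧸ H) :
    Relation.ReflTransGen (fun a b => ∃ C, CosetInc H N a C ∧ CosetInc H N b C) p p' := by
  obtain ⟨a, rfl⟩ := QuotientGroup.mk_surjective p
  obtain ⟨b, rfl⟩ := QuotientGroup.mk_surjective p'
  suffices hmul : ∀ g ∈ closure (H ∪ N : Set G), ∀ a : G, Relation.ReflTransGen
      (fun a b => ∃ C, CosetInc H N a C ∧ CosetInc H N b C) (a : G ⧸ H) (a * g : G) by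
    simpa only [mul_inv_cancel_left] using
      hmul (a⁻¹ * b) (by rw [← sup_eq_closure, hgen]; exact mem_top _) a
  intro g hg
  induction hg using closure_induction with
  | mem g hg =>
    intro a
    obtain hg | hg := hg
    · rw [← mk_eq_mk_mul_iff.2 hg]
    · exact .single ⟨QuotientGroup.mk a, ⟨a, rfl, rfl⟩, cosetInc_mk_right_iff.2 ⟨g, hg, rfl⟩⟩
  | one => intro a; rw [mul_one]
  | mul x y _ _ hx hy => exact fun a => by simpa only [mul_assoc] using (hx a).trans (hy (a * x))
  | inv x _ hx =>
    intro a
    have hback := hx (a * x⁻¹)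
    rw [inv_mul_cancel_right] at hback
    have : Std.Symm fun a b : G ⧸ H => ∃ C, CosetInc H N a C ∧ CosetInc H N b C :=
      ⟨fun _ _ ⟨C, h, h'⟩ => ⟨C, h', h⟩⟩
    exact symm hback

end Cosets

/-- Subgroups `H` and `N` of `G`, with further subgroups `Z ≤ V ≤ R ≤ E` of `H ⊓ N`, whose coset
geometry is a `LocalGeometry`: `H` is the stabiliser of a point with subgroups `V` and `R`, and `N`
that of an incident line with subgroups `Z` and `E`. -/
structure Amalgam (H N E R V Z : Subgroup G) (q : ℕ) : Prop where
  two_le_q : 2 ≤ q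
  H_le_normalizer_R : H ≤ normalizer R
  H_le_normalizer_V : H ≤ normalizer V
  N_le_normalizer_E : N ≤ normalizer E
  N_le_normalizer_Z : N ≤ normalizer Z
  N_le_normalizer_inf : N ≤ normalizer ((H ⊓ N : Subgroup G) : Set G)
  E_le_H : E ≤ H
  E_le_N : E ≤ N
  exists_mul_inv_mul_mem : ∀ h ∈ H, h ∉ N → ∀ h' ∈ H, h' ∉ N → ∃ e ∈ E, (e * h)⁻¹ * h' ∈ N
  R_le_E : R ≤ E
  V_le_R : V ≤ R
  commute_V_R : ∀ v ∈ V, ∀ r ∈ R, Commute v r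
  mul_self_of_mem_V : ∀ v ∈ V, v * v = 1
  Z_le_V : Z ≤ V
  commute_Z_E : ∀ z ∈ Z, ∀ e ∈ E, Commute z e
  mem_Z_of_commute : ∀ t ∈ E, t ∉ R → ∀ v ∈ V, Commute v t → v ∈ Z
  relIndex_R : R.relIndex E = q
  relIndex_Z : Z.relIndex V = q
  eq_bot_of_le_normalizer : ∀ K ≤ E, N ≤ normalizer K → (∀ h ∈ H, conj h • E ≤ normalizer K) → K = ⊥
  sup_R_eq_E : ∀ K ≤ E, H ⊓ N ≤ normalizer K → ¬ K ≤ R → K ⊔ R = E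
  not_commutator_le_Z : ∀ h ∈ H, h ∉ N → ¬ ⁅V, E⁆ ≤ conj h • Z
  relIndex_N_H : N.relIndex H = q + 1
  sup_eq_top : H ⊔ N = ⊤

namespace Amalgam

variable {H N E R V Z : Subgroup G} {q : ℕ} (A : Amalgam H N E R V Z q)

include A

theorem exists_smul_line_eq {p : G ⧸ H} {C C' C'' : G ⧸ N} (hC : CosetInc H N p C)
    (hC' : CosetInc H N p C') (hC'' : CosetInc H N p C'') (hne' : C' ≠ C) (hne'' : C'' ≠ C) :
    ∃ e ∈ conjCoset E C, e • C' = C'' := by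
  obtain ⟨a, rfl, rfl⟩ := hC
  obtain ⟨h, hh, rfl⟩ := cosetInc_mk_left_iff.1 hC'
  obtain ⟨h', hh', rfl⟩ := cosetInc_mk_left_iff.1 hC''
  obtain ⟨e, he, hmem⟩ := A.exists_mul_inv_mul_mem h hh (hne'.symm ∘ mk_eq_mk_mul_iff.2)
    h' hh' (hne''.symm ∘ mk_eq_mk_mul_iff.2)
  refine ⟨a * e * a⁻¹, ?_, ?_⟩
  · rw [conjCoset_mk A.N_le_normalizer_E]
    exact conj_mem_conj_smul he
  · rw [Quotient.smul_coe, smul_eq_mul, QuotientGroup.eq]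
    convert hmem using 1
    group

theorem conjCoset_eq_bot {p : G ⧸ H} {D : G ⧸ N} {K : Subgroup G} (hD : CosetInc H N p D)
    (hK : K ≤ conjCoset E D) (hstab : ∀ g : G, g • D = D → conj g • K = K)
    (hE : ∀ D', CosetInc H N p D' → conjCoset E D' ≤ normalizer K) : K = ⊥ := by
  obtain ⟨a, rfl, rfl⟩ := hD
  rw [conjCoset_mk A.N_le_normalizer_E, subset_pointwise_smul_iff, ← map_inv] at hK
  suffices hbot : conj a⁻¹ • K = ⊥ by
    rw [← conj_smul_conj_inv_smul a K, hbot, smul_bot]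
  refine A.eq_bot_of_le_normalizer _ hK ?_ fun h hh => ?_
  · rw [normalizer_conj_smul, map_inv, ← pointwise_smul_subset_iff]
    exact fun g hg => mem_normalizer_iff_conj_smul_eq.2 (hstab g (smul_mk_eq_self_iff.2 hg))
  · have := hE (QuotientGroup.mk (a * h)) (cosetInc_mk_left_iff.2 ⟨h, hh, rfl⟩)
    rwa [conjCoset_mk A.N_le_normalizer_E, conj_mul_smul, pointwise_smul_subset_iff, ← map_inv,
      ← normalizer_conj_smul] at this

theorem sup_conjCoset_eq {a j : G ⧸ H} {C : G ⧸ N} {K : Subgroup G} (ha : CosetInc H N a C)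
    (hj : CosetInc H N j C) (hK : K ≤ conjCoset E C)
    (hstab : ∀ g : G, g • a = a → g • C = C → conj g • K = K) (hKR : ¬ K ≤ conjCoset R j) :
    K ⊔ conjCoset R j = conjCoset E C := by
  obtain ⟨a, rfl, rfl⟩ := ha
  obtain ⟨n, hn, rfl⟩ := cosetInc_mk_right_iff.1 hj
  have hconj : conj (a * n) • (H ⊓ N) = conj a • (H ⊓ N) := by
    rw [conj_mul_smul, mem_normalizer_iff_conj_smul_eq.1 (A.N_le_normalizer_inf hn)]
  have hE : conj a • E = conj (a * n) • E := by
    rw [conj_mul_smul, mem_normalizer_iff_conj_smul_eq.1 (A.N_le_normalizer_E hn)]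
  rw [conjCoset_mk A.H_le_normalizer_R] at hKR ⊢
  rw [conjCoset_mk A.N_le_normalizer_E, hE] at hK ⊢
  rw [subset_pointwise_smul_iff, ← map_inv] at hK hKR
  rw [← A.sup_R_eq_E _ hK ?_ hKR, smul_sup, conj_smul_conj_inv_smul]
  rw [normalizer_conj_smul, map_inv, ← pointwise_smul_subset_iff, hconj, smul_inf]
  exact fun g hg => mem_normalizer_iff_conj_smul_eq.2
    (hstab g (smul_mk_eq_self_iff.2 hg.1) (smul_mk_eq_self_iff.2 hg.2))

theorem not_commutator_conjCoset_le {p : G ⧸ H} {C C' : G ⧸ N} (hC : CosetInc H N p C)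
    (hC' : CosetInc H N p C') (hne : C ≠ C') :
    ¬ ⁅conjCoset V p, conjCoset E C⁆ ≤ conjCoset Z C' := by
  obtain ⟨a, rfl, rfl⟩ := hC
  obtain ⟨h, hh, rfl⟩ := cosetInc_mk_left_iff.1 hC'
  rw [conjCoset_mk A.H_le_normalizer_V, conjCoset_mk A.N_le_normalizer_Z,
    conjCoset_mk A.N_le_normalizer_E, ← conj_smul_commutator, conj_mul_smul,
    pointwise_smul_le_pointwise_smul_iff]
  exact A.not_commutator_le_Z h hh (hne ∘ mk_eq_mk_mul_iff.2)

theorem mem_conjCoset_of_commute {p : G ⧸ H} {C : G ⧸ N} {t v : G} (hpC : CosetInc H N p C)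
    (ht : t ∈ conjCoset E C) (htR : t ∉ conjCoset R p) (hv : v ∈ conjCoset V p)
    (hvt : Commute v t) : v ∈ conjCoset Z C := by
  obtain ⟨a, rfl, rfl⟩ := hpC
  rw [conjCoset_mk A.N_le_normalizer_E, mem_conj_smul] at ht
  rw [conjCoset_mk A.H_le_normalizer_R, mem_conj_smul] at htR
  rw [conjCoset_mk A.H_le_normalizer_V, mem_conj_smul] at hv
  rw [conjCoset_mk A.N_le_normalizer_Z, mem_conj_smul]
  refine A.mem_Z_of_commute _ ht htR _ hv ?_
  simpa only [inv_inv] using (Commute.conj_iff a⁻¹).2 hvt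

/-- The coset geometry of an amalgam: points are the cosets of `H`, lines those of `N`. -/
noncomputable def geometry : LocalGeometry G (G ⧸ H) (G ⧸ N) where
  Inc := CosetInc H N
  R := conjCoset R
  V := conjCoset V
  E := conjCoset E
  Z := conjCoset Z
  q := q
  two_le_q := A.two_le_q
  inc_smul := by
    rintro g _ _ ⟨a, rfl, rfl⟩
    exact ⟨g * a, rfl, rfl⟩
  R_smul := conjCoset_smul A.H_le_normalizer_R
  V_smul := conjCoset_smul A.H_le_normalizer_V
  E_smul := conjCoset_smul A.N_le_normalizer_E
  Z_smul := conjCoset_smul A.N_le_normalizer_Z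
  flag_transitive := CosetInc.exists_smul_eq
  smul_line_eq := by
    rintro ⟨a⟩ e he
    replace he : e ∈ conj a • E := conjCoset_mk A.N_le_normalizer_E a ▸ he
    exact smul_mk_eq_self_iff.2 (pointwise_smul_le_pointwise_smul_iff.2 A.E_le_N he)
  smul_point_eq := by
    rintro _ e _ he ⟨a, rfl, rfl⟩
    rw [conjCoset_mk A.N_le_normalizer_E] at he
    exact smul_mk_eq_self_iff.2 (pointwise_smul_le_pointwise_smul_iff.2 A.E_le_H he)
  exists_smul_line_eq := A.exists_smul_line_eq
  R_le_E := by
    rintro _ _ ⟨a, rfl, rfl⟩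
    rw [conjCoset_mk A.N_le_normalizer_E, conjCoset_mk A.H_le_normalizer_R]
    exact pointwise_smul_le_pointwise_smul_iff.2 A.R_le_E
  V_le_R := fun p => pointwise_smul_le_pointwise_smul_iff.2 A.V_le_R
  commute_V_R := by
    rintro p _ _ ⟨v, hv, rfl⟩ ⟨r, hr, rfl⟩
    exact (A.commute_V_R v hv r hr).map (conj p.out)
  mul_self_of_mem_V := by
    rintro p _ ⟨v, hv, rfl⟩
    exact (map_mul (conj p.out) v v).symm.trans (by rw [A.mul_self_of_mem_V v hv, map_one])
  Z_le_V := by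
    rintro _ _ ⟨a, rfl, rfl⟩
    rw [conjCoset_mk A.H_le_normalizer_V, conjCoset_mk A.N_le_normalizer_Z]
    exact pointwise_smul_le_pointwise_smul_iff.2 A.Z_le_V
  commute_Z_E := by
    rintro C _ _ ⟨z, hz, rfl⟩ ⟨e, he, rfl⟩
    exact (A.commute_Z_E z hz e he).map (conj C.out)
  mem_Z_of_commute := A.mem_conjCoset_of_commute
  relIndex_R := by
    rintro _ _ ⟨a, rfl, rfl⟩
    rw [conjCoset_mk A.N_le_normalizer_E, conjCoset_mk A.H_le_normalizer_R,
      relIndex_pointwise_smul, A.relIndex_R]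
  relIndex_Z := by
    rintro _ _ ⟨a, rfl, rfl⟩
    rw [conjCoset_mk A.H_le_normalizer_V, conjCoset_mk A.N_le_normalizer_Z,
      relIndex_pointwise_smul, A.relIndex_Z]
  eq_bot_of_le_normalizer := A.conjCoset_eq_bot
  sup_R_eq_E := A.sup_conjCoset_eq
  not_commutator_le_Z := A.not_commutator_conjCoset_le
  card_lines := fun p => (card_cosetInc H N p).trans A.relIndex_N_H
  connected := reflTransGen_cosetInc A.sup_eq_top

theorem exists_not_V_le_conj_smul_R [Finite G] : ∃ n ∈ N, ¬ V ≤ conj n • R := by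
  obtain ⟨_, p', _, ⟨a, rfl, rfl⟩, hp', hVR⟩ := A.geometry.exists_collinear_not_V_le_R
  obtain ⟨n, hn, rfl⟩ := cosetInc_mk_right_iff.1 hp'
  refine ⟨n, hn, fun h => hVR ?_⟩
  change conjCoset V _ ≤ conjCoset R _
  rw [conjCoset_mk A.H_le_normalizer_V, conjCoset_mk A.H_le_normalizer_R, conj_mul_smul,
    pointwise_smul_le_pointwise_smul_iff]
  exact h

end Amalgam

end CosetGeometry

/-! ### Cores of finite groups -/

section Cores

variable {G : Type*} [Group G] {p : ℕ} {A K T : Subgroup G}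

/-- The subgroup `Ω₁(Z(K))` for the prime `2`: the central elements of `K` of order at most two. -/
def omegaCenter (K : Subgroup G) : Subgroup G where
  carrier := {v | v ∈ K ∧ (∀ k ∈ K, Commute v k) ∧ v * v = 1}
  one_mem' := ⟨one_mem _, fun k _ => Commute.one_left k, one_mul 1⟩
  mul_mem' := by
    rintro a b ⟨ha, hacomm, ha2⟩ ⟨hb, hbcomm, hb2⟩
    refine ⟨mul_mem ha hb, fun k hk => (hacomm k hk).mul_left (hbcomm k hk), ?_⟩
    rw [(hacomm b hb).symm.mul_mul_mul_comm, ha2, hb2, one_mul]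
  inv_mem' := by
    rintro a ⟨ha, hacomm, ha2⟩
    exact ⟨inv_mem ha, fun k hk => (hacomm k hk).inv_left, by rw [← mul_inv_rev, ha2, inv_one]⟩

theorem omegaCenter_le (K : Subgroup G) : omegaCenter K ≤ K :=
  fun _ h => h.1

theorem normalizer_le_normalizer_omegaCenter (K : Subgroup G) :
    normalizer K ≤ normalizer (omegaCenter K : Set G) := by
  rw [le_normalizer_iff]
  rintro g hg v ⟨hv, hcomm, hv2⟩
  refine ⟨conj_mem_of_mem_normalizer hg hv, fun k hk => ?_, ?_⟩
  · have := (Commute.conj_iff g).2 (hcomm _ (inv_conj_mem_of_mem_normalizer hg hk))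
    simpa [mul_assoc] using this
  · rw [conj_mul, hv2, mul_one, mul_inv_cancel]

theorem omegaCenter_ne_bot (hK : K ≠ ⊥) (h2 : IsPGroup 2 K) [Finite K] : omegaCenter K ≠ ⊥ := by
  have : Nontrivial K := (nontrivial_iff_ne_bot K).2 hK
  have := h2.center_nontrivial
  obtain ⟨k, hk0, hk⟩ := (h2.to_subgroup (center K)).nontrivial_iff_card.1 inferInstance
  obtain ⟨⟨⟨a, haK⟩, hacenter⟩, ha⟩ := exists_prime_orderOf_dvd_card' 2
    (show 2 ∣ Nat.card (center K) from hk ▸ dvd_pow_self _ hk0.ne')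
  rw [← orderOf_coe, ← orderOf_coe] at ha
  have hmem : a ∈ omegaCenter K := by
    refine ⟨haK, fun k hk => ?_, ?_⟩
    · exact (congrArg Subtype.val (mem_center_iff.1 hacenter ⟨k, hk⟩)).symm
    · rw [← pow_two, ← ha, pow_orderOf_eq_one]
  intro hbot
  rw [hbot, mem_bot] at hmem
  simp [hmem] at ha

/-- The `p`-core `O_p(K)`, the largest normal `p`-subgroup of `K`. -/
def pCore (p : ℕ) (K : Subgroup G) : Subgroup G :=
  sSup {T | T ≤ K ∧ K ≤ normalizer T ∧ IsPGroup p T}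

theorem le_pCore (hTK : T ≤ K) (hKT : K ≤ normalizer T) (hT : IsPGroup p T) : T ≤ pCore p K :=
  le_sSup ⟨hTK, hKT, hT⟩

theorem pCore_le (p : ℕ) (K : Subgroup G) : pCore p K ≤ K :=
  sSup_le fun _ hT => hT.1

theorem isPGroup_pCore (p : ℕ) (K : Subgroup G) : IsPGroup p (pCore p K) := by
  rintro ⟨a, ha⟩
  have hne : {T | T ≤ K ∧ K ≤ normalizer T ∧ IsPGroup p T}.Nonempty :=
    ⟨⊥, bot_le, le_top.trans_eq (normalizer_eq_top ⊥).symm, IsPGroup.of_bot⟩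
  have haCore := ha
  rw [pCore, mem_sSup_of_directedOn hne] at haCore
  · obtain ⟨T, ⟨-, -, hT⟩, haT⟩ := haCore
    obtain ⟨k, hk⟩ := hT ⟨a, haT⟩
    exact ⟨k, Subtype.ext (congrArg Subtype.val hk :)⟩
  · rintro S ⟨hSK, hKS, hS⟩ T ⟨hTK, hKT, hT⟩
    exact ⟨S ⊔ T, ⟨sup_le hSK hTK,
      (le_inf hKS hKT).trans (normalizer_inf_normalizer_le_normalizer_sup S T),
      hS.to_sup_of_normal_right' hT (hSK.trans hKT)⟩, le_sup_left, le_sup_right⟩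

theorem conj_smul_pCore_le (p : ℕ) (g : G) (K : Subgroup G) :
    conj g • pCore p K ≤ pCore p (conj g • K) := by
  rw [pointwise_smul_subset_iff]
  refine sSup_le fun T ⟨hTK, hKT, hT⟩ => ?_
  rw [← pointwise_smul_subset_iff]
  refine le_pCore (pointwise_smul_le_pointwise_smul_iff.2 hTK) ?_ (hT.map _)
  rw [normalizer_conj_smul]
  exact pointwise_smul_le_pointwise_smul_iff.2 hKT

theorem conj_smul_pCore (p : ℕ) (g : G) (K : Subgroup G) :
    conj g • pCore p K = pCore p (conj g • K) := by
  refine le_antisymm (conj_smul_pCore_le p g K) ?_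
  rw [subset_pointwise_smul_iff, ← map_inv]
  simpa only [conj_inv_smul_conj_smul] using conj_smul_pCore_le p g⁻¹ (conj g • K)

theorem normalizer_le_normalizer_pCore (p : ℕ) (K : Subgroup G) :
    normalizer K ≤ normalizer (pCore p K : Set G) := fun g hg => by
  rw [mem_normalizer_iff_conj_smul_eq] at hg ⊢
  rw [conj_smul_pCore, hg]

theorem le_normalizer_pCore (p : ℕ) (K : Subgroup G) : K ≤ normalizer (pCore p K) :=
  le_normalizer.trans (normalizer_le_normalizer_pCore p K)

theorem pCore_mono_of_le_normalizer (hTK : T ≤ K) (hKT : K ≤ normalizer T) :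
    pCore p T ≤ pCore p K :=
  le_pCore ((pCore_le p T).trans hTK) (hKT.trans (normalizer_le_normalizer_pCore p T))
    (isPGroup_pCore p T)

/-- The last nontrivial term of the derived series. -/
theorem exists_abelian_le_normalizer_of_isSolvable [Group.IsSolvable K] (hK : K ≠ ⊥) :
    ∃ A ≤ K, A ≠ ⊥ ∧ K ≤ normalizer A ∧ ∀ a ∈ A, ∀ b ∈ A, Commute a b := by
  classical
  have hsolv := (inferInstance : Group.IsSolvable K).solvable
  have : Nontrivial K := (nontrivial_iff_ne_bot K).2 hK
  obtain ⟨j, hj⟩ := Nat.exists_eq_succ_of_ne_zero (n := Nat.find hsolv) fun h0 =>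
    top_ne_bot ((derivedSeries_zero K).symm.trans (h0 ▸ Nat.find_spec hsolv))
  have hlast : ⁅derivedSeries K j, derivedSeries K j⁆ = ⊥ := by
    rw [← derivedSeries_succ, ← Nat.succ_eq_add_one, ← hj]
    exact Nat.find_spec hsolv
  refine ⟨(derivedSeries K j).map K.subtype, map_subtype_le _, ?_, ?_, ?_⟩
  · rw [Ne, map_eq_bot_iff_of_injective _ K.subtype_injective]
    exact Nat.find_min hsolv (hj ▸ Nat.lt_succ_self j)
  · rw [le_normalizer_iff]
    rintro m hm _ ⟨a, ha, rfl⟩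
    exact ⟨_, (derivedSeries_normal K j).conj_mem a ha ⟨m, hm⟩, rfl⟩
  · rintro _ ⟨a, ha, rfl⟩ _ ⟨b, hb, rfl⟩
    have hab : ⁅a, b⁆ = 1 := mem_bot.1 (hlast ▸ commutator_mem_commutator ha hb)
    exact (commutatorElement_eq_one_iff_commute.1 hab).map K.subtype

theorem exists_pCore_ne_bot_of_isSolvable [Finite K] [Group.IsSolvable K] (hK : K ≠ ⊥) :
    ∃ p : ℕ, p.Prime ∧ pCore p K ≠ ⊥ := by
  obtain ⟨A, hAK, hA, hKA, hcomm⟩ := exists_abelian_le_normalizer_of_isSolvable hK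
  have : Finite A := Finite.Set.subset (K : Set G) hAK
  obtain ⟨p, hp, hdvd⟩ := Nat.exists_prime_and_dvd (mt card_eq_one.1 hA)
  have : Fact p.Prime := ⟨hp⟩
  obtain ⟨a, ha⟩ := exists_prime_orderOf_dvd_card' p hdvd
  let T : Subgroup G :=
    { carrier := {a | a ∈ A ∧ a ^ p = 1}
      one_mem' := ⟨one_mem _, one_pow _⟩
      mul_mem' := fun ⟨ha, hap⟩ ⟨hb, hbp⟩ =>
        ⟨mul_mem ha hb, by rw [(hcomm _ ha _ hb).mul_pow, hap, hbp, one_mul]⟩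
      inv_mem' := fun ⟨ha, hap⟩ => ⟨inv_mem ha, by rw [inv_pow, hap, inv_one]⟩ }
  have hT : T ≤ pCore p K := by
    refine le_pCore (fun a h => hAK h.1) ?_ ?_
    · rw [le_normalizer_iff]
      rintro m hm t ⟨ht, htp⟩
      exact ⟨conj_mem_of_mem_normalizer (hKA hm) ht,
        by rw [conj_pow, htp, mul_one, mul_inv_cancel]⟩
    · rintro ⟨t, -, htp⟩
      exact ⟨1, Subtype.ext (by rw [pow_one]; exact htp)⟩
  refine ⟨p, hp, fun hbot => ?_⟩
  have haT : (a : G) ∈ T := ⟨a.2, by rw [← ha, ← orderOf_coe, pow_orderOf_eq_one]⟩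
  have ha1 : a = 1 := Subtype.ext (mem_bot.1 (hbot ▸ hT haT))
  rw [ha1, orderOf_one] at ha
  exact hp.one_lt.ne ha

end Cores

/-! ### Permutation groups -/

section PermutationGroups

variable {Ω : Type*} {s : Set Ω} {M T : Subgroup (Perm Ω)} {a b c d j : Ω}

theorem swap_mem_fixingSubgroup [DecidableEq Ω] (ha : a ∉ s) (hb : b ∉ s) :
    swap a b ∈ fixingSubgroup (Perm Ω) s := by
  rw [mem_fixingSubgroup_iff]
  intro x hx
  exact Equiv.swap_apply_of_ne_of_ne (ne_of_mem_of_not_mem hx ha) (ne_of_mem_of_not_mem hx hb)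

theorem apply_notMem_of_mem_fixingSubgroup {σ : Perm Ω} (hσ : σ ∈ fixingSubgroup (Perm Ω) s)
    (ha : a ∉ s) : σ a ∉ s := fun h =>
  ha (σ.injective ((mem_fixingSubgroup_iff _).1 hσ _ h) ▸ h)

theorem exists_apply_ne_of_mem_fixingSubgroup {σ : Perm Ω} (hσ : σ ∈ fixingSubgroup (Perm Ω) s)
    (h1 : σ ≠ 1) : ∃ a ∉ s, σ a ≠ a := by
  obtain ⟨a, ha⟩ := not_forall.1 (mt Equiv.ext h1)
  exact ⟨a, fun has => ha ((mem_fixingSubgroup_iff _).1 hσ a has), ha⟩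

theorem fixingSubgroup_le_of_swap_mem [DecidableEq Ω]
    (hM : fixingSubgroup (Perm Ω) (insert j s) ≤ M) (hj : j ∉ s) (hc : c ∉ s) (hcj : c ≠ j)
    (hswap : swap j c ∈ M) : fixingSubgroup (Perm Ω) s ≤ M := by
  intro σ hσ
  by_cases hσj : σ j = j
  · exact hM (by rw [SubMulAction.mem_fixingSubgroup_insert_iff]; exact ⟨hσj, hσ⟩)
  have hσjs : σ j ∉ s := apply_notMem_of_mem_fixingSubgroup hσ hj
  have hmove : swap c (σ j) ∈ M := hM (swap_mem_fixingSubgroup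
    (by simp [hcj, hc]) (by simp [hσj, hσjs]))
  have hswap' : swap j (σ j) ∈ M := by
    have := mul_mem (mul_mem hmove hswap) (inv_mem hmove)
    rwa [← Equiv.swap_apply_apply, Equiv.swap_apply_left,
      Equiv.swap_apply_of_ne_of_ne hcj.symm (Ne.symm hσj)] at this
  have hfix : swap j (σ j) * σ ∈ M := hM <| by
    rw [SubMulAction.mem_fixingSubgroup_insert_iff]
    exact ⟨Equiv.swap_apply_right _ _, mul_mem (swap_mem_fixingSubgroup hj hσjs) hσ⟩
  simpa using mul_mem hswap' hfix

/-- If `t` maps `c` to `d`, then `swap j d` is obtained by conjugating `swap d c` with the conjugate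
of `t` under `swap j c`. -/
theorem fixingSubgroup_le_of_conj_mem {t : Perm Ω}
    (hM : fixingSubgroup (Perm Ω) (insert j s) ≤ M) (hj : j ∉ s)
    (ht : t ∈ fixingSubgroup (Perm Ω) (insert j s)) (ht1 : t ≠ 1)
    (hconj : ∀ σ ∈ fixingSubgroup (Perm Ω) s, σ * t * σ⁻¹ ∈ M) :
    fixingSubgroup (Perm Ω) s ≤ M := by
  classical
  obtain ⟨c, hc, htc⟩ := exists_apply_ne_of_mem_fixingSubgroup ht ht1
  have htcs := apply_notMem_of_mem_fixingSubgroup ht hc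
  obtain ⟨hcj, hcs⟩ := not_or.1 hc
  have htcj : t c ≠ j := fun h => htcs (Set.mem_insert_iff.2 (Or.inl h))
  have htj : t j = j := (mem_fixingSubgroup_iff _).1 ht j (Set.mem_insert _ _)
  refine fixingSubgroup_le_of_swap_mem hM hj hcs hcj ?_
  have hmem := hconj _ (swap_mem_fixingSubgroup hj hcs)
  set k := swap j c * t * (swap j c)⁻¹ with hk
  have hkj : k j = t c := by
    simp [hk, Equiv.swap_apply_of_ne_of_ne htcj htc]
  have hkc : k c = c := by simp [hk, htj]
  have := mul_mem (mul_mem (inv_mem hmem) (hM (swap_mem_fixingSubgroup htcs hc))) hmem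
  nth_rewrite 2 [← inv_inv k] at this
  rwa [← Equiv.swap_apply_apply, ← hkj, Perm.inv_eq_iff_eq.2 rfl,
    Perm.inv_eq_iff_eq.2 hkc.symm] at this

theorem apply_mem_of_mem_normalizer_fixingSubgroup {σ : Perm Ω}
    (hσ : σ ∈ normalizer (fixingSubgroup (Perm Ω) s : Set (Perm Ω))) (hs : sᶜ.Nontrivial)
    (ha : a ∈ s) : σ a ∈ s := by
  classical
  by_contra hσa
  obtain ⟨d, hd, hdσ⟩ := hs.exists_ne (σ a)
  have hfix := (mem_fixingSubgroup_iff _).1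
    (inv_conj_mem_of_mem_normalizer hσ (swap_mem_fixingSubgroup hσa hd)) a ha
  rw [Perm.smul_def, Perm.mul_apply, Perm.mul_apply, Equiv.swap_apply_left,
    Perm.inv_eq_iff_eq] at hfix
  exact hdσ hfix

theorem exists_mem_fixingSubgroup_apply_eq (hab : a ≠ b) (hcd : c ≠ d) (ha : a ∉ s) (hb : b ∉ s)
    (hc : c ∉ s) (hd : d ∉ s) : ∃ σ ∈ fixingSubgroup (Perm Ω) s, σ a = c ∧ σ b = d := by
  classical
  have hb' : swap a c b ∉ s :=
    apply_notMem_of_mem_fixingSubgroup (swap_mem_fixingSubgroup ha hc) hb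
  have hne : swap a c b ≠ c := by
    rw [Ne, Equiv.swap_apply_eq_iff, Equiv.swap_apply_right]
    exact hab.symm
  refine ⟨swap (swap a c b) d * swap a c,
    mul_mem (swap_mem_fixingSubgroup hb' hd) (swap_mem_fixingSubgroup ha hc), ?_, ?_⟩
  · rw [Perm.mul_apply, Equiv.swap_apply_left, Equiv.swap_apply_of_ne_of_ne hne.symm hcd]
  · rw [Perm.mul_apply, Equiv.swap_apply_left]

theorem exists_mem_apply_eq_of_le_normalizer (hT : T ≤ fixingSubgroup (Perm Ω) s)
    (hnorm : fixingSubgroup (Perm Ω) s ≤ normalizer T) (hT1 : T ≠ ⊥) (ha : a ∉ s) (hb : b ∉ s) :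
    ∃ t ∈ T, t a = b := by
  by_cases hab : a = b
  · exact ⟨1, one_mem _, hab⟩
  obtain ⟨⟨t, ht⟩, ht1⟩ := T.ne_bot_iff_exists_ne_one.1 hT1
  obtain ⟨c, hc, htc⟩ := exists_apply_ne_of_mem_fixingSubgroup (hT ht) (by simpa using ht1)
  obtain ⟨σ, hσ, hσc, hσtc⟩ := exists_mem_fixingSubgroup_apply_eq (Ne.symm htc) hab hc
    (apply_notMem_of_mem_fixingSubgroup (hT ht) hc) ha hb
  refine ⟨_, conj_mem_of_mem_normalizer (hnorm hσ) ht, ?_⟩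
  rw [Perm.mul_apply, Perm.mul_apply, Perm.inv_eq_iff_eq.2 hσc.symm, hσtc]

theorem orbit_eq_compl_of_le_normalizer (hT : T ≤ fixingSubgroup (Perm Ω) s)
    (hnorm : fixingSubgroup (Perm Ω) s ≤ normalizer T) (hT1 : T ≠ ⊥) (ha : a ∉ s) :
    orbit T a = sᶜ := by
  ext b
  refine ⟨?_, fun hb => ?_⟩
  · rintro ⟨t, rfl⟩
    exact apply_notMem_of_mem_fixingSubgroup (hT t.2) ha
  · obtain ⟨t, ht, rfl⟩ := exists_mem_apply_eq_of_le_normalizer hT hnorm hT1 ha hb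
    exact ⟨⟨t, ht⟩, rfl⟩

theorem not_isThreeCycle_of_isPGroup_two [Fintype Ω] [DecidableEq Ω] {t : Perm Ω}
    (hT : IsPGroup 2 T) (ht : t ∈ T) : ¬ t.IsThreeCycle := by
  intro h3
  obtain ⟨k, hk⟩ := hT.exists_orderOf_dvd_pow ⟨t, ht⟩
  rw [orderOf_mk, h3.orderOf] at hk
  exact absurd (Nat.prime_three.dvd_of_dvd_pow hk) (by norm_num)

/-- An element of `T` with a fixed point outside `s` moves at most three points, so it is a
transposition, and then the product of two of its conjugates is a `3`-cycle. -/
theorem eq_one_of_isPGroup_two_of_apply_eq [Finite Ω] (hs : sᶜ.ncard ≤ 4)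
    (hT : T ≤ fixingSubgroup (Perm Ω) s)
    (hnorm : fixingSubgroup (Perm Ω) s ≤ normalizer T) (h2 : IsPGroup 2 T) {t : Perm Ω} (ht : t ∈ T)
    (hc : c ∉ s) (htc : t c = c) : t = 1 := by
  classical
  have := Fintype.ofFinite Ω
  have hsupp : t.support.card ≤ 3 := by
    have hsub : (t.support : Set Ω) ⊆ sᶜ \ {c} := fun d hd =>
      ⟨fun hds => Perm.mem_support.1 hd ((mem_fixingSubgroup_iff _).1 (hT ht) d hds),
        fun hdc => Perm.mem_support.1 hd (hdc ▸ htc)⟩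
    have hle := Set.ncard_le_ncard hsub
    rw [Set.ncard_coe_finset, Set.ncard_sdiff_singleton_of_mem hc] at hle
    omega
  have hnot3 := fun u hu => not_isThreeCycle_of_isPGroup_two (T := T) (t := u) h2 hu
  by_contra ht1
  have hcard2 : t.support.card = 2 := by
    have := Perm.one_lt_card_support_of_ne_one ht1
    have := mt card_support_eq_three_iff.1 (hnot3 t ht)
    omega
  obtain ⟨d, f, hdf, rfl⟩ := Perm.card_support_eq_two.1 hcard2
  have hd : d ∉ s := fun h => hdf.symm
    ((Equiv.swap_apply_left d f).symm.trans ((mem_fixingSubgroup_iff _).1 (hT ht) d h))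
  have hcd : c ≠ d := by rintro rfl; exact hdf (by simpa using htc.symm)
  have hcf : c ≠ f := by rintro rfl; exact hdf (by simpa using htc)
  have hconj := conj_mem_of_mem_normalizer (hnorm (swap_mem_fixingSubgroup hc hd)) ht
  rw [← Equiv.swap_apply_apply, Equiv.swap_apply_right,
    Equiv.swap_apply_of_ne_of_ne hcf.symm hdf.symm] at hconj
  refine hnot3 _ (mul_mem ht hconj) ?_
  rw [Equiv.swap_comm d f, Equiv.swap_comm c f]
  exact Perm.isThreeCycle_swap_mul_swap_same hdf.symm hcf.symm hcd.symm

theorem card_eq_of_isPGroup_two [Finite Ω] (hs : sᶜ.ncard ≤ 4) (hs0 : sᶜ.Nonempty)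
    (hT : T ≤ fixingSubgroup (Perm Ω) s) (hnorm : fixingSubgroup (Perm Ω) s ≤ normalizer T)
    (hT1 : T ≠ ⊥) (h2 : IsPGroup 2 T) : Nat.card T = sᶜ.ncard := by
  obtain ⟨a, ha⟩ := hs0
  have hstab : stabilizer T a = ⊥ := (eq_bot_iff_forall _).2 fun t hta =>
    Subtype.ext (eq_one_of_isPGroup_two_of_apply_eq hs hT hnorm h2 t.2 ha hta)
  rw [← orbit_eq_compl_of_le_normalizer hT hnorm hT1 ha, ← index_stabilizer, hstab, index_bot]

theorem eq_two_of_isPGroup_of_even_ncard [Finite Ω] {p : ℕ} [hp : Fact p.Prime] (hs : Even sᶜ.ncard)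
    (hs0 : sᶜ.Nonempty) (hT : T ≤ fixingSubgroup (Perm Ω) s)
    (hnorm : fixingSubgroup (Perm Ω) s ≤ normalizer T) (hT1 : T ≠ ⊥) (hTp : IsPGroup p T) :
    p = 2 := by
  obtain ⟨a, ha⟩ := hs0
  obtain ⟨k, hk⟩ := IsPGroup.iff_card.1 hTp
  have hdvd := (stabilizer T a).index_dvd_card
  rw [index_stabilizer, orbit_eq_compl_of_le_normalizer hT hnorm hT1 ha, hk] at hdvd
  exact ((Nat.prime_dvd_prime_iff_eq Nat.prime_two hp.out).1
    (Nat.prime_two.dvd_of_dvd_pow (hs.two_dvd.trans hdvd))).symm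

theorem relIndex_fixingSubgroup_pair_singleton [Finite Ω] (hab : a ≠ b) :
    (fixingSubgroup (Perm Ω) {a, b}).relIndex (fixingSubgroup (Perm Ω) {b}) = Nat.card Ω - 1 := by
  classical
  have horbit : orbit (fixingSubgroup (Perm Ω) {b}) a = {b}ᶜ := by
    ext c
    refine ⟨?_, fun hc => ⟨⟨swap a c, swap_mem_fixingSubgroup hab hc⟩, Equiv.swap_apply_left a c⟩⟩
    rintro ⟨σ, rfl⟩
    exact apply_notMem_of_mem_fixingSubgroup σ.2 hab
  have hstab : (fixingSubgroup (Perm Ω) {a, b}).subgroupOf (fixingSubgroup (Perm Ω) {b}) =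
      stabilizer (fixingSubgroup (Perm Ω) {b}) a := by
    ext σ
    rw [mem_subgroupOf, SubMulAction.mem_fixingSubgroup_insert_iff]
    exact and_iff_left σ.2
  rw [relIndex, hstab, index_stabilizer, horbit, Set.ncard_compl, Set.ncard_singleton]

end PermutationGroups

/-! ### Subgroups with a symmetric quotient -/

/-- A subgroup `P` of `G` with an epimorphism onto the symmetric group of `Ω`, and two marked points
`o ≠ i` of `Ω`. In the application `P` is a vertex stabiliser, `Γ(x)` is identified with the ordered
pairs of elements of `Ω`, and `(o, i)` is the neighbour at the other end of a chosen arc. -/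
structure PermSection (G Ω : Type*) [Group G] where
  P : Subgroup G
  f : P →* Perm Ω
  f_surjective : Function.Surjective f
  o : Ω
  i : Ω
  i_ne_o : i ≠ o

namespace PermSection

variable {G Ω : Type*} [Group G] (S : PermSection G Ω) {K : Subgroup (Perm Ω)} {M T : Subgroup G}

/-- The preimage in `P` of a subgroup of the symmetric group, as a subgroup of `G`. -/
def pullback (K : Subgroup (Perm Ω)) : Subgroup G := (K.comap S.f).map S.P.subtype

/-- The image of `T ∩ P` in the symmetric group. -/
def image (T : Subgroup G) : Subgroup (Perm Ω) := (T.subgroupOf S.P).map S.f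

/-- The kernel of `P → Sym(Ω)`. -/
def Q : Subgroup G := S.pullback ⊥

/-- The stabiliser in `P` of the marked point `o`. -/
def H : Subgroup G := S.pullback (fixingSubgroup (Perm Ω) {S.o})

/-- The stabiliser in `P` of both marked points. -/
def B : Subgroup G := S.pullback (fixingSubgroup (Perm Ω) {S.i, S.o})

/-- The normaliser in `G` of the two-point stabiliser. -/
def N : Subgroup G := normalizer S.B

theorem coe_mem_pullback {g : S.P} : (g : G) ∈ S.pullback K ↔ S.f g ∈ K :=
  mem_map_iff_mem (subtype_injective S.P)

theorem mem_pullback {g : G} : g ∈ S.pullback K ↔ ∃ hg : g ∈ S.P, S.f ⟨g, hg⟩ ∈ K := by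
  refine ⟨?_, fun ⟨hg, h⟩ => S.coe_mem_pullback.2 h⟩
  rintro ⟨g, hg, rfl⟩
  exact ⟨g.2, hg⟩

theorem coe_mem_Q {g : S.P} : (g : G) ∈ S.Q ↔ S.f g = 1 := S.coe_mem_pullback.trans mem_bot

theorem pullback_le_P (K : Subgroup (Perm Ω)) : S.pullback K ≤ S.P := map_subtype_le _

theorem pullback_mono {K L : Subgroup (Perm Ω)} (h : K ≤ L) : S.pullback K ≤ S.pullback L :=
  map_mono (comap_mono h)

theorem Q_le_P : S.Q ≤ S.P := S.pullback_le_P _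

theorem H_le_P : S.H ≤ S.P := S.pullback_le_P _

theorem B_le_P : S.B ≤ S.P := S.pullback_le_P _

theorem Q_le_B : S.Q ≤ S.B := S.pullback_mono bot_le

theorem B_le_H : S.B ≤ S.H := S.pullback_mono <| fixingSubgroup_antitone _ _ <|
  Set.subset_insert _ _

theorem B_le_N : S.B ≤ S.N := le_normalizer

theorem P_le_normalizer_Q : S.P ≤ normalizer S.Q := by
  rw [le_normalizer_iff]
  rintro g hg _ ⟨k, hk, rfl⟩
  exact ⟨⟨g, hg⟩ * k * ⟨g, hg⟩⁻¹, (MonoidHom.normal_ker S.f).conj_mem k hk ⟨g, hg⟩, rfl⟩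

theorem pullback_le_iff (hQ : S.Q ≤ M) : S.pullback K ≤ M ↔ K ≤ S.image M := by
  refine ⟨fun h σ hσ => ?_, ?_⟩
  · obtain ⟨g, rfl⟩ := S.f_surjective σ
    exact ⟨g, h (S.coe_mem_pullback.2 hσ), rfl⟩
  · rintro h _ ⟨g, hg, rfl⟩
    obtain ⟨m, hm, hmg⟩ := h hg
    have hQg : ((m⁻¹ * g : S.P) : G) ∈ S.Q :=
      S.coe_mem_Q.2 (by rw [map_mul, map_inv, hmg, inv_mul_cancel])
    exact (mul_mem_cancel_left (inv_mem (show (m : G) ∈ M from hm))).1 (hQ hQg)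

theorem coe_mem_normalizer_pullback {g : S.P} :
    (g : G) ∈ normalizer (S.pullback K : Set G) ↔ S.f g ∈ normalizer K := by
  rw [← mem_subgroupOf, subgroupOf_normalizer_eq (S.pullback_le_P K), subgroupOf, pullback,
    comap_map_eq_self_of_injective (subtype_injective S.P),
    ← comap_normalizer_eq_of_surjective K S.f_surjective, mem_comap]

theorem pullback_top : S.pullback ⊤ = S.P := by
  rw [pullback, comap_top, ← MonoidHom.range_eq_map, range_subtype]

theorem image_le (hT : T ≤ S.pullback K) : S.image T ≤ K := by
  rintro _ ⟨g, hg, rfl⟩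
  exact S.coe_mem_pullback.1 (hT hg)

theorem image_eq_bot_iff (hT : T ≤ S.P) : S.image T = ⊥ ↔ T ≤ S.Q := by
  refine ⟨fun h t ht => ?_, fun h => le_bot_iff.1 (S.image_le h)⟩
  exact S.coe_mem_pullback.2 (h.le ⟨⟨t, hT ht⟩, ht, rfl⟩)

theorem le_normalizer_image (hT : S.pullback K ≤ normalizer T) :
    K ≤ normalizer (S.image T : Set (Perm Ω)) := by
  rw [le_normalizer_iff]
  rintro σ hσ _ ⟨t, ht, rfl⟩
  obtain ⟨g, rfl⟩ := S.f_surjective σ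
  refine ⟨g * t * g⁻¹, ?_, by simp only [map_mul, map_inv]⟩
  exact conj_mem_of_mem_normalizer (K := T) (hT (S.coe_mem_pullback.2 hσ)) ht

theorem isPGroup_image {p : ℕ} (hT : IsPGroup p T) : IsPGroup p (S.image T) :=
  hT.comap_subtype.map S.f

theorem relIndex_Q (hT : T ≤ S.P) : S.Q.relIndex T = Nat.card (S.image T) := by
  have hTP : T = (T.subgroupOf S.P).map S.P.subtype := (map_subgroupOf_eq_of_le hT).symm
  rw [hTP, Q, pullback, relIndex_map_map_of_injective _ _ (subtype_injective S.P), relIndex_comap,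
    relIndex_bot_left, ← hTP, image]

theorem conj_f_mem_image {g t : S.P} (h : (g * t * g⁻¹ : G) ∈ M) :
    S.f g * S.f t * (S.f g)⁻¹ ∈ S.image M :=
  ⟨g * t * g⁻¹, h, by simp only [map_mul, map_inv]⟩

theorem H_le_of_conj_mem (hB : S.B ≤ M) (hTB : T ≤ S.B) (hTQ : ¬ T ≤ S.Q)
    (h : ∀ g ∈ S.H, conj g • T ≤ M) : S.H ≤ M := by
  obtain ⟨_, ht, htQ⟩ := SetLike.not_le_iff_exists.1 hTQ
  obtain ⟨t, htB, rfl⟩ := hTB ht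
  rw [H, S.pullback_le_iff (S.Q_le_B.trans hB)]
  refine fixingSubgroup_le_of_conj_mem ((S.pullback_le_iff (S.Q_le_B.trans hB)).1 hB) S.i_ne_o
    htB (mt S.coe_mem_Q.2 htQ) fun σ hσ => ?_
  obtain ⟨g, rfl⟩ := S.f_surjective σ
  exact S.conj_f_mem_image (h g (S.coe_mem_pullback.2 hσ) (conj_mem_conj_smul ht))

theorem P_le_of_conj_mem (hB : S.B ≤ M) (hTB : T ≤ S.B) (hTQ : ¬ T ≤ S.Q)
    (h : ∀ g ∈ S.P, conj g • T ≤ M) : S.P ≤ M := by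
  have hH := S.H_le_of_conj_mem hB hTB hTQ fun g hg => h g (S.H_le_P hg)
  obtain ⟨_, ht, htQ⟩ := SetLike.not_le_iff_exists.1 hTQ
  obtain ⟨t, htB, rfl⟩ := hTB ht
  rw [← S.pullback_top, ← fixingSubgroup_empty (Perm Ω) Ω, S.pullback_le_iff (S.Q_le_B.trans hB)]
  refine fixingSubgroup_le_of_conj_mem (j := S.o) ?_ (Set.notMem_empty _) ?_
    (mt S.coe_mem_Q.2 htQ) fun σ _ => ?_
  · rw [LawfulSingleton.insert_empty_eq, ← S.pullback_le_iff (S.Q_le_B.trans hB)]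
    exact hH
  · rw [LawfulSingleton.insert_empty_eq]
    exact S.coe_mem_pullback.1 (S.B_le_H (S.coe_mem_pullback.2 htB))
  · obtain ⟨g, rfl⟩ := S.f_surjective σ
    exact S.conj_f_mem_image (h g g.2 (conj_mem_conj_smul ht))

/-- An element of `N` interchanges `o` and `i`, and `P` is generated by it and `H`. -/
theorem P_le_of_H_le_of_N_le (hH : S.H ≤ M) (hN : S.N ≤ M) : S.P ≤ M := by
  classical
  have hQ : S.Q ≤ M := (S.Q_le_B.trans S.B_le_H).trans hH
  obtain ⟨r, hr⟩ := S.f_surjective (swap S.o S.i)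
  have hrN : (r : G) ∈ S.N := by
    refine S.coe_mem_normalizer_pullback.2 ?_
    rw [mem_normalizer_iff_conj_smul_eq, hr]
    refine SubMulAction.fixingSubgroup_map_conj_eq ?_
    rw [← Set.image_smul, Set.image_pair, Perm.smul_def, Perm.smul_def, Equiv.swap_apply_left,
      Equiv.swap_apply_right, Set.pair_comm]
  rw [← S.pullback_top, ← fixingSubgroup_empty (Perm Ω) Ω, S.pullback_le_iff hQ]
  refine fixingSubgroup_le_of_swap_mem (j := S.o) ?_ (Set.notMem_empty _) (Set.notMem_empty _)
    S.i_ne_o ⟨r, hN hrN, hr⟩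
  rw [LawfulSingleton.insert_empty_eq, ← S.pullback_le_iff hQ]
  exact hH

/-- The action of the point stabiliser `H` on `Ω` through `P → Sym(Ω)`. -/
instance : MulAction S.H Ω := compHom Ω (S.f.comp (inclusion S.H_le_P))

variable {a b c d : Ω}

theorem f_mem_fixingSubgroup (h : S.H) :
    S.f ⟨h, S.H_le_P h.2⟩ ∈ fixingSubgroup (Perm Ω) {S.o} := S.coe_mem_pullback.1 h.2

theorem smul_o (h : S.H) : h • S.o = S.o :=
  (mem_fixingSubgroup_iff _).1 (S.f_mem_fixingSubgroup h) _ rfl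

theorem smul_ne_o (h : S.H) (ha : a ≠ S.o) : h • a ≠ S.o := fun hha =>
  ha (MulAction.injective h (hha.trans (S.smul_o h).symm))

theorem coe_mem_B_iff {h : S.H} : (h : G) ∈ S.B ↔ h • S.i = S.i := by
  have := S.coe_mem_pullback (g := ⟨h, S.H_le_P h.2⟩) (K := fixingSubgroup (Perm Ω) {S.i, S.o})
  rw [SubMulAction.mem_fixingSubgroup_insert_iff] at this
  exact this.trans (and_iff_left (S.f_mem_fixingSubgroup h))

theorem exists_smul_eq_swap [DecidableEq Ω] (ha : a ≠ S.o) (hb : b ≠ S.o) :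
    ∃ h : S.H, ∀ c, h • c = swap a b c := by
  obtain ⟨g, hg⟩ := S.f_surjective (swap a b)
  refine ⟨⟨g, S.coe_mem_pullback.2 (hg ▸ swap_mem_fixingSubgroup ha hb)⟩, fun c => ?_⟩
  exact DFunLike.congr_fun hg c

theorem exists_smul_i_eq (ha : a ≠ S.o) : ∃ h : S.H, h • S.i = a := by
  classical
  obtain ⟨h, hh⟩ := S.exists_smul_eq_swap S.i_ne_o ha
  exact ⟨h, (hh S.i).trans (Equiv.swap_apply_left _ _)⟩

theorem exists_mem_smul_eq (hTB : T ≤ S.B) (hBT : S.B ≤ normalizer T) (hTQ : ¬ T ≤ S.Q)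
    (hc : c ∉ ({S.i, S.o} : Set Ω)) (hd : d ∉ ({S.i, S.o} : Set Ω)) :
    ∃ t : S.H, (t : G) ∈ T ∧ t • c = d := by
  obtain ⟨_, ⟨t, ht, rfl⟩, htc⟩ := exists_mem_apply_eq_of_le_normalizer (S.image_le hTB)
    (S.le_normalizer_image hBT) (mt (S.image_eq_bot_iff (hTB.trans S.B_le_P)).1 hTQ) hc hd
  exact ⟨⟨t, S.B_le_H (hTB ht)⟩, ht, htc⟩

section Finite

variable [Finite Ω]

theorem ncard_compl_pair : ({S.i, S.o}ᶜ : Set Ω).ncard = Nat.card Ω - 2 := by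
  rw [Set.ncard_compl, Set.ncard_pair S.i_ne_o]

theorem exists_notMem_pair (h3 : 3 ≤ Nat.card Ω) : ∃ c, c ∉ ({S.i, S.o} : Set Ω) :=
  (Set.ncard_pos (s := {S.i, S.o}ᶜ)).1 (by rw [S.ncard_compl_pair]; omega)

theorem mem_Q_of_smul_eq (h6 : Nat.card Ω ≤ 6) (hTB : T ≤ S.B) (hBT : S.B ≤ normalizer T)
    (h2 : IsPGroup 2 T) {t : S.H} (ht : (t : G) ∈ T) (hc : c ∉ ({S.i, S.o} : Set Ω))
    (htc : t • c = c) : (t : G) ∈ S.Q := by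
  refine (S.coe_mem_Q (g := ⟨t, S.H_le_P t.2⟩)).2 ?_
  exact eq_one_of_isPGroup_two_of_apply_eq (by rw [S.ncard_compl_pair]; omega) (S.image_le hTB)
    (S.le_normalizer_image hBT) (S.isPGroup_image h2) ⟨_, ht, rfl⟩ hc htc

theorem relIndex_Q_of_isPGroup_two (h3 : 3 ≤ Nat.card Ω) (h6 : Nat.card Ω ≤ 6) (hTB : T ≤ S.B)
    (hBT : S.B ≤ normalizer T) (hTQ : ¬ T ≤ S.Q) (h2 : IsPGroup 2 T) :
    S.Q.relIndex T = Nat.card Ω - 2 := by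
  have hTP := hTB.trans S.B_le_P
  rw [S.relIndex_Q hTP, ← S.ncard_compl_pair]
  exact card_eq_of_isPGroup_two (by rw [S.ncard_compl_pair]; omega) (S.exists_notMem_pair h3)
    (S.image_le hTB) (S.le_normalizer_image hBT) (mt (S.image_eq_bot_iff hTP).1 hTQ)
    (S.isPGroup_image h2)

theorem eq_two_of_isPGroup {p : ℕ} [Fact p.Prime] (h3 : 3 ≤ Nat.card Ω) (heven : Even (Nat.card Ω))
    (hTB : T ≤ S.B) (hBT : S.B ≤ normalizer T) (hTQ : ¬ T ≤ S.Q) (hT : IsPGroup p T) : p = 2 := by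
  refine eq_two_of_isPGroup_of_even_ncard ?_ (S.exists_notMem_pair h3) (S.image_le hTB)
    (S.le_normalizer_image hBT) (mt (S.image_eq_bot_iff (hTB.trans S.B_le_P)).1 hTQ)
    (S.isPGroup_image hT)
  rw [S.ncard_compl_pair]
  exact heven.tsub even_two

theorem H_inf_N (h4 : 4 ≤ Nat.card Ω) : S.H ⊓ S.N = S.B := by
  refine le_antisymm ?_ (le_inf S.B_le_H S.B_le_N)
  rintro h ⟨hH, hN⟩
  lift h to S.H using hH
  have hmem : h • S.i ∈ ({S.i, S.o} : Set Ω) := by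
    refine apply_mem_of_mem_normalizer_fixingSubgroup ?_ ?_ (Set.mem_insert _ _)
    · exact (S.coe_mem_normalizer_pullback (g := ⟨h, S.H_le_P h.2⟩)).1 hN
    · rw [← Set.one_lt_ncard_iff_nontrivial, S.ncard_compl_pair]
      omega
  exact S.coe_mem_B_iff.2 (hmem.resolve_right (S.smul_ne_o h S.i_ne_o))

theorem relIndex_N_H (h4 : 4 ≤ Nat.card Ω) : S.N.relIndex S.H = Nat.card Ω - 1 := by
  rw [← inf_relIndex_left, S.H_inf_N h4, ← relIndex_fixingSubgroup_pair_singleton S.i_ne_o,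
    B, H, pullback, pullback, relIndex_map_map_of_injective _ _ (subtype_injective S.P),
    relIndex_comap, map_comap_eq_self_of_surjective S.f_surjective]

end Finite

end PermSection

/-! ### The local structure at an arc -/

/-- The local structure of a locally `L` pair at an arc: `P` is a vertex stabiliser, acting on its
neighbours through `Sym(Ω)`, `B` is the stabiliser of an arc `(x, y)`, and `e` interchanges `x` and
`y`. -/
structure LocalData (G Ω : Type*) [Group G] extends PermSection G Ω where
  e : G
  e_mem_N : e ∈ toPermSection.N
  mul_self_e_mem_P : e * e ∈ P
  eq_bot_of_le_normalizer : ∀ K ≤ P, P ≤ normalizer K → e ∈ normalizer K → K = ⊥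
  eq_top_of_le : ∀ M : Subgroup G, P ≤ M → e ∈ M → M = ⊤
  isSolvable_B : Group.IsSolvable toPermSection.B
  card_Ω : Nat.card Ω = 4 ∨ Nat.card Ω = 6

namespace LocalData

variable {G Ω : Type*} [Group G] (S : LocalData G Ω) {K M T : Subgroup G} {r t v : G}

/-- `O₂` of the arc stabiliser. -/
def E : Subgroup G := pCore 2 S.B

/-- `O₂` of the kernel `Q` of `P → Sym(Ω)`. -/
def R : Subgroup G := pCore 2 S.Q

/-- The central elements of `R` of order at most two, i.e. `Ω₁(Z(R))`. -/
def V : Subgroup G := omegaCenter S.R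

/-- The central elements of `E` of order at most two, i.e. `Ω₁(Z(E))`. -/
def Z : Subgroup G := omegaCenter S.E

/-- The index of `R` in `E`; `H` acts on `q + 1` points. -/
noncomputable def q (_ : LocalData G Ω) : ℕ := Nat.card Ω - 2

include S in
theorem finite_Ω : Finite Ω :=
  Nat.finite_of_card_ne_zero (by rcases S.card_Ω with h | h <;> rw [h] <;> norm_num)

include S in
theorem four_le_card : 4 ≤ Nat.card Ω := by have := S.card_Ω; omega

include S in
theorem card_le_six : Nat.card Ω ≤ 6 := by have := S.card_Ω; omega

theorem q_eq_two_or_four : S.q = 2 ∨ S.q = 4 := by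
  have := S.card_Ω
  rw [q]
  omega

theorem q_ne_zero : S.q ≠ 0 := by have := S.q_eq_two_or_four; omega

theorem E_le_B : S.E ≤ S.B := pCore_le _ _

theorem R_le_Q : S.R ≤ S.Q := pCore_le _ _

theorem V_le_R : S.V ≤ S.R := omegaCenter_le _

theorem Z_le_E : S.Z ≤ S.E := omegaCenter_le _

theorem N_le_normalizer_E : S.N ≤ normalizer S.E := normalizer_le_normalizer_pCore 2 S.B

theorem N_le_normalizer_Z : S.N ≤ normalizer S.Z :=
  S.N_le_normalizer_E.trans (normalizer_le_normalizer_omegaCenter _)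

theorem B_le_normalizer_E : S.B ≤ normalizer S.E := S.B_le_N.trans S.N_le_normalizer_E

theorem P_le_normalizer_R : S.P ≤ normalizer S.R :=
  S.P_le_normalizer_Q.trans (normalizer_le_normalizer_pCore 2 S.Q)

theorem P_le_normalizer_V : S.P ≤ normalizer S.V :=
  S.P_le_normalizer_R.trans (normalizer_le_normalizer_omegaCenter _)

theorem B_le_normalizer_Q : S.B ≤ normalizer S.Q := S.B_le_P.trans S.P_le_normalizer_Q

theorem isPGroup_E : IsPGroup 2 S.E := isPGroup_pCore 2 S.B

theorem R_eq_E_inf_Q : S.R = S.E ⊓ S.Q := by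
  refine le_antisymm (le_inf (pCore_mono_of_le_normalizer S.Q_le_B S.B_le_normalizer_Q) S.R_le_Q) ?_
  refine le_pCore inf_le_right ?_ (S.isPGroup_E.to_le inf_le_left)
  exact (le_inf (S.Q_le_B.trans S.B_le_normalizer_E) le_normalizer).trans
    inf_normalizer_le_normalizer_inf

theorem R_le_E : S.R ≤ S.E := S.R_eq_E_inf_Q.le.trans inf_le_left

theorem le_Q_iff_le_R (hT : T ≤ S.E) : T ≤ S.Q ↔ T ≤ S.R := by
  rw [R_eq_E_inf_Q, le_inf_iff, and_iff_right hT]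

theorem mem_Q_iff_mem_R (ht : t ∈ S.E) : t ∈ S.Q ↔ t ∈ S.R := by
  rw [R_eq_E_inf_Q, mem_inf, and_iff_right ht]

theorem eq_bot_of_H_le_of_N_le_normalizer (hK : K ≤ S.P) (hH : S.H ≤ normalizer K)
    (hN : S.N ≤ normalizer K) : K = ⊥ :=
  S.eq_bot_of_le_normalizer K hK (S.P_le_of_H_le_of_N_le hH hN) (hN S.e_mem_N)

theorem H_sup_N : S.H ⊔ S.N = ⊤ :=
  S.eq_top_of_le _ (S.P_le_of_H_le_of_N_le le_sup_left le_sup_right)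
    (le_sup_right (a := S.H) S.e_mem_N)

theorem pCore_B_eq_bot_of_le_Q {p : ℕ} (h : pCore p S.B ≤ S.Q) : pCore p S.B = ⊥ := by
  have heq : pCore p S.B = pCore p S.Q := le_antisymm
    (le_pCore h (S.Q_le_B.trans (le_normalizer_pCore p S.B)) (isPGroup_pCore p S.B))
    (pCore_mono_of_le_normalizer S.Q_le_B S.B_le_normalizer_Q)
  refine S.eq_bot_of_le_normalizer _ (h.trans S.Q_le_P) ?_
    (normalizer_le_normalizer_pCore p S.B S.e_mem_N)
  rw [heq]
  exact S.P_le_normalizer_Q.trans (normalizer_le_normalizer_pCore p S.Q)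

theorem pCore_B_eq_bot {p : ℕ} [Fact p.Prime] (hp : p ≠ 2) : pCore p S.B = ⊥ := by
  have := S.finite_Ω
  refine S.pCore_B_eq_bot_of_le_Q (not_imp_comm.1 (fun hQ => ?_) hp)
  refine S.eq_two_of_isPGroup (by have := S.four_le_card; omega) ?_ (pCore_le p S.B)
    (le_normalizer_pCore p S.B) hQ (isPGroup_pCore p S.B)
  rcases S.card_Ω with h | h <;> rw [h] <;> decide

theorem B_ne_bot : S.B ≠ ⊥ := by
  have := S.finite_Ω
  classical
  have hcard := S.four_le_card
  obtain ⟨c, d, hc, hd, hcd⟩ := (Set.one_lt_ncard_iff (s := {S.i, S.o}ᶜ)).1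
    (by rw [S.ncard_compl_pair]; omega)
  obtain ⟨g, hg⟩ := S.f_surjective (swap c d)
  have hgB : (g : G) ∈ S.B := S.coe_mem_pullback.2 (hg ▸ swap_mem_fixingSubgroup hc hd)
  intro hB
  rw [hB, mem_bot, OneMemClass.coe_eq_one] at hgB
  exact hcd (Equiv.swap_eq_one_iff.1 (by rw [← hg, hgB, map_one]))

section Finite

variable [Finite G]

theorem not_E_le_Q : ¬ S.E ≤ S.Q := by
  intro h
  have := S.isSolvable_B
  obtain ⟨p, hp, hne⟩ := exists_pCore_ne_bot_of_isSolvable S.B_ne_bot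
  have : Fact p.Prime := ⟨hp⟩
  obtain rfl | hp2 := eq_or_ne p 2
  · exact hne (S.pCore_B_eq_bot_of_le_Q h)
  · exact hne (S.pCore_B_eq_bot hp2)

theorem not_E_le_R : ¬ S.E ≤ S.R := mt (S.le_Q_iff_le_R le_rfl).2 S.not_E_le_Q

end Finite

theorem relIndex_R (hT : T ≤ S.E) (hBT : S.B ≤ normalizer T) (hTR : ¬ T ≤ S.R) :
    S.R.relIndex T = S.q := by
  have := S.finite_Ω
  have hcard := S.four_le_card
  rw [q, ← S.relIndex_Q_of_isPGroup_two (by omega) S.card_le_six (hT.trans S.E_le_B) hBT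
    (mt (S.le_Q_iff_le_R hT).1 hTR) (S.isPGroup_E.to_le hT), R_eq_E_inf_Q, ← inf_relIndex_right,
    ← inf_relIndex_right S.Q, inf_right_comm, inf_eq_right.2 hT, inf_comm]

theorem exists_mul_of_mem_E [Finite G] (hT : T ≤ S.E) (hBT : S.B ≤ normalizer T) (hTR : ¬ T ≤ S.R)
    (ht : t ∈ S.E) : ∃ a ∈ T, ∃ r ∈ S.R, t = a * r := by
  have hE := S.relIndex_R le_rfl S.B_le_normalizer_E S.not_E_le_R
  refine exists_mul_of_relIndex_eq hT ?_ (hE.trans_ne S.q_ne_zero) ht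
  rw [S.relIndex_R hT hBT hTR, hE]

theorem sup_R_eq_E [Finite G] (hT : T ≤ S.E) (hBT : S.B ≤ normalizer T) (hTR : ¬ T ≤ S.R) :
    T ⊔ S.R = S.E := by
  refine le_antisymm (sup_le hT S.R_le_E) fun t ht => ?_
  obtain ⟨a, ha, r, hr, rfl⟩ := S.exists_mul_of_mem_E hT hBT hTR ht
  exact mul_mem_sup ha hr

theorem P_le_of_conj_smul_le (hB : S.B ≤ M) (hT : T ≤ S.E) (hTR : ¬ T ≤ S.R)
    (h : ∀ g ∈ S.P, conj g • T ≤ M) : S.P ≤ M :=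
  S.P_le_of_conj_mem hB (hT.trans S.E_le_B) (mt (S.le_Q_iff_le_R hT).1 hTR) h

theorem H_le_of_conj_smul_le (hB : S.B ≤ M) (hT : T ≤ S.E) (hTR : ¬ T ≤ S.R)
    (h : ∀ g ∈ S.H, conj g • T ≤ M) : S.H ≤ M :=
  S.H_le_of_conj_mem hB (hT.trans S.E_le_B) (mt (S.le_Q_iff_le_R hT).1 hTR) h

theorem conj_e_smul_B : conj S.e • S.B = S.B := mem_normalizer_iff_conj_smul_eq.1 S.e_mem_N

theorem conj_e_smul_conj_e_smul_of_P_le_normalizer (hK : S.P ≤ normalizer K) :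
    conj S.e • conj S.e • K = K := by
  rw [← conj_mul_smul]
  exact mem_normalizer_iff_conj_smul_eq.1 (hK S.mul_self_e_mem_P)

theorem B_le_normalizer_conj_e_smul (hK : S.B ≤ normalizer K) :
    S.B ≤ normalizer ((conj S.e • K : Subgroup G) : Set G) := by
  rw [normalizer_conj_smul, ← S.conj_e_smul_B]
  exact pointwise_smul_le_pointwise_smul_iff.2 hK

theorem B_le_normalizer_R_inf_conj_e_smul :
    S.B ≤ normalizer ((S.R ⊓ conj S.e • S.R : Subgroup G) : Set G) :=
  have hR := S.B_le_P.trans S.P_le_normalizer_R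
  (le_inf hR (S.B_le_normalizer_conj_e_smul hR)).trans inf_normalizer_le_normalizer_inf

theorem e_mem_normalizer_R_inf_conj_e_smul :
    S.e ∈ normalizer ((S.R ⊓ conj S.e • S.R : Subgroup G) : Set G) := by
  rw [mem_normalizer_iff_conj_smul_eq, smul_inf,
    S.conj_e_smul_conj_e_smul_of_P_le_normalizer S.P_le_normalizer_R, inf_comm]

theorem commute_V_R (hv : v ∈ S.V) (hr : r ∈ S.R) : Commute v r := hv.2.1 r hr

theorem mul_self_of_mem_V (hv : v ∈ S.V) : v * v = 1 := hv.2.2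

theorem commute_Z_E (hv : v ∈ S.Z) (ht : t ∈ S.E) : Commute v t := hv.2.1 t ht

/-- The conjugates of `Z` under `P` centralise `R`, and generate `P` together with `B`. -/
theorem R_inf_conj_e_smul_eq_bot (h : ¬ S.Z ≤ S.R) : S.R ⊓ conj S.e • S.R = ⊥ := by
  refine S.eq_bot_of_le_normalizer _ ((inf_le_left.trans S.R_le_Q).trans S.Q_le_P) ?_
    S.e_mem_normalizer_R_inf_conj_e_smul
  refine S.P_le_of_conj_smul_le S.B_le_normalizer_R_inf_conj_e_smul S.Z_le_E h fun g hg => ?_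
  refine le_trans ?_ (centralizer_le_normalizer _)
  rintro _ ⟨z, hz, rfl⟩
  refine mem_centralizer_iff.2 fun k hk => ?_
  have hkR : k ∈ conj g • S.R :=
    (mem_normalizer_iff_conj_smul_eq.1 (S.P_le_normalizer_R hg)).ge (mem_inf.1 hk).1
  obtain ⟨r, hr, rfl⟩ := hkR
  exact ((S.commute_Z_E hz (S.R_le_E hr)).map (conj g)).symm

theorem Z_le_V (h : S.Z ≤ S.R) : S.Z ≤ S.V := fun _ hz =>
  ⟨h hz, fun _ hk => S.commute_Z_E hz (S.R_le_E hk), hz.2.2⟩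

theorem mem_Z_of_mem_V (hv : v ∈ S.V) (h : ∀ t ∈ S.E, Commute v t) : v ∈ S.Z :=
  ⟨S.R_le_E (S.V_le_R hv), h, S.mul_self_of_mem_V hv⟩

theorem Z_ne_bot [Finite G] : S.Z ≠ ⊥ := by
  refine omegaCenter_ne_bot (fun h => S.not_E_le_R ?_) S.isPGroup_E
  rw [h]
  exact bot_le

end LocalData

section ElementaryTwo

variable {G : Type*} [Group G] {A E F K : Subgroup G}

/-- Elementary abelian 2-subgroups. -/
def IsElementaryTwo (A : Subgroup G) : Prop := ∀ a ∈ A, a * a = 1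

theorem IsElementaryTwo.commute (hA : IsElementaryTwo A) {a b : G} (ha : a ∈ A) (hb : b ∈ A) :
    Commute a b := by
  have hinv : ∀ c ∈ A, c⁻¹ = c := fun c hc => inv_eq_of_mul_eq_one_left (hA c hc)
  calc a * b = (a * b)⁻¹ := (hinv _ (mul_mem ha hb)).symm
    _ = b * a := by rw [mul_inv_rev, hinv a ha, hinv b hb]

theorem IsElementaryTwo.conj_smul (hA : IsElementaryTwo A) (g : G) :
    IsElementaryTwo (conj g • A) := by
  rintro _ ⟨a, ha, rfl⟩
  exact (map_mul (conj g) a a).symm.trans ((congrArg (conj g) (hA a ha)).trans (map_one _))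

theorem isElementaryTwo_omegaCenter (K : Subgroup G) : IsElementaryTwo (omegaCenter K) :=
  fun _ ha => ha.2.2

theorem le_normalizer_of_conj_smul_le (h : ∀ g ∈ E, conj g • K ≤ K) : E ≤ normalizer K :=
  le_normalizer_iff.2 fun g hg _ hk => h g hg (conj_mem_conj_smul hk)

theorem le_normalizer_sSup {𝒜 : Set (Subgroup G)} (h : ∀ g ∈ K, ∀ A ∈ 𝒜, conj g • A ∈ 𝒜) :
    K ≤ normalizer (sSup 𝒜 : Subgroup G) := by
  refine le_normalizer_of_conj_smul_le fun g hg => ?_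
  rw [sSup_eq_iSup', conj_smul_iSup]
  exact iSup_le fun A => (le_sSup (h g hg A A.2)).trans_eq (sSup_eq_iSup' _)

theorem le_normalizer_iInf_conj_smul (H L : Subgroup G) :
    H ≤ normalizer (⨅ h : H, conj (h : G) • L : Subgroup G) := by
  refine le_normalizer_of_conj_smul_le fun g hg => ?_
  rw [conj_smul_iInf]
  refine le_iInf fun h => (iInf_le _ ((⟨g, hg⟩ : H)⁻¹ * h)).trans_eq ?_
  rw [← conj_mul_smul, Subgroup.coe_mul, Subgroup.coe_inv, mul_inv_cancel_left]

theorem relIndex_sup_right_of_le_normalizer (h : A ≤ normalizer K) :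
    K.relIndex (A ⊔ K) = K.relIndex A :=
  (relIndex_eq_of_forall_exists_mul le_sup_left fun _ hw => exists_mul_of_mem_sup h hw).symm

theorem le_of_relIndex_prime (h : (F.relIndex E).Prime) (hFK : F ≤ K) (hKE : K ≤ E)
    (hKF : ¬ K ≤ F) : E ≤ K := by
  rw [← relIndex_mul_relIndex F K E hFK hKE, Nat.prime_mul_iff] at h
  exact relIndex_eq_one.1 (h.resolve_right fun h' => hKF (relIndex_eq_one.1 h'.2)).2

end ElementaryTwo

namespace LocalData

variable {G Ω : Type*} [Group G] (S : LocalData G Ω) {A K T : Subgroup G}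

section Finite

variable [Finite G]

/-- Otherwise the elementary abelian subgroups of `E` of maximal order generate a subgroup of `R`
normalised by both `H` and `N`, as `P` normalises `R` and `N` normalises `E`. -/
theorem exists_isElementaryTwo_not_le_R : ∃ A ≤ S.E, IsElementaryTwo A ∧ ¬ A ≤ S.R ∧
    ∀ A' ≤ S.E, IsElementaryTwo A' → Nat.card A' ≤ Nat.card A := by
  obtain ⟨A₀, hA₀, hmax⟩ := Set.exists_max_image {A : Subgroup G | A ≤ S.E ∧ IsElementaryTwo A}
    (fun A => Nat.card A) (Set.toFinite _) ⟨S.Z, S.Z_le_E, isElementaryTwo_omegaCenter _⟩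
  by_contra! hc
  let 𝒜 : Set (Subgroup G) := {A | A ≤ S.E ∧ IsElementaryTwo A ∧ Nat.card A = Nat.card A₀}
  have hR : ∀ A ∈ 𝒜, A ≤ S.R := fun A ⟨hAE, hA, hcard⟩ => by
    by_contra hAR
    obtain ⟨A', hA'E, hA', hlt⟩ := hc A hAE hA hAR
    exact (hmax A' ⟨hA'E, hA'⟩).not_gt (hcard ▸ hlt)
  have hconj : ∀ g, ∀ A ∈ 𝒜, conj g • A ≤ S.E → conj g • A ∈ 𝒜 := fun g A ⟨_, hA, hcard⟩ hE =>
    ⟨hE, hA.conj_smul g, (Nat.card_congr (equivSMul (conj g) A).symm.toEquiv).trans hcard⟩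
  have hbot : sSup 𝒜 = ⊥ := by
    refine S.eq_bot_of_H_le_of_N_le_normalizer ?_ ?_ ?_
    · exact (sSup_le hR).trans (S.R_le_Q.trans S.Q_le_P)
    · refine le_normalizer_sSup fun g hg A hA => hconj g A hA (le_trans ?_ S.R_le_E)
      rw [← mem_normalizer_iff_conj_smul_eq.1 (S.P_le_normalizer_R (S.H_le_P hg))]
      exact pointwise_smul_le_pointwise_smul_iff.2 (hR A hA)
    · refine le_normalizer_sSup fun g hg A hA => hconj g A hA ?_
      rw [← mem_normalizer_iff_conj_smul_eq.1 (S.N_le_normalizer_E hg)]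
      exact pointwise_smul_le_pointwise_smul_iff.2 hA.1
  have hA₀bot : A₀ = ⊥ :=
    le_bot_iff.1 ((le_sSup (show A₀ ∈ 𝒜 from ⟨hA₀.1, hA₀.2, rfl⟩)).trans_eq hbot)
  have hZ := hmax S.Z ⟨S.Z_le_E, isElementaryTwo_omegaCenter _⟩
  rw [hA₀bot, card_bot] at hZ
  exact S.Z_ne_bot (card_le_one_iff_eq_bot _ |>.1 hZ)

/-- By maximality `|V(A ⊓ R)| ≤ |A|`. -/
theorem relIndex_V_inf_le (hAE : A ≤ S.E) (hA : IsElementaryTwo A)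
    (hmax : ∀ A' ≤ S.E, IsElementaryTwo A' → Nat.card A' ≤ Nat.card A) :
    (S.V ⊓ A).relIndex S.V ≤ S.R.relIndex A := by
  have hnorm : A ⊓ S.R ≤ normalizer S.V :=
    inf_le_right.trans ((S.R_le_Q.trans S.Q_le_P).trans S.P_le_normalizer_V)
  have hmul : ∀ w ∈ S.V ⊔ (A ⊓ S.R), ∃ v ∈ S.V, ∃ r ∈ A ⊓ S.R, w = v * r := fun w hw =>
    exists_mul_of_mem_sup' hnorm hw
  have helem : IsElementaryTwo (S.V ⊔ (A ⊓ S.R)) := by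
    intro w hw
    obtain ⟨v, hv, r, hr, rfl⟩ := hmul w hw
    rw [(S.commute_V_R hv hr.2).symm.mul_mul_mul_comm, S.mul_self_of_mem_V hv, hA r hr.1, one_mul]
  have hcard := hmax _ (sup_le (S.V_le_R.trans S.R_le_E) (inf_le_left.trans hAE)) helem
  rw [card_eq_relIndex_mul_card (le_sup_right : A ⊓ S.R ≤ S.V ⊔ (A ⊓ S.R)),
    card_eq_relIndex_mul_card (inf_le_left : A ⊓ S.R ≤ A)] at hcard
  have hle := Nat.le_of_mul_le_mul_right hcard Nat.card_pos
  rw [← relIndex_eq_of_forall_exists_mul le_sup_left hmul, inf_relIndex_left] at hle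
  rwa [← inf_relIndex_right (A ⊓ S.R), inf_assoc, inf_eq_right.2 S.V_le_R, inf_comm] at hle

end Finite

theorem le_Z_of_E_le_centralizer (hK : K ≤ S.V) (hE : S.E ≤ centralizer K) : K ≤ S.Z :=
  fun _ hk => S.mem_Z_of_mem_V (hK hk) fun _ ht => mem_centralizer_iff.1 (hE ht) _ hk

theorem sup_R_le_centralizer (hA : IsElementaryTwo A) :
    A ⊔ S.R ≤ centralizer ((S.V ⊓ A : Subgroup G) : Set G) :=
  sup_le (fun _ ha => mem_centralizer_iff.2 fun _ hv => hA.commute hv.2 ha)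
    fun _ hr => mem_centralizer_iff.2 fun _ hv => S.commute_V_R hv.1 hr

theorem relIndex_sup_R (hAE : A ≤ S.E) : S.R.relIndex (A ⊔ S.R) = S.R.relIndex A :=
  relIndex_sup_right_of_le_normalizer
    (hAE.trans (S.E_le_B.trans (S.B_le_P.trans S.P_le_normalizer_R)))

theorem B_le_normalizer_V : S.B ≤ normalizer S.V := S.B_le_P.trans S.P_le_normalizer_V

theorem inf_conj_smul_le_Z {b : G} (hA : IsElementaryTwo A)
    (hE : S.E ≤ (A ⊔ S.R) ⊔ conj b • (A ⊔ S.R)) :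
    (S.V ⊓ A) ⊓ conj b • (S.V ⊓ A) ≤ S.Z := by
  refine S.le_Z_of_E_le_centralizer (inf_le_left.trans inf_le_left) (hE.trans (sup_le ?_ ?_))
  · exact (S.sup_R_le_centralizer hA).trans (centralizer_le inf_le_left)
  · refine (pointwise_smul_le_pointwise_smul_iff.2 (S.sup_R_le_centralizer hA)).trans ?_
    rw [← centralizer_conj_smul]
    exact centralizer_le inf_le_right

section Finite

variable [Finite G]

theorem relIndex_eq_of_not_E_le_sup_R (hAE : A ≤ S.E) (hAR : ¬ A ≤ S.R) (hE : ¬ S.E ≤ A ⊔ S.R) :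
    S.q = 4 ∧ S.R.relIndex A = 2 ∧ (A ⊔ S.R).relIndex S.E = 2 := by
  have hmul := relIndex_mul_relIndex S.R (A ⊔ S.R) S.E le_sup_right (sup_le hAE S.R_le_E)
  rw [S.relIndex_sup_R hAE, S.relIndex_R le_rfl S.B_le_normalizer_E S.not_E_le_R] at hmul
  have hne : S.R.relIndex A ≠ 1 := mt relIndex_eq_one.1 hAR
  have hne' : (A ⊔ S.R).relIndex S.E ≠ 1 := mt relIndex_eq_one.1 hE
  generalize S.R.relIndex A = a at *
  generalize (A ⊔ S.R).relIndex S.E = b at *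
  have ha : a ∣ S.q := ⟨b, hmul.symm⟩
  have hale := Nat.le_of_dvd (Nat.pos_of_ne_zero S.q_ne_zero) ha
  rcases S.q_eq_two_or_four with hq | hq <;> rw [hq] at hmul hale ⊢ <;> interval_cases a <;> omega

/-- If `A` is an elementary abelian subgroup of `E` of maximal order with `A ≰ R`, then `V ∩ A` has
index at most `|AR : R|` in `V`, and it is central in `E` if `AR = E`. Otherwise `q = 4`, and two
`B`-conjugates of `AR` generate `E`. -/
theorem relIndex_Z_V_le : S.Z.relIndex S.V ≤ S.q := by
  obtain ⟨A, hAE, hA, hAR, hmax⟩ := S.exists_isElementaryTwo_not_le_R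
  have hindex := S.relIndex_V_inf_le hAE hA hmax
  have hF : A ⊔ S.R ≤ S.E := sup_le hAE S.R_le_E
  by_cases hE : S.E ≤ A ⊔ S.R
  · have hZ : S.V ⊓ A ≤ S.Z :=
      S.le_Z_of_E_le_centralizer inf_le_left (hE.trans (S.sup_R_le_centralizer hA))
    have hR : S.R.relIndex A = S.q := by
      rw [← S.relIndex_R le_rfl S.B_le_normalizer_E S.not_E_le_R, ← hF.antisymm hE,
        S.relIndex_sup_R hAE]
    exact (relIndex_le_of_le_left hZ index_ne_zero_of_finite).trans (hindex.trans_eq hR)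
  obtain ⟨hq, hA2, hF2⟩ := S.relIndex_eq_of_not_E_le_sup_R hAE hAR hE
  obtain ⟨b, hb, hbF⟩ : ∃ b ∈ S.B, ¬ conj b • (A ⊔ S.R) ≤ A ⊔ S.R := by
    by_contra! h
    have := S.sup_R_eq_E hF (le_normalizer_of_conj_smul_le h) (fun h => hAR (le_sup_left.trans h))
    rw [sup_assoc, sup_idem] at this
    exact hE this.ge
  have hbE : conj b • S.E = S.E := mem_normalizer_iff_conj_smul_eq.1 (S.B_le_normalizer_E hb)
  have hbV : conj b • S.V = S.V := mem_normalizer_iff_conj_smul_eq.1 (S.B_le_normalizer_V hb)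
  have hZ : (S.V ⊓ A) ⊓ conj b • (S.V ⊓ A) ≤ S.Z := by
    refine S.inf_conj_smul_le_Z hA (le_of_relIndex_prime (hF2 ▸ Nat.prime_two) le_sup_left
      (sup_le hF ?_) (fun h => hbF (le_sup_right.trans h)))
    rw [← hbE]
    exact pointwise_smul_le_pointwise_smul_iff.2 hF
  have hconj : (conj b • (S.V ⊓ A)).relIndex S.V = (S.V ⊓ A).relIndex S.V := by
    nth_rw 2 [← hbV]
    exact relIndex_pointwise_smul _ _ _
  calc S.Z.relIndex S.V ≤ ((S.V ⊓ A) ⊓ conj b • (S.V ⊓ A)).relIndex S.V :=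
        relIndex_le_of_le_left hZ index_ne_zero_of_finite
    _ ≤ (S.V ⊓ A).relIndex S.V * (conj b • (S.V ⊓ A)).relIndex S.V := relIndex_inf_le
    _ ≤ 2 * 2 := by
      rw [hconj, ← hA2]
      exact Nat.mul_le_mul hindex hindex
    _ = S.q := hq.symm

end Finite

end LocalData

section FixedModulo

variable {G : Type*} [Group G] {V X : Subgroup G}

/-- The elements of `V` that commute with `g` modulo `X`, where `V` normalises `X`. -/
def fixedModulo (V X : Subgroup G) (hX : V ≤ normalizer X) (g : G) : Subgroup G where
  carrier := {v | v ∈ V ∧ ⁅g, v⁆ ∈ X}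
  one_mem' := ⟨one_mem _, by rw [commutatorElement_one_right]; exact one_mem _⟩
  mul_mem' := by
    rintro v w ⟨hv, hvX⟩ ⟨hw, hwX⟩
    refine ⟨mul_mem hv hw, ?_⟩
    rw [commutatorElement_mul_right_eq_mul_conj, mul_assoc, mul_assoc, ← mul_assoc v]
    exact mul_mem hvX (conj_mem_of_mem_normalizer (hX hv) hwX)
  inv_mem' := by
    rintro v ⟨hv, hvX⟩
    refine ⟨inv_mem hv, ?_⟩
    have hinv : ⁅g, v⁻¹⁆ = v⁻¹ * ⁅g, v⁆⁻¹ * v := by simp only [commutatorElement_def]; group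
    rw [hinv]
    exact inv_conj_mem_of_mem_normalizer (hX hv) (inv_mem hvX)

theorem fixedModulo_le (hX : V ≤ normalizer X) (g : G) : fixedModulo V X hX g ≤ V :=
  fun _ hv => hv.1

end FixedModulo

namespace LocalData

variable {G Ω : Type*} [Group G] (S : LocalData G Ω) {h k : S.H} {v : G}

/-- The intersection of the `H`-conjugates of `Z`. These conjugates are indexed by the points of
`Ω` other than `o`. -/
def X : Subgroup G := ⨅ h : S.H, conj (h : G) • S.Z

variable {S}

theorem conj_smul_Z_eq (hhk : h • S.i = k • S.i) : conj (h : G) • S.Z = conj (k : G) • S.Z := by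
  have hB : ((k⁻¹ * h : S.H) : G) ∈ S.B := by
    rw [S.coe_mem_B_iff, mul_smul, hhk, inv_smul_smul]
  rw [← mul_inv_cancel_left k h, Subgroup.coe_mul, conj_mul_smul,
    mem_normalizer_iff_conj_smul_eq.1 (S.N_le_normalizer_Z (S.B_le_N hB))]

theorem X_le_conj_smul_Z (h : S.H) : S.X ≤ conj (h : G) • S.Z := iInf_le _ h

theorem X_le_Z : S.X ≤ S.Z := by
  simpa only [Subgroup.coe_one, map_one, one_smul] using X_le_conj_smul_Z (1 : S.H)

theorem H_le_normalizer_X : S.H ≤ normalizer S.X := le_normalizer_iInf_conj_smul S.H S.Z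

theorem conj_smul_X (h : S.H) : conj (h : G) • S.X = S.X :=
  mem_normalizer_iff_conj_smul_eq.1 (H_le_normalizer_X h.2)

theorem relIndex_X_conj_smul_Z (h : S.H) :
    S.X.relIndex (conj (h : G) • S.Z) = S.X.relIndex S.Z := by
  rw [← conj_smul_X h, relIndex_pointwise_smul, conj_smul_X]

theorem conj_smul_V (h : S.H) : conj (h : G) • S.V = S.V :=
  mem_normalizer_iff_conj_smul_eq.1 (S.P_le_normalizer_V (S.H_le_P h.2))

theorem conj_smul_Z_le_V (hZ : S.Z ≤ S.R) (h : S.H) : conj (h : G) • S.Z ≤ S.V := by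
  rw [← conj_smul_V h]
  exact pointwise_smul_le_pointwise_smul_iff.2 (S.Z_le_V hZ)

theorem V_le_normalizer_X (hZ : S.Z ≤ S.R) : S.V ≤ normalizer S.X := fun _ hv =>
  centralizer_le_normalizer _ (mem_centralizer_iff.2 fun _ hx =>
    (S.commute_V_R hv ((X_le_Z.trans hZ) hx)).symm)

theorem smul_smul_ne_of_notMem_R {t : S.H} (ht : (t : G) ∈ S.E) (htR : (t : G) ∉ S.R)
    (hh : h • S.i ≠ S.i) : t • h • S.i ≠ h • S.i := fun hth => htR <|
  have := S.finite_Ω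
  (S.mem_Q_iff_mem_R ht).1 (S.mem_Q_of_smul_eq S.card_le_six S.E_le_B S.B_le_normalizer_E
    S.isPGroup_E ht (not_or.2 ⟨hh, S.smul_ne_o h S.i_ne_o⟩) hth)

section Finite

variable [Finite G]

theorem not_Z_le_X (hZ : S.Z ≤ S.R) : ¬ S.Z ≤ S.X := fun h => by
  refine S.Z_ne_bot (S.eq_bot_of_H_le_of_N_le_normalizer
    (hZ.trans (S.R_le_Q.trans S.Q_le_P)) ?_ S.N_le_normalizer_Z)
  rw [h.antisymm X_le_Z]
  exact H_le_normalizer_X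

theorem relIndex_X_Z_ne_one (hZ : S.Z ≤ S.R) : S.X.relIndex S.Z ≠ 1 :=
  mt relIndex_eq_one.1 (not_Z_le_X hZ)

theorem not_conj_smul_Z_le_X (hZ : S.Z ≤ S.R) (h : S.H) : ¬ conj (h : G) • S.Z ≤ S.X := by
  rw [← relIndex_eq_one, relIndex_X_conj_smul_Z]
  exact relIndex_X_Z_ne_one hZ

/-- `E` centralises `Z` and is transitive on the points other than `i` and `o`, so an element of
`Z` and one further conjugate of `Z` lies in all of them. -/
theorem mem_X_of_mem_Z (hk : k • S.i ≠ S.i) (hv : v ∈ S.Z) (hvk : v ∈ conj (k : G) • S.Z) :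
    v ∈ S.X := by
  refine mem_iInf.2 fun l => ?_
  by_cases hl : l • S.i = S.i
  · rw [conj_smul_Z_eq (k := 1) (hl.trans (one_smul _ _).symm)]
    simpa only [Subgroup.coe_one, map_one, one_smul] using hv
  obtain ⟨t, ht, htkl⟩ := S.exists_mem_smul_eq S.E_le_B S.B_le_normalizer_E S.not_E_le_Q
    (not_or.2 ⟨hk, S.smul_ne_o k S.i_ne_o⟩) (not_or.2 ⟨hl, S.smul_ne_o l S.i_ne_o⟩)
  rw [← conj_smul_Z_eq (h := t * k) (by rw [mul_smul, htkl]), Subgroup.coe_mul, conj_mul_smul,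
    mem_conj_smul, mul_assoc, (S.commute_Z_E hv ht).eq, inv_mul_cancel_left]
  exact hvk

theorem mem_X_of_mem_conj_smul_Z (hhk : h • S.i ≠ k • S.i) (hvh : v ∈ conj (h : G) • S.Z)
    (hvk : v ∈ conj (k : G) • S.Z) : v ∈ S.X := by
  rw [← conj_smul_X h, mem_conj_smul]
  refine mem_X_of_mem_Z (k := h⁻¹ * k) ?_ (mem_conj_smul.1 hvh) ?_
  · rw [mul_smul, Ne, inv_smul_eq_iff]
    exact hhk.symm
  · rw [← mul_inv_cancel_left h k, Subgroup.coe_mul, conj_mul_smul] at hvk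
    exact mem_conj_smul.1 hvk

theorem mem_X_of_commute {t : G} (ht : t ∈ S.E) (htR : t ∉ S.R) (hh : h • S.i ≠ S.i)
    (hv : v ∈ conj (h : G) • S.Z) (hvt : Commute v t) : v ∈ S.X := by
  let t' : S.H := ⟨t, S.B_le_H (S.E_le_B ht)⟩
  refine mem_X_of_mem_conj_smul_Z (k := t' * h) ?_ hv ?_
  · rw [mul_smul]
    exact (smul_smul_ne_of_notMem_R (t := t') ht htR hh).symm
  · rw [Subgroup.coe_mul, conj_mul_smul, mem_conj_smul, mul_assoc, hvt.eq, inv_mul_cancel_left]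
    exact hv

theorem conj_smul_Z_le_fixedModulo_iff (hZ : S.Z ≤ S.R) (h2 : S.X.relIndex S.Z = 2) (g h : S.H) :
    conj (h : G) • S.Z ≤ fixedModulo S.V S.X (V_le_normalizer_X hZ) g ↔
      g • h • S.i = h • S.i := by
  refine ⟨fun hF => by_contra fun hne => ?_, fun hg v hv => ⟨conj_smul_Z_le_V hZ h hv, ?_⟩⟩
  · refine not_conj_smul_Z_le_X hZ (g * h) fun v hv => ?_
    refine mem_X_of_mem_conj_smul_Z (h := g * h) (k := h) (by rwa [mul_smul]) hv ?_
    rw [Subgroup.coe_mul, conj_mul_smul, mem_conj_smul] at hv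
    have hmul := mul_mem (X_le_conj_smul_Z h (hF hv).2) hv
    have hvg : ⁅(g : G), (g : G)⁻¹ * v * g⁆ * ((g : G)⁻¹ * v * g) = v := by
      rw [commutatorElement_def]; group
    rwa [hvg] at hmul
  · have hgv : (g : G) * v * (g : G)⁻¹ ∈ conj (h : G) • S.Z := by
      rw [← conj_smul_Z_eq (h := g * h) (by rw [mul_smul, hg]), Subgroup.coe_mul, conj_mul_smul]
      exact conj_mem_conj_smul hv
    have hgX : (g : G) * v * (g : G)⁻¹ ∈ S.X ↔ v ∈ S.X :=
      (mem_normalizer_iff.1 (H_le_normalizer_X g.2) v).symm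
    have hmul := mul_mem_iff_of_index_two (H := S.X.subgroupOf (conj (h : G) • S.Z))
      ((relIndex_X_conj_smul_Z h).trans h2) (a := ⟨_, hgv⟩) (b := ⟨v⁻¹, inv_mem hv⟩)
    simp only [mem_subgroupOf, Subgroup.coe_mul] at hmul
    rw [commutatorElement_def, hmul, hgX, inv_mem_iff]

theorem relIndex_conj_smul_Z_V_le (h : S.H) : (conj (h : G) • S.Z).relIndex S.V ≤ S.q := by
  rw [← conj_smul_V h, relIndex_pointwise_smul]
  exact S.relIndex_Z_V_le

theorem conj_smul_Z_sup_eq_of_relIndex_X_Z {F : Subgroup G} (hZ : S.Z ≤ S.R) (hq : S.q ≤ 4)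
    (hhk : h • S.i ≠ k • S.i) (hh : conj (h : G) • S.Z ≤ F) (hk : conj (k : G) • S.Z ≤ F)
    (hF : F ≤ S.V) (hVF : ¬ S.V ≤ F) : conj (h : G) • S.Z ⊔ conj (k : G) • S.Z = F := by
  refine le_antisymm (sup_le hh hk) (relIndex_eq_one.1 ?_)
  set W := conj (h : G) • S.Z ⊔ conj (k : G) • S.Z
  have hVF1 : F.relIndex S.V ≠ 1 := mt relIndex_eq_one.1 hVF
  have hhW : (conj (h : G) • S.Z).relIndex W ≠ 1 := fun hW =>
    have hkh : conj (k : G) • S.Z ≤ conj (h : G) • S.Z := le_sup_right.trans (relIndex_eq_one.1 hW)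
    not_conj_smul_Z_le_X hZ k fun _ hv => mem_X_of_mem_conj_smul_Z hhk (hkh hv) hv
  have hle := relIndex_conj_smul_Z_V_le h
  rw [← relIndex_mul_relIndex _ F _ hh hF, ← relIndex_mul_relIndex _ W F le_sup_left (sup_le hh hk)]
    at hle
  have h0 : F.relIndex S.V ≠ 0 := index_ne_zero_of_finite
  have h0' : (conj (h : G) • S.Z).relIndex W ≠ 0 := index_ne_zero_of_finite
  have h0'' : W.relIndex F ≠ 0 := index_ne_zero_of_finite
  by_contra hne
  have : 2 * 2 * 2 ≤ (conj (h : G) • S.Z).relIndex W * W.relIndex F * F.relIndex S.V := by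
    gcongr <;> omega
  omega

theorem conj_smul_Z_sup_eq_fixedModulo (hZ : S.Z ≤ S.R) (hq : S.q ≤ 4) (h2 : S.X.relIndex S.Z = 2)
    {g l : S.H} (hhk : h • S.i ≠ k • S.i) (hh : g • h • S.i = h • S.i) (hk : g • k • S.i = k • S.i)
    (hl : g • l • S.i ≠ l • S.i) : conj (h : G) • S.Z ⊔ conj (k : G) • S.Z =
      fixedModulo S.V S.X (V_le_normalizer_X hZ) g :=
  conj_smul_Z_sup_eq_of_relIndex_X_Z hZ hq hhk ((conj_smul_Z_le_fixedModulo_iff hZ h2 g h).2 hh)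
    ((conj_smul_Z_le_fixedModulo_iff hZ h2 g k).2 hk) (fixedModulo_le _ _) fun hV =>
      hl ((conj_smul_Z_le_fixedModulo_iff hZ h2 g l).1 ((conj_smul_Z_le_V hZ l).trans hV))

theorem relIndex_X_Z_ne_two (hZ : S.Z ≤ S.R) (hq : S.q = 4) : S.X.relIndex S.Z ≠ 2 := by
  classical
  intro h2
  have := S.finite_Ω
  have hcard : ({S.o}ᶜ : Set Ω).ncard = 5 := by
    have := S.four_le_card
    rw [Set.ncard_compl, Set.ncard_singleton]
    unfold q at hq
    omega
  let p := (Finite.equivFinOfCardEq hcard).symm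
  have hp {j k : Fin 5} (hjk : j ≠ k) : (p j : Ω) ≠ p k := fun h =>
    hjk (p.injective (Subtype.ext h))
  choose l hl using fun j => S.exists_smul_i_eq (p j).2
  obtain ⟨g, hg⟩ := S.exists_smul_eq_swap (p 3).2 (p 4).2
  obtain ⟨g', hg'⟩ := S.exists_smul_eq_swap (p 2).2 (p 4).2
  have hfix (j : Fin 5) (h3 : j ≠ 3) (h4 : j ≠ 4) : g • l j • S.i = l j • S.i := by
    rw [hl, hg, Equiv.swap_apply_of_ne_of_ne (hp h3) (hp h4)]
  have hfix' (j : Fin 5) (h2 : j ≠ 2) (h4 : j ≠ 4) : g' • l j • S.i = l j • S.i := by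
    rw [hl, hg', Equiv.swap_apply_of_ne_of_ne (hp h2) (hp h4)]
  have hmove : g • l 3 • S.i ≠ l 3 • S.i := by
    rw [hl, hg, Equiv.swap_apply_left]
    exact hp (by decide)
  have hmove' : g' • l 2 • S.i ≠ l 2 • S.i := by
    rw [hl, hg', Equiv.swap_apply_left]
    exact hp (by decide)
  have h01 : l 0 • S.i ≠ l 1 • S.i := by
    rw [hl, hl]
    exact hp (by decide)
  have hsup := conj_smul_Z_sup_eq_fixedModulo hZ hq.le h2 h01 (hfix 0 (by decide) (by decide))
    (hfix 1 (by decide) (by decide)) hmove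
  have hsup' := conj_smul_Z_sup_eq_fixedModulo hZ hq.le h2 h01 (hfix' 0 (by decide) (by decide))
    (hfix' 1 (by decide) (by decide)) hmove'
  apply hmove
  rw [← conj_smul_Z_le_fixedModulo_iff hZ h2, ← hsup, hsup', conj_smul_Z_le_fixedModulo_iff hZ h2]
  exact hfix' 3 (by decide) (by decide)

theorem relIndex_X_Z_le_relIndex_centralizer (hZ : S.Z ≤ S.R) {t : G} (ht : t ∈ S.E)
    (htR : t ∉ S.R) : S.X.relIndex S.Z ≤ (S.V ⊓ centralizer {t}).relIndex S.V := by
  have := S.finite_Ω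
  obtain ⟨c, hc⟩ := S.exists_notMem_pair (by have := S.four_le_card; omega)
  obtain ⟨h, rfl⟩ := S.exists_smul_i_eq (fun hco => hc (Or.inr hco))
  calc S.X.relIndex S.Z = S.X.relIndex (conj (h : G) • S.Z) := (relIndex_X_conj_smul_Z h).symm
    _ ≤ (S.V ⊓ centralizer {t} ⊓ conj (h : G) • S.Z).relIndex (conj (h : G) • S.Z) :=
      relIndex_le_of_le_left (fun v hv => mem_X_of_commute ht htR (fun hi => hc (Or.inl hi)) hv.2
        (mem_centralizer_singleton_iff.1 hv.1.2)) index_ne_zero_of_finite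
    _ = (S.V ⊓ centralizer {t}).relIndex (conj (h : G) • S.Z) := inf_relIndex_right _ _
    _ ≤ (S.V ⊓ centralizer {t}).relIndex S.V :=
      relIndex_le_of_le_right (conj_smul_Z_le_V hZ h) index_ne_zero_of_finite

theorem relIndex_Z_V_ne_three : S.Z.relIndex S.V ≠ 3 := by
  intro h3
  obtain ⟨k, hk⟩ := IsPGroup.iff_card.1 (S.isPGroup_E.to_le (S.V_le_R.trans S.R_le_E))
  have hdvd : S.Z.relIndex S.V ∣ 2 ^ k := hk ▸ relIndex_dvd_card _ _
  rw [h3] at hdvd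
  have := Nat.prime_three.dvd_of_dvd_pow hdvd
  omega

theorem relIndex_Z_centralizer_and_relIndex_Z_V (hZ : S.Z ≤ S.R) {t : G} (ht : t ∈ S.E)
    (htR : t ∉ S.R) :
    S.Z.relIndex (S.V ⊓ centralizer {t}) = 1 ∧ S.Z.relIndex S.V = S.q := by
  have hZC : S.Z ≤ S.V ⊓ centralizer {t} :=
    le_inf (S.Z_le_V hZ) fun z hz => mem_centralizer_singleton_iff.2 (S.commute_Z_E hz ht)
  have hmul := relIndex_mul_relIndex S.Z _ S.V hZC inf_le_left
  have hX := relIndex_X_Z_le_relIndex_centralizer hZ ht htR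
  have hle := S.relIndex_Z_V_le
  have hne3 := S.relIndex_Z_V_ne_three
  have hX0 : S.X.relIndex S.Z ≠ 0 := index_ne_zero_of_finite
  have hX1 := relIndex_X_Z_ne_one hZ
  have hX2 := relIndex_X_Z_ne_two hZ
  have ha0 : S.Z.relIndex (S.V ⊓ centralizer {t}) ≠ 0 := index_ne_zero_of_finite
  generalize S.X.relIndex S.Z = z at *
  generalize S.Z.relIndex (S.V ⊓ centralizer {t}) = a at *
  generalize (S.V ⊓ centralizer {t}).relIndex S.V = b at *
  generalize S.Z.relIndex S.V = m at *
  have ha : a = 1 := by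
    rcases S.q_eq_two_or_four with hq | hq
    · nlinarith [show 1 ≤ a by omega, show 2 ≤ b by omega]
    · have := hX2 hq
      nlinarith [show 1 ≤ a by omega, show 3 ≤ b by omega]
  rw [ha, one_mul] at hmul
  refine ⟨ha, ?_⟩
  rcases S.q_eq_two_or_four with hq | hq
  · omega
  · have := hX2 hq
    omega

theorem mem_Z_of_commute (hZ : S.Z ≤ S.R) {t : G} (ht : t ∈ S.E) (htR : t ∉ S.R) (hv : v ∈ S.V)
    (hvt : Commute v t) : v ∈ S.Z :=
  relIndex_eq_one.1 (relIndex_Z_centralizer_and_relIndex_Z_V hZ ht htR).1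
    ⟨hv, mem_centralizer_singleton_iff.2 hvt⟩

theorem relIndex_Z_V (hZ : S.Z ≤ S.R) : S.Z.relIndex S.V = S.q := by
  obtain ⟨t, ht, htR⟩ := SetLike.not_le_iff_exists.1 S.not_E_le_R
  exact (relIndex_Z_centralizer_and_relIndex_Z_V hZ ht htR).2

end Finite

end LocalData

namespace LocalData

variable {G Ω : Type*} [Group G] {S : LocalData G Ω} {M : Subgroup G} {h h' : S.H} {n : G}

theorem smul_i_ne_i (hN : (h : G) ∉ S.N) : h • S.i ≠ S.i := fun hi =>
  hN (S.B_le_N (S.coe_mem_B_iff.2 hi))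

theorem N_conj_smul_V_le_E (hn : n ∈ S.N) : conj n • S.V ≤ S.E := by
  rw [← mem_normalizer_iff_conj_smul_eq.1 (S.N_le_normalizer_E hn)]
  exact pointwise_smul_le_pointwise_smul_iff.2 (S.V_le_R.trans S.R_le_E)

theorem B_le_normalizer_conj_smul_V (hn : n ∈ S.N) :
    S.B ≤ normalizer ((conj n • S.V : Subgroup G) : Set G) := by
  rw [normalizer_conj_smul, ← mem_normalizer_iff_conj_smul_eq.1 hn]
  exact pointwise_smul_le_pointwise_smul_iff.2 S.B_le_normalizer_V

section Finite

variable [Finite G]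

theorem exists_inv_mul_mem_N (hN : (h : G) ∉ S.N) (hN' : (h' : G) ∉ S.N) :
    ∃ t ∈ S.E, (t * h)⁻¹ * (h' : G) ∈ S.N := by
  obtain ⟨t, ht, htc⟩ := S.exists_mem_smul_eq S.E_le_B S.B_le_normalizer_E S.not_E_le_Q
    (not_or.2 ⟨smul_i_ne_i hN, S.smul_ne_o h S.i_ne_o⟩)
    (not_or.2 ⟨smul_i_ne_i hN', S.smul_ne_o h' S.i_ne_o⟩)
  refine ⟨t, ht, S.B_le_N ((S.coe_mem_B_iff (h := (t * h)⁻¹ * h')).2 ?_)⟩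
  rw [mul_smul, inv_smul_eq_iff, mul_smul, htc]

theorem not_commutator_V_E_le_conj_smul_Z (hZ : S.Z ≤ S.R) (hN : (h : G) ∉ S.N) :
    ¬ ⁅S.V, S.E⁆ ≤ conj (h : G) • S.Z := by
  intro hle
  obtain ⟨t, ht, htR⟩ := SetLike.not_le_iff_exists.1 S.not_E_le_R
  let t' : S.H := ⟨t, S.B_le_H (S.E_le_B ht)⟩
  have hE : S.E ≤ normalizer ((conj (h : G) • S.Z : Subgroup G) : Set G) := by
    rw [le_normalizer_iff_commutator_le_right, commutator_comm]
    exact (commutator_mono (conj_smul_Z_le_V hZ h) le_rfl).trans hle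
  refine not_conj_smul_Z_le_X hZ (t' * h) fun v hv => ?_
  refine mem_X_of_mem_conj_smul_Z (h := t' * h) (k := h) ?_ hv ?_
  · rw [mul_smul]
    exact smul_smul_ne_of_notMem_R (t := t') ht htR (smul_i_ne_i hN)
  · rwa [Subgroup.coe_mul, conj_mul_smul, mem_normalizer_iff_conj_smul_eq.1 (hE ht)] at hv

theorem amalgam (hZ : S.Z ≤ S.R) : Amalgam S.H S.N S.E S.R S.V S.Z S.q where
  two_le_q := by rcases S.q_eq_two_or_four with h | h <;> omega
  H_le_normalizer_R := S.H_le_P.trans S.P_le_normalizer_R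
  H_le_normalizer_V := S.H_le_P.trans S.P_le_normalizer_V
  N_le_normalizer_E := S.N_le_normalizer_E
  N_le_normalizer_Z := S.N_le_normalizer_Z
  N_le_normalizer_inf := by
    have := S.finite_Ω
    rw [S.H_inf_N S.four_le_card]
    exact le_rfl
  E_le_H := S.E_le_B.trans S.B_le_H
  E_le_N := S.E_le_B.trans S.B_le_N
  exists_mul_inv_mul_mem _ hh hN _ hh' hN' :=
    exists_inv_mul_mem_N (h := ⟨_, hh⟩) (h' := ⟨_, hh'⟩) hN hN'
  R_le_E := S.R_le_E
  V_le_R := S.V_le_R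
  commute_V_R _ hv _ hr := S.commute_V_R hv hr
  mul_self_of_mem_V _ hv := S.mul_self_of_mem_V hv
  Z_le_V := S.Z_le_V hZ
  commute_Z_E _ hz _ ht := S.commute_Z_E hz ht
  mem_Z_of_commute _ ht htR _ hv hvt := mem_Z_of_commute hZ ht htR hv hvt
  relIndex_R := S.relIndex_R le_rfl S.B_le_normalizer_E S.not_E_le_R
  relIndex_Z := relIndex_Z_V hZ
  eq_bot_of_le_normalizer _ hK hN hH :=
    S.eq_bot_of_H_le_of_N_le_normalizer (hK.trans (S.E_le_B.trans S.B_le_P))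
      (S.H_le_of_conj_smul_le (S.B_le_N.trans hN) le_rfl S.not_E_le_R hH) hN
  sup_R_eq_E K hK hB hR := by
    have := S.finite_Ω
    rw [S.H_inf_N S.four_le_card] at hB
    exact S.sup_R_eq_E hK hB hR
  not_commutator_le_Z _ hh hN := not_commutator_V_E_le_conj_smul_Z (h := ⟨_, hh⟩) hZ hN
  relIndex_N_H := by
    have := S.finite_Ω
    have := S.four_le_card
    rw [S.relIndex_N_H S.four_le_card, q]
    omega
  sup_eq_top := S.H_sup_N

theorem not_V_le_Z (hZ : S.Z ≤ S.R) : ¬ S.V ≤ S.Z := by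
  rw [← relIndex_eq_one, relIndex_Z_V hZ]
  rcases S.q_eq_two_or_four with h | h <;> omega

theorem V_le_conj_smul_R (hZ : S.Z ≤ S.R) (hn : n ∈ S.N) (hnV : conj n • S.V ≤ S.R) :
    S.V ≤ conj n • S.R := by
  by_contra hVn
  rw [subset_pointwise_smul_iff, ← map_inv] at hVn
  obtain ⟨t, ht, htR⟩ := SetLike.not_le_iff_exists.1 hVn
  refine not_V_le_Z hZ fun v hv =>
    mem_Z_of_commute hZ (N_conj_smul_V_le_E (inv_mem hn) ht) htR hv ?_
  rw [mem_conj_smul, inv_inv] at ht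
  exact (Commute.conj_iff n).1 (S.commute_V_R ht (hnV (conj_mem_conj_smul hv))).symm

theorem commutator_conj_smul_V_R_le (hn : n ∈ S.N) (hnV : ¬ S.V ≤ conj n • S.R) :
    ⁅conj n • S.V, S.R⁆ ≤ S.V := by
  have hsup : S.V ⊔ conj n • S.R = S.E := by
    have h := S.sup_R_eq_E (N_conj_smul_V_le_E (inv_mem hn))
      (B_le_normalizer_conj_smul_V (inv_mem hn))
      (by rwa [map_inv, ← subset_pointwise_smul_iff])
    rw [← mem_normalizer_iff_conj_smul_eq.1 (S.N_le_normalizer_E hn), ← h, smul_sup,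
      conj_smul_conj_inv_smul]
  have hR : S.R ≤ normalizer ((conj n • S.R : Subgroup G) : Set G) := by
    refine S.R_le_E.trans ?_
    rw [normalizer_conj_smul, ← mem_normalizer_iff_conj_smul_eq.1 (S.N_le_normalizer_E hn)]
    exact pointwise_smul_le_pointwise_smul_iff.2
      (S.E_le_B.trans (S.B_le_P.trans S.P_le_normalizer_R))
  rw [commutator_eq_of_forall_exists_mul S.V_le_R fun r hr => ?_,
    ← le_normalizer_iff_commutator_le_right]
  · exact (N_conj_smul_V_le_E hn).trans (S.E_le_B.trans S.B_le_normalizer_V)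
  · obtain ⟨v, hv, s, hs, rfl⟩ := exists_mul_of_mem_sup (S.V_le_R.trans hR)
      (hsup.ge (S.R_le_E hr))
    refine ⟨v, hv, s, ?_, rfl⟩
    rintro _ ⟨w, hw, rfl⟩
    obtain ⟨s, hs, rfl⟩ := hs
    exact (S.commute_V_R hw hs).map (conj n)

/-- Otherwise `P` would normalise `R ⊓ Rᵉ`: by `Amalgam.exists_not_V_le_conj_smul_R` some conjugate
`Vⁿ ≤ E` with `n ∈ N` does not lie in `R`, and `[Vⁿ, R] ≤ V ≤ R ⊓ Rᵉ`. -/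
theorem not_V_le_conj_e_smul_R (hZ : S.Z ≤ S.R) : ¬ S.V ≤ conj S.e • S.R := by
  intro hVe
  obtain ⟨n, hn, hnV⟩ := (amalgam hZ).exists_not_V_le_conj_smul_R
  have hVR : S.V ≤ S.R ⊓ conj S.e • S.R := le_inf S.V_le_R hVe
  have hP : S.P ≤ normalizer ((S.R ⊓ conj S.e • S.R : Subgroup G) : Set G) := by
    refine S.P_le_of_conj_smul_le S.B_le_normalizer_R_inf_conj_e_smul (N_conj_smul_V_le_E hn)
      (mt (V_le_conj_smul_R hZ hn) hnV) fun g hg => ?_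
    rw [le_normalizer_iff_commutator_le_right]
    calc ⁅conj g • conj n • S.V, S.R ⊓ conj S.e • S.R⁆ ≤ ⁅conj g • conj n • S.V, S.R⁆ :=
          commutator_mono le_rfl inf_le_left
      _ = conj g • ⁅conj n • S.V, S.R⁆ := by
        rw [conj_smul_commutator, mem_normalizer_iff_conj_smul_eq.1 (S.P_le_normalizer_R hg)]
      _ ≤ conj g • S.V :=
        pointwise_smul_le_pointwise_smul_iff.2 (commutator_conj_smul_V_R_le hn hnV)
      _ = S.V := mem_normalizer_iff_conj_smul_eq.1 (S.P_le_normalizer_V hg)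
      _ ≤ S.R ⊓ conj S.e • S.R := hVR
  rw [S.eq_bot_of_le_normalizer _ (inf_le_left.trans (S.R_le_Q.trans S.Q_le_P)) hP
    S.e_mem_normalizer_R_inf_conj_e_smul, le_bot_iff] at hVR
  exact not_V_le_Z hZ (hVR.trans_le bot_le)

theorem pCore_two_ne_bot (hM : M ≠ ⊥) (hMB : M ≤ S.B) (hBM : S.B ≤ normalizer M) :
    pCore 2 M ≠ ⊥ := by
  have := S.isSolvable_B
  have : Group.IsSolvable M :=
    Group.isSolvable_of_isSolvable_injective (inclusion_injective hMB)
  obtain ⟨p, hp, hpM⟩ := exists_pCore_ne_bot_of_isSolvable hM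
  have : Fact p.Prime := ⟨hp⟩
  obtain rfl | hp2 := eq_or_ne p 2
  · exact hpM
  · exact (hpM (le_bot_iff.1
      ((pCore_mono_of_le_normalizer hMB hBM).trans_eq (S.pCore_B_eq_bot hp2)))).elim

end Finite

theorem conj_e_smul_Q_le_B : conj S.e • S.Q ≤ S.B := by
  rw [← S.conj_e_smul_B]
  exact pointwise_smul_le_pointwise_smul_iff.2 S.Q_le_B

theorem pCore_two_le_conj_smul_R (hBM : S.B ≤ normalizer M)
    (hM : ∀ g ∈ S.P, M ≤ conj g • conj S.e • S.Q) {g : G} (hg : g ∈ S.P) :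
    pCore 2 M ≤ conj g • conj S.e • S.R := by
  let L : Subgroup G := ⨅ g : S.P, conj (g : G) • conj S.e • S.Q
  have hL {g : G} (hg : g ∈ S.P) : L ≤ conj g • conj S.e • S.Q :=
    iInf_le (fun g : S.P => conj (g : G) • conj S.e • S.Q) ⟨g, hg⟩
  have hLB : L ≤ S.B := by
    have h1 := hL (one_mem S.P)
    rw [map_one, one_smul] at h1
    exact h1.trans conj_e_smul_Q_le_B
  have hnorm : conj g • conj S.e • S.Q ≤ normalizer L := by
    refine le_trans ?_ (le_normalizer_iInf_conj_smul S.P (conj S.e • S.Q))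
    rw [← conj_smul_eq_self_of_mem hg]
    exact pointwise_smul_le_pointwise_smul_iff.2 (conj_e_smul_Q_le_B.trans S.B_le_P)
  calc pCore 2 M ≤ pCore 2 L :=
        pCore_mono_of_le_normalizer (le_iInf fun g => hM g g.2) (hLB.trans hBM)
    _ ≤ pCore 2 (conj g • conj S.e • S.Q) := pCore_mono_of_le_normalizer (hL hg) hnorm
    _ = conj g • conj S.e • S.R := by rw [← conj_smul_pCore, ← conj_smul_pCore, R]

/-- `D = O₂(M)` lies in all the conjugates of `Rᵉ` under `P`. If `Z ≰ R`, then `R ⊓ Rᵉ = 1`;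
otherwise the conjugates of `Vᵉ` centralise `D` and generate `P` modulo `B`. -/
theorem eq_bot_of_le_conj_smul_Q [Finite G] (hMQ : M ≤ S.Q) (hBM : S.B ≤ normalizer M)
    (he : S.e ∈ normalizer M) (hM : ∀ g ∈ S.P, M ≤ conj g • conj S.e • S.Q) : M = ⊥ := by
  by_contra hne
  have hMB : M ≤ S.B := hMQ.trans S.Q_le_B
  have hDR {g : G} (hg : g ∈ S.P) := pCore_two_le_conj_smul_R hBM hM hg
  have hDe := normalizer_le_normalizer_pCore 2 M he
  have hDRe : pCore 2 M ≤ conj S.e • S.R := by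
    simpa only [map_one, one_smul] using hDR (one_mem S.P)
  refine pCore_two_ne_bot hne hMB hBM ?_
  by_cases hZ : S.Z ≤ S.R
  · refine S.eq_bot_of_le_normalizer _ ((pCore_le 2 M).trans (hMB.trans S.B_le_P)) ?_ hDe
    refine S.P_le_of_conj_smul_le (hBM.trans (normalizer_le_normalizer_pCore 2 M))
      (N_conj_smul_V_le_E S.e_mem_N) (fun h => not_V_le_conj_e_smul_R hZ ?_) fun g hg => ?_
    · rw [← S.conj_e_smul_conj_e_smul_of_P_le_normalizer S.P_le_normalizer_V]
      exact pointwise_smul_le_pointwise_smul_iff.2 h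
    · refine le_trans ?_ (centralizer_le_normalizer _)
      refine le_trans ?_ (centralizer_le (hDR hg))
      simp only [centralizer_conj_smul, pointwise_smul_le_pointwise_smul_iff]
      exact fun v hv => mem_centralizer_iff.2 fun r hr => (S.commute_V_R hv hr).symm
  · refine le_bot_iff.1 ((le_inf ?_ hDRe).trans_eq (S.R_inf_conj_e_smul_eq_bot hZ))
    rw [← mem_normalizer_iff_conj_smul_eq.1 hDe,
      ← S.conj_e_smul_conj_e_smul_of_P_le_normalizer S.P_le_normalizer_R]
    exact pointwise_smul_le_pointwise_smul_iff.2 hDRe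

end LocalData

/-! ### Locally `L` pairs -/

theorem eq_bot_of_commutator_eq_self {G : Type*} [Group G] {K L : Subgroup G} [Group.IsSolvable L]
    (hKL : K ≤ L) (hK : ⁅K, K⁆ = K) : K = ⊥ := by
  by_contra hne
  have : Group.IsSolvable K := Group.isSolvable_of_isSolvable_injective (inclusion_injective hKL)
  have : Nontrivial K := K.nontrivial_iff_ne_bot.2 hne
  refine (Group.IsSolvable.commutator_lt_top_of_nontrivial K).ne
    (map_injective K.subtype_injective ?_)
  rw [map_subtype_commutator, hK, ← MonoidHom.range_eq_map, range_subtype]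

theorem isSolvable_alternatingGroup_of_card_eq_four {α : Type*} [Fintype α] [DecidableEq α]
    (hα : Nat.card α = 4) : Group.IsSolvable (alternatingGroup α) := by
  have := alternatingGroup.kleinFour_isKleinFour hα
  have := IsKleinFour.isMulCommutative (G := alternatingGroup.kleinFour α)
  have := Group.isSolvable_of_comm fun a b : alternatingGroup.kleinFour α => mul_comm' a b
  refine Group.isSolvable_of_ker_le_range (alternatingGroup.kleinFour α).subtype
    Abelianization.of ?_
  rw [Abelianization.ker_of, range_subtype, alternatingGroup.kleinFour_eq_commutator hα]

theorem isSolvable_perm_of_card_le_four {α : Type*} [Finite α] (hα : Nat.card α ≤ 4) :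
    Group.IsSolvable (Perm α) := by
  have := isSolvable_alternatingGroup_of_card_eq_four (Nat.card_fin 4)
  have : Group.IsSolvable (Perm (Fin 4)) :=
    Group.isSolvable_of_ker_le_range (alternatingGroup (Fin 4)).subtype Perm.sign
      (range_subtype _).ge
  let ι : α ↪ Fin 4 := (Finite.equivFin α).toEmbedding.trans (Fin.castLEEmb hα)
  exact Group.isSolvable_of_isSolvable_injective (Perm.viaEmbeddingHom_injective ι)

theorem isSolvable_fixingSubgroup_perm {α : Type*} [Finite α] {s : Set α} (hs : sᶜ.ncard ≤ 4) :
    Group.IsSolvable (fixingSubgroup (Perm α) s) := by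
  classical
  have := Fintype.ofFinite α
  have : Group.IsSolvable (Perm {a // a ∈ sᶜ}) := isSolvable_perm_of_card_le_four hs
  have hle : fixingSubgroup (Perm α) s ≤ (Perm.ofSubtype (p := (· ∈ sᶜ))).range := by
    intro σ hσ
    rw [Perm.mem_range_ofSubtype_iff]
    intro a ha has
    exact Perm.mem_support.1 ha ((mem_fixingSubgroup_iff _).1 hσ a has)
  have := Group.isSolvable_of_surjective (Perm.ofSubtype (p := (· ∈ sᶜ))).rangeRestrict_surjective
  exact Group.isSolvable_of_isSolvable_injective (inclusion_injective hle)

namespace OPairs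

variable {n : ℕ}

theorem exists_smul_eq (p r : OPairs n) : ∃ σ : Perm (Fin n), σ • p = r := by
  obtain ⟨σ, h₁, h₂⟩ := is_two_pretransitive_iff.1
    (Perm.isMultiplyPretransitive (Fin n) 2) p.2 r.2
  exact ⟨σ, Subtype.ext (Prod.ext h₁ h₂)⟩

theorem stabilizer_eq_fixingSubgroup (p : OPairs n) :
    stabilizer (Perm (Fin n)) p = fixingSubgroup (Perm (Fin n)) {p.1.2, p.1.1} := by
  ext σ
  simp only [mem_stabilizer_iff, mem_fixingSubgroup_iff, Set.mem_insert_iff,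
    Set.mem_singleton_iff, forall_eq_or_imp, forall_eq]
  exact Subtype.ext_iff.trans (Prod.ext_iff.trans and_comm)

theorem eq_one_of_forall_smul_eq (hn : 2 ≤ n) {σ : Perm (Fin n)}
    (hσ : ∀ p : OPairs n, σ • p = p) : σ = 1 := by
  have : Nontrivial (Fin n) := Fin.nontrivial_iff_two_le.2 hn
  refine Equiv.ext fun a => ?_
  obtain ⟨b, hb⟩ := exists_ne a
  exact congrArg (fun p => p.1.1) (hσ ⟨(a, b), hb.symm⟩)

theorem isSolvable_stabilizer (hn : n ≤ 6) (p : OPairs n) :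
    Group.IsSolvable (stabilizer (Perm (Fin n)) p) := by
  rw [stabilizer_eq_fixingSubgroup]
  apply isSolvable_fixingSubgroup_perm
  rw [Set.ncard_compl, Set.ncard_pair p.2.symm, Nat.card_fin]
  omega

end OPairs

section BallStab

variable {V : Type*} {Γ : SimpleGraph V} {G : Subgroup (Perm V)} {x y : V} {i j : ℕ} {g : G}

theorem mem_ballStab : g ∈ ballStab Γ G x i ↔ ∀ v, Γ.dist x v ≤ i → g • v = v := by
  simp only [ballStab, mem_iInf, mem_stabilizer_iff]

theorem ballStab_le_ballStab (hconn : Γ.Connected) (h : Γ.dist x y + j ≤ i) :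
    ballStab Γ G x i ≤ ballStab Γ G y j := fun _ hg =>
  mem_ballStab.2 fun v hv => mem_ballStab.1 hg v (by
    have := hconn.dist_triangle (u := x) (v := y) (w := v)
    omega)

theorem mem_ballStab_one (hconn : Γ.Connected) :
    g ∈ ballStab Γ G x 1 ↔ g • x = x ∧ ∀ v, Γ.Adj x v → g • v = v := by
  rw [mem_ballStab]
  refine ⟨fun h => ⟨h x (by simp), fun v hv => h v (SimpleGraph.dist_eq_one_iff_adj.2 hv).le⟩,
    fun h v hv => ?_⟩
  obtain h0 | h1 : Γ.dist x v = 0 ∨ Γ.dist x v = 1 := by omega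
  · rw [← hconn.dist_eq_zero_iff.1 h0, h.1]
  · exact h.2 v (SimpleGraph.dist_eq_one_iff_adj.1 h1)

end BallStab

namespace IsLocallyOPairs

variable {n : ℕ} {V : Type*} {Γ : SimpleGraph V} {G : Subgroup (Perm V)} {x y z : V}
  (h : IsLocallyOPairs n Γ G)

include h

theorem adj_smul_smul (g : G) {u v : V} : Γ.Adj (g • u) (g • v) ↔ Γ.Adj u v :=
  (h.1 g g.2 u v).symm

theorem exists_smul_eq (u v : V) : ∃ g : G, g • u = v :=
  h.2.1.exists_smul_eq u v

theorem dist_smul_smul_le (hconn : Γ.Connected) (g : G) (u v : V) :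
    Γ.dist (g • u) (g • v) ≤ Γ.dist u v := by
  obtain ⟨p, hp⟩ := hconn.exists_walk_length_eq_dist u v
  let f : Γ →g Γ := ⟨(g • ·), (h.adj_smul_smul g).2⟩
  rw [← hp, ← p.length_map f]
  exact SimpleGraph.dist_le (p.map f)

theorem dist_smul_smul (hconn : Γ.Connected) (g : G) (u v : V) :
    Γ.dist (g • u) (g • v) = Γ.dist u v :=
  (h.dist_smul_smul_le hconn g u v).antisymm <| by
    simpa only [inv_smul_smul] using h.dist_smul_smul_le hconn g⁻¹ (g • u) (g • v)

theorem conj_smul_ballStab (hconn : Γ.Connected) (g : G) (x : V) (i : ℕ) :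
    conj g • ballStab Γ G x i = ballStab Γ G (g • x) i := by
  ext a
  rw [mem_conj_smul, mem_ballStab, mem_ballStab, (MulAction.surjective g).forall (p := fun v =>
    Γ.dist (g • x) v ≤ i → a • v = v)]
  refine forall_congr' fun v => ?_
  rw [h.dist_smul_smul hconn, mul_smul, mul_smul, inv_smul_eq_iff]

theorem exists_smul_eq_of_adj (hy : Γ.Adj x y) (hz : Γ.Adj x z) :
    ∃ g : G, g • x = x ∧ g • y = z := by
  obtain ⟨ε, φ, hφ, hε⟩ := h.2.2 x
  obtain ⟨σ, hσ⟩ := OPairs.exists_smul_eq (ε ⟨y, hy⟩) (ε ⟨z, hz⟩)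
  obtain ⟨g, rfl⟩ := hφ σ
  refine ⟨g, g.2, (hε g ⟨y, hy⟩).symm.trans ?_⟩
  rw [hσ, Equiv.symm_apply_apply]

theorem exists_swap (hxy : Γ.Adj x y) : ∃ e : G, e • x = y ∧ e • y = x := by
  obtain ⟨g, rfl⟩ := h.exists_smul_eq x y
  obtain ⟨k, hkx, hk⟩ := h.exists_smul_eq_of_adj hxy
    (z := g⁻¹ • x) (by rw [← h.adj_smul_smul g, smul_inv_smul]; exact hxy.symm)
  exact ⟨g * k, by rw [mul_smul, hkx], by rw [mul_smul, hk, smul_inv_smul]⟩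

theorem exists_mem_smul_eq {M : Subgroup G} {e : G} (hconn : Γ.Connected)
    (hx : stabilizer G x ≤ M) (heM : e ∈ M) (he : Γ.Adj x (e • x)) (v : V) :
    ∃ m ∈ M, m • x = v := by
  obtain ⟨p⟩ := hconn.preconnected v x
  induction p with
  | nil => exact ⟨1, one_mem M, one_smul G _⟩
  | @cons v w x hvw _ ih =>
    obtain ⟨m, hm, rfl⟩ := ih hx he
    obtain ⟨k, hk, hkv⟩ := h.exists_smul_eq_of_adj he
      (z := m⁻¹ • v) (by rw [← h.adj_smul_smul m, smul_inv_smul]; exact hvw.symm)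
    refine ⟨m * k * e, mul_mem (mul_mem hm (hx hk)) heM, ?_⟩
    rw [mul_smul, mul_smul, hkv, smul_inv_smul]

theorem eq_top_of_stabilizer_le {M : Subgroup G} {e : G} (hconn : Γ.Connected)
    (hx : stabilizer G x ≤ M) (heM : e ∈ M) (he : Γ.Adj x (e • x)) : M = ⊤ := by
  refine (eq_top_iff' M).2 fun g => ?_
  obtain ⟨m, hm, hmg⟩ := h.exists_mem_smul_eq hconn hx heM he (g • x)
  rw [← mul_mem_cancel_left (inv_mem hm)]
  exact hx (by rw [mem_stabilizer_iff, mul_smul, ← hmg, inv_smul_smul])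

theorem eq_bot_of_normal {K : Subgroup G} (hK : K ≤ stabilizer G x) (hn : K.Normal) : K = ⊥ := by
  refine (eq_bot_iff_forall K).2 fun k hk => FaithfulSMul.eq_of_smul_eq_smul (α := V) fun v => ?_
  obtain ⟨g, rfl⟩ := h.exists_smul_eq x v
  rw [one_smul, ← inv_smul_eq_iff, ← mul_smul, ← mul_smul]
  exact hK (hn.conj_mem' k hk g)

theorem le_stabilizer_of_adj {K : Subgroup G} (hn : n ≤ 6) (hK : ⁅K, K⁆ = K)
    (hx : K ≤ stabilizer G x) (hy : K ≤ stabilizer G y) (hxy : Γ.Adj x y) (hxz : Γ.Adj x z) :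
    K ≤ stabilizer G z := by
  obtain ⟨ε, φ, -, hε⟩ := h.2.2 x
  have := OPairs.isSolvable_stabilizer hn (ε ⟨y, hxy⟩)
  have hbot : (K.subgroupOf (stabilizer G x)).map φ = ⊥ := by
    refine eq_bot_of_commutator_eq_self (L := stabilizer _ (ε ⟨y, hxy⟩)) ?_ ?_
    · rintro _ ⟨k, hk, rfl⟩
      rw [mem_stabilizer_iff, ← ε.symm.injective.eq_iff, ε.symm_apply_apply]
      exact Subtype.ext ((hε k _).trans (hy hk))
    · rw [← map_commutator]
      congr 1
      apply map_injective (subtype_injective (stabilizer G x))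
      rw [map_commutator, map_subgroupOf_eq_of_le hx, hK]
  intro k hk
  have hφ : φ ⟨k, hx hk⟩ = 1 := mem_bot.1 (hbot.le (mem_map_of_mem φ (mem_subgroupOf.2 hk)))
  have hkz := hε ⟨k, hx hk⟩ ⟨z, hxz⟩
  rw [hφ, one_smul, ε.symm_apply_apply] at hkz
  exact hkz.symm

theorem le_stabilizer_of_walk {K : Subgroup G} (hn : n ≤ 6) (hK : ⁅K, K⁆ = K)
    (hx : K ≤ stabilizer G x) (hy : K ≤ stabilizer G y) (hxy : Γ.Adj x y) (p : Γ.Walk x z) :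
    K ≤ stabilizer G z := by
  induction p generalizing y with
  | nil => exact hx
  | cons hxw _ ih =>
    exact ih (h.le_stabilizer_of_adj hn hK hx hy hxy hxw) hx hxw.symm

/-- A perfect subgroup fixing an arc acts on the neighbours of either end through the solvable group
`Sym(n - 2)`, hence trivially, and so it fixes every vertex. -/
theorem isSolvable_stabilizer_inf [Finite V] (hn : n ≤ 6) (hconn : Γ.Connected)
    (hxy : Γ.Adj x y) : Group.IsSolvable (stabilizer G x ⊓ stabilizer G y : Subgroup G) := by
  rw [Group.isSolvable_iff_commutator_lt]
  refine fun L hL => (commutator_le_self L).lt_of_ne fun hLL => hL ?_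
  let K : Subgroup G := L.map (stabilizer G x ⊓ stabilizer G y).subtype
  have hle : K ≤ stabilizer G x ⊓ stabilizer G y := map_subtype_le L
  have hK : ⁅K, K⁆ = K := by rw [← map_commutator, hLL]
  rw [← map_eq_bot_iff_of_injective L (subtype_injective _)]
  change K = ⊥
  rw [eq_bot_iff_forall]
  refine fun k hk => FaithfulSMul.eq_of_smul_eq_smul (α := V) fun v => ?_
  obtain ⟨p⟩ := hconn.preconnected x v
  rw [one_smul]
  exact h.le_stabilizer_of_walk hn hK (hle.trans inf_le_left) (hle.trans inf_le_right) hxy p hk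

theorem exists_permSection (hn : 2 ≤ n) (hconn : Γ.Connected) (hxy : Γ.Adj x y) :
    ∃ S : PermSection G (Fin n), S.P = stabilizer G x ∧ S.Q = ballStab Γ G x 1 ∧
      S.B = stabilizer G x ⊓ stabilizer G y := by
  obtain ⟨ε, φ, hφ, hε⟩ := h.2.2 x
  let p := ε ⟨y, hxy⟩
  let S : PermSection G (Fin n) := ⟨stabilizer G x, φ, hφ, p.1.1, p.1.2, p.2.symm⟩
  have hfix (g : stabilizer G x) (v : Γ.neighborSet x) :
      φ g • ε v = ε v ↔ (g : G) • (v : V) = v := by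
    rw [← ε.symm.injective.eq_iff, ε.symm_apply_apply, Subtype.ext_iff, hε]
    rfl
  refine ⟨S, rfl, ?_, ?_⟩
  · ext g
    rw [mem_ballStab_one hconn]
    refine S.mem_pullback.trans ⟨fun ⟨hg, hg1⟩ => ⟨hg, fun v hv => ?_⟩, fun ⟨hg, hgv⟩ => ⟨hg, ?_⟩⟩
    · refine (hfix ⟨g, hg⟩ ⟨v, hv⟩).1 ?_
      rw [show φ ⟨g, hg⟩ = 1 from mem_bot.1 hg1, one_smul]
    · refine mem_bot.2 (OPairs.eq_one_of_forall_smul_eq hn fun r => ?_)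
      obtain ⟨v, rfl⟩ := ε.surjective r
      exact (hfix ⟨g, hg⟩ v).2 (hgv v v.2)
  · ext g
    refine S.mem_pullback.trans ((exists_congr fun hg => ?_).trans exists_prop)
    rw [← OPairs.stabilizer_eq_fixingSubgroup p]
    exact hfix ⟨g, hg⟩ ⟨y, hxy⟩

theorem exists_localData [Finite V] (hn : n = 4 ∨ n = 6) (hconn : Γ.Connected) (hxy : Γ.Adj x y) :
    ∃ S : LocalData G (Fin n), S.P = stabilizer G x ∧ S.Q = ballStab Γ G x 1 ∧
      S.B = stabilizer G x ⊓ stabilizer G y ∧ S.e • x = y ∧ S.e • y = x := by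
  obtain ⟨S, hP, hQ, hB⟩ := h.exists_permSection (by omega) hconn hxy
  obtain ⟨e, hex, hey⟩ := h.exists_swap hxy
  have he : Γ.Adj x (e • x) := hex ▸ hxy
  have hgen (M : Subgroup G) (hPM : S.P ≤ M) (heM : e ∈ M) : M = ⊤ :=
    h.eq_top_of_stabilizer_le hconn (hP.ge.trans hPM) heM he
  refine ⟨{ S with
    e := e
    e_mem_N := ?_
    mul_self_e_mem_P := ?_
    eq_bot_of_le_normalizer := fun K hK hPK heK =>
      h.eq_bot_of_normal (hK.trans hP.le) (normalizer_eq_top_iff.1 (hgen _ hPK heK))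
    eq_top_of_le := hgen
    isSolvable_B := hB ▸ h.isSolvable_stabilizer_inf (by omega) hconn hxy
    card_Ω := by rwa [Nat.card_fin] }, hP, hQ, hB, hex, hey⟩
  · change e ∈ normalizer (S.B : Set G)
    have hstab (v : V) : conj e • stabilizer G v = stabilizer G (e • v) :=
      (stabilizer_smul_eq_stabilizer_map_conj e v).symm
    rw [mem_normalizer_iff_conj_smul_eq, hB, smul_inf, hstab, hstab, hex, hey, inf_comm]
  · rw [hP, mem_stabilizer_iff, mul_smul, hex, hey]

theorem ballStab_inf_ballStab_eq_bot [Finite V] (hn : n = 4 ∨ n = 6) (hconn : Γ.Connected)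
    (hxy : Γ.Adj x y) : ballStab Γ G x 2 ⊓ ballStab Γ G y 2 = ⊥ := by
  obtain ⟨S, hP, hQ, hB, hex, hey⟩ := h.exists_localData hn hconn hxy
  have hconj (g : G) (u v : V) : conj g • (ballStab Γ G u 2 ⊓ ballStab Γ G v 2) =
      ballStab Γ G (g • u) 2 ⊓ ballStab Γ G (g • v) 2 := by
    rw [smul_inf, h.conj_smul_ballStab hconn, h.conj_smul_ballStab hconn]
  refine S.eq_bot_of_le_conj_smul_Q ?_ (fun b hb => ?_) ?_ fun g hg => inf_le_left.trans ?_
  · rw [hQ]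
    exact inf_le_left.trans (ballStab_le_ballStab hconn (by simp))
  · obtain ⟨hbx, hby⟩ := hB.le hb
    rw [mem_normalizer_iff_conj_smul_eq, hconj, hbx, hby]
  · rw [mem_normalizer_iff_conj_smul_eq, hconj, hex, hey, inf_comm]
  · have hgx : g • x = x := hP.le hg
    have hgy : Γ.Adj x (g • y) := by rwa [← h.adj_smul_smul g, hgx] at hxy
    rw [hQ, h.conj_smul_ballStab hconn, h.conj_smul_ballStab hconn, hex]
    exact ballStab_le_ballStab hconn (by rw [SimpleGraph.dist_eq_one_iff_adj.2 hgy])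

theorem exists_adj (hn : 2 ≤ n) (x : V) : ∃ y, Γ.Adj x y := by
  obtain ⟨ε, -⟩ := h.2.2 x
  have : Nontrivial (Fin n) := Fin.nontrivial_iff_two_le.2 hn
  obtain ⟨a, b, hab⟩ := exists_pair_ne (Fin n)
  exact ⟨_, (ε.symm ⟨(a, b), hab⟩).2⟩

end IsLocallyOPairs

/-- For `n = 4` or `n = 6`, `L ≅ Sym(n)` acting on ordered pairs of distinct
elements of `{1,…,n}`, and any locally `L` pair `(Γ,G)`, the pointwise stabiliser of the
ball of radius three around any vertex is trivial. -/
theorem stmt_2 {V : Type*} [Fintype V] (n : ℕ) (hn : n = 4 ∨ n = 6)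
    (Γ : SimpleGraph V) (hconn : Γ.Connected)
    (G : Subgroup (Equiv.Perm V)) (hloc : IsLocallyOPairs n Γ G) (x : V) :
    ballStab Γ G x 3 = ⊥ := by
  obtain ⟨y, hxy⟩ := hloc.exists_adj (by omega) x
  have hd : Γ.dist x y = 1 := SimpleGraph.dist_eq_one_iff_adj.2 hxy
  rw [eq_bot_iff, ← hloc.ballStab_inf_ballStab_eq_bot hn hconn hxy]
  exact le_inf (ballStab_le_ballStab hconn (by simp)) (ballStab_le_ballStab hconn (by omega))
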